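/- arXiv:math/0504533 — 3 statements merged into one kernel-verified Lean document; each statement's English description precedes it below -/
import Mathlib

section
/- Fix D, E ∈ K^*. The set of S-unit ratios { u/v : u, v ∈ R_S^*, and there exists y ∈ R_S with y² = D·u + E·v } is finite. -/
open IsDedekindDomain

/-!
If `y ^ 2 = u + v` and `u = β ^ 2`, then `(y + β) - (y - β) = 2 * β`, where `y + β` and `y - β`
divide `v`. So after enlarging the unit group by `D` and `E` and adjoining the square roots of its
generators, the square sums are parametrized by solutions of a three-term unit equation.

The finiteness for the unit equation is a gap principle. Think of a solution `e` as the sides of a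
closed triangle with vertices `τ k`. For every linear `g`, the integrals of
`g * ∏ k, (t - τ k) ^ N` along the three sides sum to zero, and the `i`-th of them is divisible
by `e i ^ (2 * N + 1)`, so the quotients form a vector `w` with
`∑ i, e i ^ (2 * N + 1) * w i = 0` and logarithmic height at most `(N + 1) * h(e) + O(N)`. If `f`
is another solution, then `ξ = f / e ^ (2 * N + 1)` satisfies the same linear relation, and it is
not proportional to both of the `w` coming from two independent `g`. For one of these,
`e ^ (2 * N + 1)` is therefore proportional to the cross product of `ξ` and `w`, whence
`N * h(e) ≤ h(ξ) + O(N)`. By compactness of the sphere of directions, infinitely many solutions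
would include two for which the logarithmic embedding of `f` is so close to `2 * N + 1` times that
of `e`, with `N` and `h(e)` large, that `h(ξ)` violates this bound.
-/

section Heights

open Height AdmissibleAbsValues Real

open scoped Matrix

theorem le_finprod_of_one_le {ι R : Type*} [CommSemiring R] [PartialOrder R] [IsOrderedRing R]
    {f : ι → R} (hf : f.HasFiniteMulSupport) (h : ∀ i, 1 ≤ f i) (i : ι) : f i ≤ ∏ᶠ j, f j := by
  classical
  rw [finprod_eq_prod_of_mulSupport_subset (s := insert i hf.toFinset) f fun j hj ↦
      Finset.mem_coe.mpr (Finset.mem_insert_of_mem ((Set.Finite.mem_toFinset _).mpr hj)),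
    ← Finset.mul_prod_erase _ _ (Finset.mem_insert_self ..)]
  refine le_mul_of_one_le_right (zero_le_one.trans (h i)) ?_
  exact Finset.prod_induction _ _ (fun _ _ ↦ one_le_mul_of_one_le_of_one_le) le_rfl fun j _ ↦ h j

variable {K : Type*} [Field K] [AdmissibleAbsValues K] {v : AbsoluteValue K ℝ}

theorem abv_le_mulHeight₁_of_mem_archAbsVal (hv : v ∈ archAbsVal) (x : K) :
    v x ≤ mulHeight₁ x := by
  obtain ⟨s, hs⟩ := Multiset.exists_cons_of_mem hv
  rw [mulHeight₁_eq, hs, Multiset.map_cons, Multiset.prod_cons, mul_assoc]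
  refine (le_max_left (v x) 1).trans (le_mul_of_one_le_right (by positivity) ?_)
  exact one_le_mul_of_one_le_of_one_le (Multiset.one_le_prod_map fun _ _ ↦ le_max_right ..) <|
    one_le_finprod fun _ ↦ le_max_right ..

theorem abv_le_mulHeight₁_of_mem_nonarchAbsVal (hv : v ∈ nonarchAbsVal) (x : K) :
    v x ≤ mulHeight₁ x := by
  have hfin : (fun w : nonarchAbsVal (K := K) ↦ max (w.val x) 1).HasFiniteMulSupport := by
    fun_prop
  rw [mulHeight₁_eq]
  calc v x ≤ max (v x) 1 := le_max_left ..
    _ ≤ ∏ᶠ w : nonarchAbsVal (K := K), max (w.val x) 1 :=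
      le_finprod_of_one_le hfin (fun _ ↦ le_max_right ..) ⟨v, hv⟩
    _ ≤ _ := le_mul_of_one_le_left (finprod_nonneg fun _ ↦ by positivity)
      (Multiset.one_le_prod_map fun _ _ ↦ le_max_right ..)

theorem abs_log_abv_le_logHeight₁ (hv : v ∈ archAbsVal ∨ v ∈ nonarchAbsVal) {x : K} (hx : x ≠ 0) :
    |log (v x)| ≤ logHeight₁ x := by
  have habv (y : K) : v y ≤ mulHeight₁ y :=
    hv.elim (abv_le_mulHeight₁_of_mem_archAbsVal · y) (abv_le_mulHeight₁_of_mem_nonarchAbsVal · y)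
  rw [abs_le']
  refine ⟨log_le_log (v.pos hx) (habv x), ?_⟩
  rw [← log_inv, ← map_inv₀, ← logHeight₁_inv]
  exact log_le_log (v.pos (inv_ne_zero hx)) (habv x⁻¹)

variable {ι : Type*}

theorem prod_archAbsVal_iSup_le {x : ι → K} {f : AbsoluteValue K ℝ → ℝ} {C : ℝ}
    (h : ∀ v ∈ archAbsVal, ⨆ i, v (x i) ≤ C * f v) :
    (archAbsVal.map fun v : AbsoluteValue K ℝ ↦ ⨆ i, v (x i)).prod ≤
      C ^ totalWeight K * (archAbsVal.map f).prod := by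
  rw [← Multiset.prod_replicate, totalWeight, ← Multiset.map_const', ← Multiset.prod_map_mul]
  exact Multiset.prod_map_le_prod_map₀ _ _
    (fun v _ ↦ Real.iSup_nonneg_of_nonnegHomClass v _) h

theorem finprod_nonarchAbsVal_iSup_le (T : Finset (nonarchAbsVal (K := K))) {x : ι → K} {C : ℝ}
    (hunit : ∀ v ∉ T, ⨆ i, v.val (x i) = 1) (hT : ∀ v ∈ T, ⨆ i, v.val (x i) ≤ C) :
    ∏ᶠ v : nonarchAbsVal (K := K), ⨆ i, v.val (x i) ≤ C ^ T.card := by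
  have hsupp : (fun v : nonarchAbsVal (K := K) ↦ ⨆ i, v.val (x i)).mulSupport ⊆ T := fun v hv ↦ by
    by_contra h
    exact hv (hunit v h)
  rw [finprod_eq_prod_of_mulSupport_subset _ hsupp, ← Finset.prod_const]
  exact Finset.prod_le_prod (fun v _ ↦ Real.iSup_nonneg_of_nonnegHomClass v.val _) hT

theorem mulHeight_le_pow [Nonempty ι] (T : Finset (nonarchAbsVal (K := K))) {x : ι → K} {C : ℝ}
    (hC : 1 ≤ C) (harch : ∀ v ∈ archAbsVal (K := K), ∀ i, v (x i) ≤ C)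
    (hT : ∀ v ∈ T, ∀ i, v.val (x i) ≤ C) (hunit : ∀ v ∉ T, ∀ i, v.val (x i) = 1) :
    mulHeight x ≤ C ^ (totalWeight K + T.card) := by
  by_cases hx : x = 0
  · rw [hx, mulHeight_zero]
    exact one_le_pow₀ hC
  rw [mulHeight_eq hx, pow_add]
  refine mul_le_mul ?_ (finprod_nonarchAbsVal_iSup_le T (fun v hv ↦ by simp [hunit v hv])
    fun v hv ↦ ciSup_le (hT v hv)) (finprod_nonneg fun v ↦
      Real.iSup_nonneg_of_nonnegHomClass v.val _) (pow_nonneg (zero_le_one.trans hC) _)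
  simpa using prod_archAbsVal_iSup_le (f := fun _ ↦ 1) fun v hv ↦
    (ciSup_le (harch v hv)).trans_eq (mul_one C).symm

variable [Finite ι]

theorem logHeight₁_le_logHeight_of_apply_eq_one {x : ι → K} {i : ι} (hi : x i = 1) (j : ι) :
    logHeight₁ (x j) ≤ logHeight x := by
  have hx : ![x j, 1] = x ∘ ![j, i] := by
    ext k
    fin_cases k <;> simp [hi]
  rw [logHeight₁_eq_logHeight, hx]
  exact logHeight_comp_le _ x

theorem mulHeight_le_of_iSup_le {κ : Type*} [Finite κ] {x : ι → K} {y : κ → K}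
    (hx : x ≠ 0) (hy : y ≠ 0) {C : ℝ}
    (harch : ∀ v ∈ archAbsVal (K := K), ⨆ i, v (y i) ≤ C * ⨆ i, v (x i))
    (hnonarch : ∀ v ∈ nonarchAbsVal (K := K), ⨆ i, v (y i) ≤ ⨆ i, v (x i)) :
    mulHeight y ≤ C ^ totalWeight K * mulHeight x := by
  rw [mulHeight_eq hx, mulHeight_eq hy, ← mul_assoc]
  have harch_prod := prod_archAbsVal_iSup_le harch
  refine mul_le_mul harch_prod ?_
    (finprod_nonneg fun v ↦ Real.iSup_nonneg_of_nonnegHomClass v.val _) (le_trans ?_ harch_prod)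
  · exact finprod_le_finprod (by fun_prop)
      (fun v ↦ Real.iSup_nonneg_of_nonnegHomClass v.val _) (by fun_prop) fun v ↦ hnonarch v.1 v.2
  · exact Multiset.prod_map_nonneg fun v _ ↦ Real.iSup_nonneg_of_nonnegHomClass v _

theorem mulHeight_crossProduct_le (x y : Fin 3 → K) :
    mulHeight (x ⨯₃ y) ≤ 2 ^ totalWeight K * (mulHeight x * mulHeight y) := by
  by_cases hxy : x ⨯₃ y = 0
  · rw [hxy, mulHeight_zero]
    exact one_le_mul_of_one_le_of_one_le (one_le_pow₀ one_le_two)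
      (one_le_mul_of_one_le_of_one_le (one_le_mulHeight x) (one_le_mulHeight y))
  have hx : x ≠ 0 := by rintro rfl; simp at hxy
  have hy : y ≠ 0 := by rintro rfl; simp at hxy
  rw [← mulHeight_fun_mul_eq hx hy]
  have hprod : (fun ij : Fin 3 × Fin 3 ↦ x ij.1 * y ij.2) ≠ 0 := by
    obtain ⟨i, hi⟩ := Function.ne_iff.mp hx
    obtain ⟨j, hj⟩ := Function.ne_iff.mp hy
    exact Function.ne_iff.mpr ⟨(i, j), mul_ne_zero hi hj⟩
  have hcross (k : Fin 3) : ∃ p q : Fin 3 × Fin 3,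
      (x ⨯₃ y) k = x p.1 * y p.2 - x q.1 * y q.2 := by
    rw [cross_apply]
    fin_cases k
    exacts [⟨(1, 2), (2, 1), rfl⟩, ⟨(2, 0), (0, 2), rfl⟩, ⟨(0, 1), (1, 0), rfl⟩]
  have hle (v : AbsoluteValue K ℝ) (p : Fin 3 × Fin 3) :
      v (x p.1 * y p.2) ≤ ⨆ ij : Fin 3 × Fin 3, v (x ij.1 * y ij.2) :=
    le_ciSup (f := fun ij : Fin 3 × Fin 3 ↦ v (x ij.1 * y ij.2)) (Finite.bddAbove_range _) p
  refine mulHeight_le_of_iSup_le hprod hxy (fun v _ ↦ ciSup_le fun k ↦ ?_)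
    fun v hv ↦ ciSup_le fun k ↦ ?_
  · obtain ⟨p, q, hpq⟩ := hcross k
    rw [hpq, two_mul]
    exact (v.sub_le_add _ _).trans (add_le_add (hle v p) (hle v q))
  · obtain ⟨p, q, hpq⟩ := hcross k
    rw [hpq, sub_eq_add_neg]
    refine (isNonarchimedean v hv _ _).trans (max_le (hle v p) ?_)
    rw [v.map_neg]
    exact hle v q

end Heights

section CrossProduct

open scoped Matrix

variable {K : Type*} [Field K]

theorem exists_smul_eq_of_crossProduct_eq_zero {x y : Fin 3 → K} (hx : x ≠ 0)
    (h : x ⨯₃ y = 0) : ∃ c : K, c • x = y := by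
  by_contra! hc
  exact crossProduct_ne_zero_iff_linearIndependent.mpr ((LinearIndependent.pair_iff' hx).mpr hc) h

theorem crossProduct_ne_zero_or_of_linearIndependent {x y z : Fin 3 → K} (hx : x ≠ 0)
    (h : LinearIndependent K ![y, z]) : x ⨯₃ y ≠ 0 ∨ x ⨯₃ z ≠ 0 := by
  by_contra! hxyz
  obtain ⟨b, rfl⟩ := exists_smul_eq_of_crossProduct_eq_zero hx hxyz.1
  obtain ⟨c, rfl⟩ := exists_smul_eq_of_crossProduct_eq_zero hx hxyz.2
  refine crossProduct_ne_zero_iff_linearIndependent.mpr h ?_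
  simp

theorem exists_crossProduct_eq_smul {a x y : Fin 3 → K} (ha : a ≠ 0) (hx : a ⬝ᵥ x = 0)
    (hy : a ⬝ᵥ y = 0) : ∃ c : K, x ⨯₃ y = c • a := by
  have h : a ⨯₃ (x ⨯₃ y) = 0 := by
    rw [cross_cross_eq_smul_sub_smul', hy, dotProduct_comm, hx, zero_smul, zero_smul, sub_zero]
  obtain ⟨c, hc⟩ := exists_smul_eq_of_crossProduct_eq_zero ha h
  exact ⟨c, hc.symm⟩

end CrossProduct

section Primitive

open Polynomial

variable {K : Type*} [Field K]

/-- The antiderivative without constant term of a polynomial, as a linear map. -/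
noncomputable def primitive : K[X] →ₗ[K] K[X] :=
  lsum fun n ↦ ((n : K) + 1)⁻¹ • monomial (n + 1)

theorem primitive_X_pow (n : ℕ) :
    primitive (X ^ n : K[X]) = C ((n : K) + 1)⁻¹ * X ^ (n + 1) := by
  rw [primitive, lsum_apply, X_pow_eq_monomial, sum_monomial_index _ _ (by simp),
    LinearMap.smul_apply, smul_monomial, smul_eq_mul, mul_one, C_mul_X_pow_eq_monomial]

theorem eval_zero_primitive (p : K[X]) : (primitive p).eval 0 = 0 := by
  suffices h : (leval 0).comp primitive = (0 : K[X] →ₗ[K] K) from DFunLike.congr_fun h p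
  ext n
  simp [← X_pow_eq_monomial, primitive_X_pow]

/-- The integral of a polynomial over `[0, 1]`, as a linear form. -/
noncomputable def unitIntegral : K[X] →ₗ[K] K := (leval 1).comp primitive

theorem unitIntegral_X_pow (n : ℕ) : unitIntegral (X ^ n : K[X]) = ((n : K) + 1)⁻¹ := by
  simp [unitIntegral, primitive_X_pow, leval_apply]

variable [CharZero K]

theorem derivative_primitive (p : K[X]) : derivative (primitive p) = p := by
  suffices h : derivative.comp primitive = (LinearMap.id : K[X] →ₗ[K] K[X]) from
    DFunLike.congr_fun h p
  ext n : 2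
  have hn : (n : K) + 1 ≠ 0 := by exact_mod_cast n.succ_ne_zero
  simp only [LinearMap.comp_apply, ← X_pow_eq_monomial, primitive_X_pow, derivative_C_mul_X_pow]
  simp [hn]

theorem eval_primitive_sub_eval_primitive (p : K[X]) (a b : K) :
    (primitive p).eval b - (primitive p).eval a =
      (b - a) * unitIntegral (p.comp (C a + C (b - a) * X)) := by
  set l : K[X] := C a + C (b - a) * X with hl
  set D : K[X] := (primitive p).comp l - C (b - a) * primitive (p.comp l) with hD
  have hderiv : derivative D = 0 := by
    simp [hD, derivative_comp, derivative_primitive, hl]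
  have hconst : D.eval 1 = D.eval 0 := by
    rw [eq_C_of_natDegree_eq_zero (derivative_eq_zero.mp hderiv), eval_C, eval_C]
  simp only [hD, hl, eval_sub, eval_comp, eval_mul, eval_C, eval_add, eval_X, mul_zero, mul_one,
    add_zero, add_sub_cancel, eval_zero_primitive] at hconst
  rw [unitIntegral, LinearMap.comp_apply, leval_apply]
  linear_combination hconst

theorem pow_succ_dvd_of_pow_dvd_derivative {p : K[X]} {a : K} {n : ℕ} (hroot : p.IsRoot a)
    (hdvd : (X - C a) ^ n ∣ derivative p) : (X - C a) ^ (n + 1) ∣ p := by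
  by_cases hp : p = 0
  · simp [hp]
  have hpos := (rootMultiplicity_pos hp).mpr hroot
  have hp' : derivative p ≠ 0 := fun h ↦ by
    rw [eq_C_of_natDegree_eq_zero (derivative_eq_zero.mp h), IsRoot, eval_C] at hroot
    exact hp (by rw [eq_C_of_natDegree_eq_zero (derivative_eq_zero.mp h), hroot, C_0])
  rw [← le_rootMultiplicity_iff hp]
  have hmult := (le_rootMultiplicity_iff hp').mpr hdvd
  rw [derivative_rootMultiplicity_of_root hroot] at hmult
  omega

theorem eq_zero_of_forall_eval_primitive_eq {ι : Type*} [Fintype ι] {τ : ι → K}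
    (hτ : Function.Injective τ) {g : K[X]} (hg : g.natDegree + 1 < Fintype.card ι) {n : ℕ} {c : K}
    (h : ∀ i, (primitive (g * (∏ j, (X - C (τ j))) ^ n)).eval (τ i) = c) : g = 0 := by
  classical
  set P : K[X] := ∏ j, (X - C (τ j)) with hP
  set Q : K[X] := primitive (g * P ^ n) - C c with hQ
  have hPmonic : P.Monic := monic_prod_of_monic _ _ fun i _ ↦ monic_X_sub_C _
  have hPdeg : P.natDegree = Fintype.card ι := natDegree_finsetProd_X_sub_C_eq_card _ _
  have hderiv : derivative Q = g * P ^ n := by simp [hQ, derivative_primitive]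
  have hdvd : P ^ (n + 1) ∣ Q := by
    rw [hP, ← Finset.prod_pow]
    refine Finset.prod_dvd_of_coprime (fun i _ j _ hij ↦ ?_) fun i _ ↦ ?_
    · exact (isCoprime_X_sub_C_of_isUnit_sub (sub_ne_zero.mpr (hτ.ne hij)).isUnit).pow
    · refine pow_succ_dvd_of_pow_dvd_derivative (by simp [hQ, h]) ?_
      rw [hderiv]
      exact (pow_dvd_pow_of_dvd (Finset.dvd_prod_of_mem _ (Finset.mem_univ i)) n).mul_left g
  by_contra hg0
  have hQ0 : Q ≠ 0 := by
    intro h0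
    rw [h0, derivative_zero] at hderiv
    exact mul_ne_zero hg0 (pow_ne_zero n hPmonic.ne_zero) hderiv.symm
  have hle := natDegree_le_of_dvd hdvd hQ0
  have hdeg := congrArg natDegree hderiv
  rw [natDegree_derivative, natDegree_mul hg0 (hPmonic.pow n).ne_zero, hPmonic.natDegree_pow,
    hPdeg] at hdeg
  rw [hPmonic.natDegree_pow, hPdeg, add_one_mul] at hle
  omega

end Primitive

section MomentBound

open Polynomial

variable {K : Type*} [Field K] {v : AbsoluteValue K ℝ} {c M B : ℝ}

theorem one_le_of_abv_add_le (hadd : ∀ x y, v (x + y) ≤ c * max (v x) (v y)) : 1 ≤ c := by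
  simpa using hadd 1 0

theorem abv_map_linear_pow_mul_X_pow_le (hadd : ∀ x y, v (x + y) ≤ c * max (v x) (v y))
    (φ : K[X] →ₗ[K] K) {a b : K} (ha : v a ≤ M) (hb : v b ≤ M) {m n : ℕ}
    (h : ∀ j ≤ m + n, v (φ (X ^ j)) ≤ B) :
    ∀ j ≤ n, v (φ ((C a + C b * X) ^ m * X ^ j)) ≤ (c * M) ^ m * B := by
  have hc := zero_le_one.trans (one_le_of_abv_add_le hadd)
  have hM := (v.nonneg a).trans ha
  induction m generalizing n with
  | zero => simpa using h
  | succ m ih =>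
    intro j hj
    have hexpand : (C a + C b * X) ^ (m + 1) * X ^ j =
        a • ((C a + C b * X) ^ m * X ^ j) + b • ((C a + C b * X) ^ m * X ^ (j + 1)) := by
      simp only [smul_eq_C_mul]
      ring
    have hterm (i : ℕ) (hi : i ≤ n + 1) {r : K} (hr : v r ≤ M) :
        v (r • φ ((C a + C b * X) ^ m * X ^ i)) ≤ M * ((c * M) ^ m * B) := by
      rw [smul_eq_mul, v.map_mul]
      exact mul_le_mul hr (ih (n := n + 1) (fun k hk ↦ h k (by omega)) i hi) (v.nonneg _) hM
    rw [hexpand, map_add, map_smul, map_smul]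
    calc _ ≤ c * (M * ((c * M) ^ m * B)) := (hadd _ _).trans <| mul_le_mul_of_nonneg_left
            (max_le (hterm j (by omega) ha) (hterm (j + 1) (by omega) hb)) hc
      _ = (c * M) ^ (m + 1) * B := by ring

theorem dvd_lcmUpto {k n : ℕ} (hk : k ≠ 0) (hkn : k ≤ n) : k ∣ Nat.lcmUpto n :=
  Finset.dvd_lcm (f := id) (Finset.mem_Icc.mpr ⟨Nat.one_le_iff_ne_zero.mpr hk, hkn⟩)

theorem abv_lcmUpto_mul_unitIntegral_X_pow_le [CharZero K] {n : ℕ}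
    (hB : ∀ k ≤ Nat.lcmUpto n, v (k : K) ≤ B) {j : ℕ} (hj : j < n) :
    v (Nat.lcmUpto n * unitIntegral (X ^ j : K[X])) ≤ B := by
  obtain ⟨k, hk⟩ := dvd_lcmUpto j.succ_ne_zero (Nat.succ_le_of_lt hj)
  have hj0 : (j : K) + 1 ≠ 0 := by exact_mod_cast j.succ_ne_zero
  have hmoment : (Nat.lcmUpto n : K) * unitIntegral (X ^ j : K[X]) = k := by
    rw [unitIntegral_X_pow, ← div_eq_mul_inv, div_eq_iff hj0, hk]
    push_cast
    ring
  rw [hmoment]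
  exact hB k (hk ▸ Nat.le_mul_of_pos_left k j.succ_pos)

theorem abv_lcmUpto_mul_unitIntegral_le [CharZero K]
    (hadd : ∀ x y, v (x + y) ≤ c * max (v x) (v y)) {N : ℕ}
    (hB : ∀ k ≤ Nat.lcmUpto (3 * N + 2), v (k : K) ≤ B) {a b p q : K}
    (ha : v a ≤ M) (hb : v b ≤ M) (hp : v p ≤ M) (hq : v q ≤ M) :
    v (Nat.lcmUpto (3 * N + 2) * unitIntegral
        (X ^ N * (X - 1) ^ N * (C a + C b * X) ^ N * (C p + C q * X))) ≤
      c ^ (2 * N + 1) * B * M ^ (N + 1) := by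
  set φ : K[X] →ₗ[K] K := ((Nat.lcmUpto (3 * N + 2) : K) • unitIntegral) ∘ₗ
    LinearMap.mulLeft K (X ^ N) with hφ
  have hφ_bound : ∀ j ≤ N + (N + 1), v (φ (X ^ j)) ≤ B := fun j hj ↦ by
    simpa [hφ, ← pow_add] using abv_lcmUpto_mul_unitIntegral_X_pow_le hB (j := N + j) (by omega)
  have hψ_bound := abv_map_linear_pow_mul_X_pow_le hadd φ (a := -1) (b := 1) (M := 1)
    (by simp) (by simp) hφ_bound
  have hχ_bound := abv_map_linear_pow_mul_X_pow_le hadd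
    (φ ∘ₗ LinearMap.mulLeft K ((C (-1) + C 1 * X) ^ N)) ha hb (m := N) (n := 1)
    (by simpa using hψ_bound)
  have hbound := abv_map_linear_pow_mul_X_pow_le hadd
    (φ ∘ₗ LinearMap.mulLeft K ((C (-1) + C 1 * X) ^ N * (C a + C b * X) ^ N)) hp hq
    (m := 1) (n := 0) (by simpa [mul_assoc] using hχ_bound) 0 le_rfl
  have hpoly : X ^ N * (X - 1) ^ N * (C a + C b * X) ^ N * (C p + C q * X) =
      X ^ N * ((C (-1) + C 1 * X) ^ N * (C a + C b * X) ^ N * (C p + C q * X)) := by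
    rw [C_neg, C_1]
    ring
  rw [hpoly]
  refine (le_of_eq_of_le ?_ hbound).trans_eq ?_
  · simp [hφ, mul_assoc]
  · ring

end MomentBound

section TrianglePade

open Polynomial Height AdmissibleAbsValues Real

open scoped Matrix

variable {K : Type*} [Field K] {τ : Fin 3 → K}

/-- The oriented sides of the triangle with vertices `τ 0`, `τ 1`, `τ 2`, indexed cyclically. -/
def side (τ : Fin 3 → K) (i : Fin 3) : K := τ (i + 1) - τ i

theorem sum_sub_apply_eq_zero (u : Fin 3 → K) : ∑ i, (u (i + 1) - u i) = 0 := by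
  rw [Finset.sum_sub_distrib, sub_eq_zero]
  exact Equiv.sum_comp (Equiv.addRight 1) u

theorem side_ne_zero (hτ : Function.Injective τ) (i : Fin 3) : side τ i ≠ 0 :=
  sub_ne_zero.mpr (hτ.ne (by simp))

theorem exists_injective_side_eq {e : Fin 3 → K} (he : ∀ i, e i ≠ 0) (hsum : ∑ i, e i = 0) :
    ∃ τ : Fin 3 → K, Function.Injective τ ∧ side τ = e := by
  rw [Fin.sum_univ_three] at hsum
  refine ⟨![0, e 0, e 0 + e 1], fun i j hij ↦ ?_, funext fun i ↦ ?_⟩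
  · have h2 : e 0 + e 1 ≠ 0 := fun h ↦ he 2 (by rwa [h, zero_add] at hsum)
    fin_cases i <;> fin_cases j <;> simp [he, (he _).symm, h2, h2.symm] at hij ⊢
  · fin_cases i
    exacts [sub_zero _, add_sub_cancel_left _ _, by simp [side]; linear_combination -hsum]

theorem abv_sub_le_iSup_side (v : AbsoluteValue K ℝ) (i j : Fin 3) :
    v (τ i - τ j) ≤ ⨆ k, v (side τ k) := by
  have hle (k : Fin 3) : v (side τ k) ≤ ⨆ k, v (side τ k) :=
    le_ciSup (f := fun k ↦ v (side τ k)) (Finite.bddAbove_range _) k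
  obtain rfl | rfl | rfl : j = i ∨ i = j + 1 ∨ j = i + 1 := by omega
  · simpa using (v.nonneg _).trans (hle 0)
  · exact hle j
  · rw [v.map_sub]
    exact hle i

/-- The `i`-th coordinate is the integral of `g * ∏ k, (t - τ k) ^ N` along the `i`-th side of the
triangle `τ`, divided by `side τ i ^ (2 * N + 1)` and multiplied by `lcm (1, …, 3 * N + 2)` to clear
denominators. The three integrals sum to zero. -/
noncomputable def padeCofactor (τ : Fin 3 → K) (N : ℕ) : K[X] →ₗ[K] Fin 3 → K :=
  LinearMap.pi fun i ↦ (Nat.lcmUpto (3 * N + 2) : K) • unitIntegral ∘ₗ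
    LinearMap.mulLeft K (X ^ N * (X - 1) ^ N * (C (side τ (i + 2)) + C (side τ i) * X) ^ N) ∘ₗ
      (aeval (C (τ i) + C (side τ i) * X)).toLinearMap

theorem padeCofactor_apply (N : ℕ) (g : K[X]) (i : Fin 3) :
    padeCofactor τ N g i = Nat.lcmUpto (3 * N + 2) * unitIntegral (X ^ N * (X - 1) ^ N *
      (C (side τ (i + 2)) + C (side τ i) * X) ^ N * g.comp (C (τ i) + C (side τ i) * X)) :=
  rfl

theorem prod_X_sub_C_comp_side (i : Fin 3) :
    (∏ k, (X - C (τ k))).comp (C (τ i) + C (side τ i) * X) =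
      C (side τ i) ^ 2 * (X * (X - 1) * (C (side τ (i + 2)) + C (side τ i) * X)) := by
  have hi : i + 2 + 1 = i := by omega
  rw [← Equiv.prod_comp (Equiv.addLeft i), Fin.prod_univ_three]
  simp only [side, hi, Equiv.coe_addLeft, add_zero, mul_comp, sub_comp, X_comp, C_comp, C_sub]
  ring

variable [CharZero K]

theorem side_pow_mul_padeCofactor (N : ℕ) (g : K[X]) (i : Fin 3) :
    side τ i ^ (2 * N + 1) * padeCofactor τ N g i =
      Nat.lcmUpto (3 * N + 2) * ((primitive (g * (∏ k, (X - C (τ k))) ^ N)).eval (τ (i + 1)) -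
        (primitive (g * (∏ k, (X - C (τ k))) ^ N)).eval (τ i)) := by
  have hcomp : (g * (∏ k, (X - C (τ k))) ^ N).comp (C (τ i) + C (side τ i) * X) =
      side τ i ^ (2 * N) • (X ^ N * (X - 1) ^ N * (C (side τ (i + 2)) + C (side τ i) * X) ^ N *
        g.comp (C (τ i) + C (side τ i) * X)) := by
    rw [mul_comp, pow_comp, prod_X_sub_C_comp_side, smul_eq_C_mul, C_pow, mul_pow,
      mul_pow, mul_pow]
    ring
  rw [eval_primitive_sub_eval_primitive, ← side, hcomp, map_smul, smul_eq_mul, padeCofactor_apply]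
  ring

theorem side_pow_dotProduct_padeCofactor (N : ℕ) (g : K[X]) :
    side τ ^ (2 * N + 1) ⬝ᵥ padeCofactor τ N g = 0 := by
  simp only [dotProduct, Pi.pow_apply, side_pow_mul_padeCofactor]
  rw [← Finset.mul_sum, sum_sub_apply_eq_zero fun i ↦ (primitive (g * _)).eval (τ i), mul_zero]

theorem eq_zero_of_padeCofactor_eq_zero (hτ : Function.Injective τ) {N : ℕ} {g : K[X]}
    (hg : g.natDegree ≤ 1) (h : padeCofactor τ N g = 0) : g = 0 := by
  have hd : (Nat.lcmUpto (3 * N + 2) : K) ≠ 0 := Nat.cast_ne_zero.mpr (Nat.lcmUpto_ne_zero _)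
  set F : K[X] := primitive (g * (∏ k, (X - C (τ k))) ^ N) with hF
  have hside (i : Fin 3) : F.eval (τ (i + 1)) = F.eval (τ i) := by
    have hi := side_pow_mul_padeCofactor (τ := τ) N g i
    rw [h, Pi.zero_apply, mul_zero, ← hF] at hi
    exact sub_eq_zero.mp ((mul_eq_zero.mp hi.symm).resolve_left hd)
  refine eq_zero_of_forall_eval_primitive_eq hτ (n := N) (c := F.eval (τ 0)) ?_ fun i ↦ ?_
  · rw [Fintype.card_fin]
    omega
  · fin_cases i
    exacts [rfl, hside 0, (hside 1).trans (hside 0)]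

theorem linearIndependent_padeCofactor (hτ : Function.Injective τ) (N : ℕ) {j k : Fin 3}
    (hjk : j ≠ k) :
    LinearIndependent K ![padeCofactor τ N (X - C (τ j)), padeCofactor τ N (X - C (τ k))] := by
  refine LinearIndependent.pair_iff.mpr fun a b hab ↦ ?_
  have hg : a • (X - C (τ j)) + b • (X - C (τ k)) = 0 :=
    eq_zero_of_padeCofactor_eq_zero hτ (N := N) (by compute_degree!) (by simpa using hab)
  have ha : a = 0 := by
    simpa [sub_ne_zero.mpr (hτ.ne hjk.symm)] using congrArg (eval (τ k)) hg
  have hb : b = 0 := by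
    simpa [sub_ne_zero.mpr (hτ.ne hjk)] using congrArg (eval (τ j)) hg
  exact ⟨ha, hb⟩

theorem exists_crossProduct_padeCofactor_eq_smul (hτ : Function.Injective τ) {N : ℕ}
    {ξ : Fin 3 → K} (hξ : ξ ≠ 0) (hdot : side τ ^ (2 * N + 1) ⬝ᵥ ξ = 0) :
    ∃ j, ∃ c : K, c ≠ 0 ∧ ξ ⨯₃ padeCofactor τ N (X - C (τ j)) = c • side τ ^ (2 * N + 1) := by
  obtain ⟨j, hj⟩ : ∃ j, ξ ⨯₃ padeCofactor τ N (X - C (τ j)) ≠ 0 :=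
    (crossProduct_ne_zero_or_of_linearIndependent hξ
      (linearIndependent_padeCofactor hτ N zero_ne_one)).elim (⟨0, ·⟩) (⟨1, ·⟩)
  have hside : side τ ^ (2 * N + 1) ≠ 0 := fun h ↦
    pow_ne_zero _ (side_ne_zero hτ 0) (congrFun h 0)
  obtain ⟨c, hc⟩ := exists_crossProduct_eq_smul hside hdot (side_pow_dotProduct_padeCofactor N _)
  refine ⟨j, c, ?_, hc⟩
  rintro rfl
  exact hj (hc.trans (zero_smul K _))

theorem abv_padeCofactor_le {v : AbsoluteValue K ℝ} {c B : ℝ}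
    (hadd : ∀ x y, v (x + y) ≤ c * max (v x) (v y)) {N : ℕ}
    (hB : ∀ k ≤ Nat.lcmUpto (3 * N + 2), v (k : K) ≤ B) (j i : Fin 3) :
    v (padeCofactor τ N (X - C (τ j)) i) ≤
      c ^ (2 * N + 1) * B * ⨆ k, v (side τ k ^ (N + 1)) := by
  have hside (k : Fin 3) : v (side τ k) ≤ ⨆ k, v (side τ k) := abv_sub_le_iSup_side v _ _
  have hcomp : (X - C (τ j)).comp (C (τ i) + C (side τ i) * X) =
      C (τ i - τ j) + C (side τ i) * X := by
    simp only [sub_comp, X_comp, C_comp, C_sub]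
    ring
  obtain ⟨m, hm⟩ := exists_eq_ciSup_of_finite (f := fun k ↦ v (side τ k))
  have hm_le : (⨆ k, v (side τ k)) ^ (N + 1) ≤ ⨆ k, v (side τ k ^ (N + 1)) := by
    rw [← hm, ← map_pow]
    exact le_ciSup (f := fun k ↦ v (side τ k ^ (N + 1))) (Finite.bddAbove_range _) m
  have hc := zero_le_one.trans (one_le_of_abv_add_le hadd)
  have hB0 : 0 ≤ B := (v.nonneg _).trans (hB 0 (Nat.zero_le _))
  rw [padeCofactor_apply, hcomp]
  exact (abv_lcmUpto_mul_unitIntegral_le hadd hB (hside _) (hside _) (abv_sub_le_iSup_side v i j)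
    (hside i)).trans (by gcongr)

variable [AdmissibleAbsValues K]

theorem mulHeight_padeCofactor_le (hτ : Function.Injective τ) (N : ℕ) (j : Fin 3) :
    mulHeight (padeCofactor τ N (X - C (τ j))) ≤
      (2 ^ (2 * N + 1) * Nat.lcmUpto (3 * N + 2)) ^ totalWeight K *
        mulHeight (side τ) ^ (N + 1) := by
  have hside : side τ ^ (N + 1) ≠ 0 := fun h ↦
    pow_ne_zero _ (side_ne_zero hτ 0) (congrFun h 0)
  have hne : padeCofactor τ N (X - C (τ j)) ≠ 0 := fun h ↦
    X_sub_C_ne_zero (τ j) (eq_zero_of_padeCofactor_eq_zero hτ (natDegree_X_sub_C_le _) h)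
  rw [← mulHeight_pow]
  refine mulHeight_le_of_iSup_le hside hne
    (fun v _ ↦ ciSup_le fun i ↦ abv_padeCofactor_le (fun x y ↦ ?_) (fun k hk ↦ ?_) j i)
    fun v hv ↦ ciSup_le fun i ↦ ?_
  · refine (v.add_le x y).trans ?_
    rw [two_mul]
    exact add_le_add (le_max_left ..) (le_max_right ..)
  · exact (v.apply_nat_le_self k).trans (Nat.cast_le.mpr hk)
  · simpa using abv_padeCofactor_le (c := 1) (B := 1)
      (fun x y ↦ (isNonarchimedean v hv x y).trans_eq (one_mul _).symm)
      (fun k _ ↦ (isNonarchimedean v hv).apply_natCast_le_one) j i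

theorem mulHeight_side_pow_le_of_pow_dotProduct_eq_zero (hτ : Function.Injective τ) {N : ℕ}
    {ξ : Fin 3 → K} (hξ : ξ ≠ 0) (hdot : side τ ^ (2 * N + 1) ⬝ᵥ ξ = 0) :
    mulHeight (side τ) ^ N ≤
      (2 ^ (2 * N + 2) * Nat.lcmUpto (3 * N + 2)) ^ totalWeight K * mulHeight ξ := by
  obtain ⟨j, c, hc, hcross⟩ := exists_crossProduct_padeCofactor_eq_smul hτ hξ hdot
  have hle : mulHeight (side τ) ^ (2 * N + 1) ≤ 2 ^ totalWeight K * (mulHeight ξ *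
      ((2 ^ (2 * N + 1) * Nat.lcmUpto (3 * N + 2)) ^ totalWeight K *
        mulHeight (side τ) ^ (N + 1))) := by
    calc _ = mulHeight (ξ ⨯₃ padeCofactor τ N (X - C (τ j))) := by
          rw [hcross, mulHeight_smul_eq_mulHeight _ hc, mulHeight_pow]
      _ ≤ 2 ^ totalWeight K * (mulHeight ξ * mulHeight (padeCofactor τ N (X - C (τ j)))) :=
          mulHeight_crossProduct_le _ _
      _ ≤ _ := mul_le_mul_of_nonneg_left (mul_le_mul_of_nonneg_left
          (mulHeight_padeCofactor_le hτ N j) (mulHeight_pos ξ).le) (by positivity)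
  refine le_of_mul_le_mul_right ?_ (pow_pos (mulHeight_pos (side τ)) (N + 1))
  rw [pow_succ' 2 (2 * N + 1), mul_assoc 2, mul_pow 2, ← pow_add, ← add_assoc, ← two_mul]
  exact hle.trans_eq (by ring)

theorem log_two_pow_mul_lcmUpto_le (N : ℕ) :
    log (2 ^ (2 * N + 2) * Nat.lcmUpto (3 * N + 2)) ≤ (4 * log 4 + 12) * (N + 1) := by
  have hpos : (0 : ℝ) < Nat.lcmUpto (3 * N + 2) := Nat.cast_pos.mpr (Nat.lcmUpto_pos _)
  have hpsi := Chebyshev.psi_le_const_mul_self (x := ((3 * N + 2 : ℕ) : ℝ)) (by positivity)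
  rw [Chebyshev.psi_eq_log_lcmUpto] at hpsi
  have hlog : log 4 = 2 * log 2 := by
    rw [show (4 : ℝ) = 2 ^ 2 by norm_num, log_pow, Nat.cast_ofNat]
  rw [log_mul (by positivity) hpos.ne', log_pow]
  push_cast at hpsi ⊢
  have : 0 ≤ log 4 := log_nonneg (by norm_num)
  nlinarith

theorem mul_logHeight_le_of_pow_dotProduct_eq_zero {e ξ : Fin 3 → K} (he : ∀ i, e i ≠ 0)
    (hsum : ∑ i, e i = 0) (hξ : ξ ≠ 0) {N : ℕ} (hdot : e ^ (2 * N + 1) ⬝ᵥ ξ = 0) :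
    N * logHeight e ≤ logHeight ξ + totalWeight K * (4 * log 4 + 12) * (N + 1) := by
  obtain ⟨τ, hτ, rfl⟩ := exists_injective_side_eq he hsum
  have hd : (0 : ℝ) < 2 ^ (2 * N + 2) * Nat.lcmUpto (3 * N + 2) :=
    mul_pos (by positivity) (Nat.cast_pos.mpr (Nat.lcmUpto_pos _))
  have hlog := log_le_log (pow_pos (mulHeight_pos _) _)
    (mulHeight_side_pow_le_of_pow_dotProduct_eq_zero hτ hξ hdot)
  rw [log_mul (pow_pos hd _).ne' (mulHeight_pos ξ).ne', log_pow, log_pow,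
    ← logHeight_eq_log_mulHeight, ← logHeight_eq_log_mulHeight] at hlog
  have hconst := mul_le_mul_of_nonneg_left (log_two_pow_mul_lcmUpto_le N)
    (Nat.cast_nonneg (α := ℝ) (totalWeight K))
  linarith

end TrianglePade

section GapPrinciple

variable {V : Type*} [NormedAddCommGroup V] [NormedSpace ℝ V]

theorem norm_sub_smul_le (x y : V) (r : ℝ) :
    ‖y - r • x‖ ≤ ‖y‖ * ‖‖y‖⁻¹ • y - ‖x‖⁻¹ • x‖ + |‖y‖ - r * ‖x‖| := by
  have hsmul (z : V) : ‖z‖ • ‖z‖⁻¹ • z = z := by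
    rcases eq_or_ne z 0 with rfl | hz
    · simp
    · exact smul_inv_smul₀ (norm_ne_zero_iff.mpr hz) z
  have hsplit : y - r • x = ‖y‖ • (‖y‖⁻¹ • y - ‖x‖⁻¹ • x) + (‖y‖ - r * ‖x‖) • ‖x‖⁻¹ • x := by
    rw [smul_sub, sub_smul, mul_smul, hsmul, hsmul]
    abel
  have hunit : ‖‖x‖⁻¹ • x‖ ≤ 1 := by
    rw [norm_smul, norm_inv, norm_norm]
    exact inv_mul_le_one
  calc ‖y - r • x‖ ≤ ‖y‖ * ‖‖y‖⁻¹ • y - ‖x‖⁻¹ • x‖ + |‖y‖ - r * ‖x‖| * ‖‖x‖⁻¹ • x‖ := by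
        conv_lhs => rw [hsplit]
        refine (norm_add_le _ _).trans_eq ?_
        rw [norm_smul, norm_smul, norm_norm, Real.norm_eq_abs]
    _ ≤ _ := by gcongr; exact mul_le_of_le_one_right (abs_nonneg _) hunit

theorem exists_odd_mul_le_lt {a b : ℝ} (ha : 0 < a) (hab : a ≤ b) :
    ∃ n : ℕ, (2 * n + 1) * a ≤ b ∧ b < (2 * n + 3) * a := by
  have hnonneg : 0 ≤ (b / a - 1) / 2 := by
    have := (one_le_div ha).mpr hab
    linarith
  refine ⟨⌊(b / a - 1) / 2⌋₊, ?_, ?_⟩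
  · rw [← le_div_iff₀ ha]
    linarith [Nat.floor_le hnonneg]
  · rw [← div_lt_iff₀ ha]
    linarith [Nat.lt_floor_add_one ((b / a - 1) / 2)]

variable [FiniteDimensional ℝ V] {X : Type*} {s : Set X} {l : X → V}

theorem exists_almost_parallel (hs : s.Infinite) (hfin : ∀ B : ℝ, {x ∈ s | ‖l x‖ ≤ B}.Finite)
    {ε : ℝ} (hε : 0 < ε) (R : ℝ) :
    ∃ e ∈ s, ∃ f ∈ s, R < ‖l e‖ ∧ R * ‖l e‖ < ‖l f‖ ∧
      ‖‖l f‖⁻¹ • l f - ‖l e‖⁻¹ • l e‖ < ε := by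
  have : ProperSpace V := FiniteDimensional.proper ℝ V
  obtain ⟨t, ht, hcover⟩ := Metric.totallyBounded_iff.mp
    (isCompact_closedBall (0 : V) 1).totallyBounded (ε / 2) (half_pos hε)
  obtain ⟨y, -, hy⟩ : ∃ y ∈ t, {x ∈ s | ‖l x‖⁻¹ • l x ∈ Metric.ball y (ε / 2)}.Infinite := by
    by_contra! H
    refine hs ((ht.biUnion fun y hy ↦ H y hy).subset fun x hx ↦ ?_)
    have hmem : ‖l x‖⁻¹ • l x ∈ Metric.closedBall (0 : V) 1 := by
      rw [mem_closedBall_zero_iff, norm_smul, norm_inv, norm_norm]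
      exact inv_mul_le_one
    obtain ⟨y, hyt, hy⟩ := Set.mem_iUnion₂.mp (hcover hmem)
    exact Set.mem_iUnion₂.mpr ⟨y, hyt, hx, hy⟩
  obtain ⟨e, ⟨hes, hey⟩, he⟩ := (hy.sdiff (hfin R)).nonempty
  obtain ⟨f, ⟨hfs, hfy⟩, hf⟩ := (hy.sdiff (hfin (R * ‖l e‖))).nonempty
  refine ⟨e, hes, f, hfs, not_le.mp fun h ↦ he ⟨hes, h⟩, not_le.mp fun h ↦ hf ⟨hfs, h⟩, ?_⟩
  rw [← dist_eq_norm, ← add_halves ε]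
  exact (dist_triangle_right _ _ y).trans_lt (add_lt_add hfy hey)

theorem finite_of_gap_principle {A c : ℝ} (hA : 0 < A) (hc : 0 ≤ c)
    (hfin : ∀ B : ℝ, {x ∈ s | ‖l x‖ ≤ B}.Finite)
    (hgap : ∀ e ∈ s, ∀ f ∈ s, ∀ n : ℕ,
      n * ‖l e‖ ≤ A * ‖l f - (2 * n + 1 : ℝ) • l e‖ + c * (n + 1)) : s.Finite := by
  by_contra hs
  obtain ⟨e, he, f, hf, hR, hRe, hpar⟩ :=
    exists_almost_parallel hs hfin (ε := 1 / (8 * A)) (by positivity) (8 * A + 4 * c + 6)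
  have he0 : 0 < ‖l e‖ := lt_trans (by positivity) hR
  obtain ⟨n, hn, hn'⟩ := exists_odd_mul_le_lt he0 (b := ‖l f‖) (by nlinarith)
  have hn_large : 8 * A + 4 * c + 6 < 2 * n + 3 := lt_of_mul_lt_mul_right (hRe.trans hn') he0.le
  have hdist : ‖l f - (2 * n + 1 : ℝ) • l e‖ ≤ ((2 * n + 3) * (1 / (8 * A)) + 2) * ‖l e‖ := by
    refine (norm_sub_smul_le _ _ _).trans ?_
    have hdir : ‖l f‖ * ‖‖l f‖⁻¹ • l f - ‖l e‖⁻¹ • l e‖ ≤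
        (2 * n + 3) * ‖l e‖ * (1 / (8 * A)) := by gcongr
    have hlen : |‖l f‖ - (2 * n + 1) * ‖l e‖| ≤ 2 * ‖l e‖ :=
      abs_le.mpr ⟨by linarith, by linarith⟩
    linarith
  have hgap' : n * ‖l e‖ ≤ ((2 * n + 3) / 8 + 2 * A) * ‖l e‖ + c * (n + 1) :=
    calc n * ‖l e‖ ≤ _ := hgap e he f hf n
      _ ≤ A * (((2 * n + 3) * (1 / (8 * A)) + 2) * ‖l e‖) + c * (n + 1) := by gcongr
      _ = _ := by field_simp
  have herror : c * (n + 1) ≤ (‖l e‖ / 4) * (n + 1) := by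
    gcongr
    linarith
  have hsmall : (n : ℝ) ≤ (2 * n + 3) / 8 + 2 * A + (n + 1) / 4 :=
    le_of_mul_le_mul_right (by linarith) he0
  linarith

end GapPrinciple

section UnitEquation

open Height AdmissibleAbsValues Real

open scoped Matrix

variable {K : Type*} [Field K] [AdmissibleAbsValues K] {T : Finset (nonarchAbsVal (K := K))}

/-- The `T`-units of `K`, for a set `T` of nonarchimedean absolute values. -/
def unitsOutside (T : Set (nonarchAbsVal (K := K))) : Subgroup Kˣ where
  carrier := {u | ∀ v ∉ T, v.val u = 1}
  one_mem' := by simp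
  mul_mem' hu hw v hv := by simp [hu v hv, hw v hv]
  inv_mem' hu v hv := by simp [hu v hv]

open scoped Classical in
/-- The archimedean absolute values of `K` together with those in `T`, which are the coordinates
of the logarithmic embedding of the `T`-units. -/
noncomputable def archUnion (T : Finset (nonarchAbsVal (K := K))) : Finset (AbsoluteValue K ℝ) :=
  archAbsVal.toFinset ∪ T.map (.subtype _)

theorem mem_archUnion {v : AbsoluteValue K ℝ} :
    v ∈ archUnion T ↔ v ∈ archAbsVal ∨ ∃ w ∈ T, w.val = v := by
  simp [archUnion]

variable {ι : Type*}

/-- The logarithmic embedding of tuples of units with respect to `archUnion T`. -/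
noncomputable def logVector (T : Finset (nonarchAbsVal (K := K))) (z : ι → Kˣ) :
    archUnion T × ι → ℝ :=
  fun a ↦ log (a.1.val (z a.2))

theorem logVector_div_pow (y z : ι → Kˣ) (n : ℕ) :
    logVector T (y / z ^ n) = logVector T y - (n : ℝ) • logVector T z := by
  ext a
  simp [logVector, log_div]

variable [Fintype ι]

theorem norm_logVector_le_logHeight {z : ι → Kˣ} {i : ι} (hi : z i = 1) :
    ‖logVector T z‖ ≤ logHeight fun j ↦ (z j : K) := by
  refine (pi_norm_le_iff_of_nonneg (logHeight_nonneg _)).mpr fun ⟨v, j⟩ ↦ ?_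
  have hv : v.val ∈ archAbsVal ∨ v.val ∈ nonarchAbsVal :=
    (mem_archUnion.mp v.2).imp_right fun ⟨w, _, hw⟩ ↦ hw ▸ w.2
  exact (abs_log_abv_le_logHeight₁ hv (z j).ne_zero).trans
    (logHeight₁_le_logHeight_of_apply_eq_one (x := fun j ↦ (z j : K)) (i := i) (by simp [hi]) j)

theorem logHeight_le_mul_norm_logVector [Nonempty ι] {z : ι → Kˣ}
    (hz : ∀ i, z i ∈ unitsOutside (T : Set (nonarchAbsVal (K := K)))) :
    logHeight (fun i ↦ (z i : K)) ≤ (totalWeight K + T.card) * ‖logVector T z‖ := by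
  have hle {v : AbsoluteValue K ℝ} (hv : v ∈ archUnion T) (i : ι) :
      v (z i) ≤ exp ‖logVector T z‖ := by
    rw [← log_le_iff_le_exp (v.pos (z i).ne_zero)]
    exact (le_abs_self _).trans (norm_le_pi_norm (logVector T z) (⟨v, hv⟩, i))
  have hheight := mulHeight_le_pow T (one_le_exp (norm_nonneg (logVector T z)))
    (fun v hv ↦ hle (mem_archUnion.mpr (.inl hv)))
    (fun v hv ↦ hle (mem_archUnion.mpr (.inr ⟨v, hv, rfl⟩))) fun v hv i ↦ hz i v hv
  rw [logHeight_eq_log_mulHeight, log_le_iff_le_exp (mulHeight_pos _)]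
  rwa [← exp_nat_mul, Nat.cast_add] at hheight

theorem finite_setOf_norm_logVector_le [Northcott (logHeight₁ (K := K))] (B : ℝ) (i : ι) :
    {z : ι → Kˣ | z i = 1 ∧ (∀ j, z j ∈ unitsOutside (T : Set (nonarchAbsVal (K := K)))) ∧
      ‖logVector T z‖ ≤ B}.Finite := by
  have : Nonempty ι := ⟨i⟩
  have hfin : {u : Kˣ | logHeight₁ (u : K) ≤ (totalWeight K + T.card) * B}.Finite :=
    (Northcott.finite_le (h := logHeight₁ (K := K)) _).preimage Units.val_injective.injOn
  refine (Set.Finite.pi' fun _ ↦ hfin).subset fun z ⟨hi, hz, hB⟩ j ↦ ?_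
  calc logHeight₁ (z j : K) ≤ logHeight fun j ↦ (z j : K) :=
        logHeight₁_le_logHeight_of_apply_eq_one (x := fun j ↦ (z j : K)) (i := i) (by simp [hi]) j
    _ ≤ (totalWeight K + T.card) * ‖logVector T z‖ := logHeight_le_mul_norm_logVector hz
    _ ≤ _ := by gcongr

theorem finite_setOf_unit_equation [CharZero K] [Northcott (logHeight₁ (K := K))]
    (T : Finset (nonarchAbsVal (K := K))) :
    {z : Fin 3 → Kˣ | z 0 = 1 ∧ (∀ i, z i ∈ unitsOutside (T : Set (nonarchAbsVal (K := K)))) ∧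
      ∑ i, (z i : K) = 0}.Finite := by
  refine finite_of_gap_principle (l := logVector T) (A := totalWeight K + T.card + 1)
    (c := totalWeight K * (4 * log 4 + 12)) (by positivity)
    (mul_nonneg (Nat.cast_nonneg _) (by have := log_nonneg (x := 4) (by norm_num); positivity))
    (fun B ↦ ?_) fun e ⟨he₁, he, hesum⟩ f ⟨_, hf, hfsum⟩ n ↦ ?_
  · exact (finite_setOf_norm_logVector_le (T := T) B 0).subset fun z hz ↦ ⟨hz.1.1, hz.1.2.1, hz.2⟩
  have hξ := logHeight_le_mul_norm_logVector (T := T) (z := f / e ^ (2 * n + 1)) fun i ↦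
    div_mem (hf i) (pow_mem (he i) _)
  have hdot : (fun i ↦ (e i : K)) ^ (2 * n + 1) ⬝ᵥ
      (fun i ↦ (((f / e ^ (2 * n + 1)) i : Kˣ) : K)) = 0 := by
    simpa [dotProduct, mul_div_cancel₀] using hfsum
  calc n * ‖logVector T e‖ ≤ n * logHeight fun i ↦ (e i : K) := by
        gcongr
        exact norm_logVector_le_logHeight he₁
    _ ≤ _ := mul_logHeight_le_of_pow_dotProduct_eq_zero (fun i ↦ (e i).ne_zero) hesum
      (fun h ↦ Units.ne_zero _ (congrFun h 0)) hdot
    _ ≤ _ := by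
      gcongr
      refine hξ.trans ?_
      rw [logVector_div_pow]
      push_cast
      exact mul_le_mul_of_nonneg_right (le_add_of_nonneg_right zero_le_one) (norm_nonneg _)

end UnitEquation

section SquareSums

open Height AdmissibleAbsValues

theorem abv_eq_one_of_abv_mul_eq_one {K : Type*} [Field K] {v : AbsoluteValue K ℝ}
    (hv : IsNonarchimedean v) {a b : K} (hmul : v (a * b) = 1) (hsub : v (a - b) ≤ 1) :
    v a = 1 := by
  rw [map_mul] at hmul
  have ha : v a ≤ max (v b) 1 := by simpa using (hv b (a - b)).trans (max_le_max_left _ hsub)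
  have hb : v b ≤ max (v a) 1 := by
    simpa using (hv a (b - a)).trans (max_le_max_left _ (v.map_sub a b ▸ hsub))
  rcases le_total (v a) 1 with h | h
  · refine h.antisymm (hmul.ge.trans (mul_le_of_le_one_right (v.nonneg a) ?_))
    simpa [h] using hb
  · refine le_antisymm ?_ h
    have hb1 : v b ≤ 1 := hmul ▸ le_mul_of_one_le_left (v.nonneg b) h
    simpa [hb1] using ha

section AdmissibleAbsValues

variable {K : Type*} [Field K] [AdmissibleAbsValues K] {Γ : Subgroup Kˣ}

theorem exists_finset_le_unitsOutside (hΓ : Γ.FG) :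
    ∃ T : Finset (nonarchAbsVal (K := K)), Γ ≤ unitsOutside (T : Set (nonarchAbsVal (K := K))) := by
  classical
  obtain ⟨G, rfl⟩ := hΓ
  refine ⟨G.biUnion fun g ↦ (hasFiniteMulSupport g.ne_zero).toFinset, ?_⟩
  refine (Subgroup.closure_le _).mpr fun g hg v hv ↦ ?_
  by_contra hvg
  exact hv (Finset.mem_biUnion.mpr ⟨g, hg, (Set.Finite.mem_toFinset _).mpr hvg⟩)

theorem mem_unitsOutside_of_mul_self_mem {T : Set (nonarchAbsVal (K := K))} {a : Kˣ}
    (ha : a * a ∈ unitsOutside T) : a ∈ unitsOutside T := fun p hp ↦ by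
  have := ha p hp
  rw [Units.val_mul, map_mul, ← pow_two] at this
  exact (pow_eq_one_iff_of_nonneg (p.val.nonneg _) two_ne_zero).mp this

theorem mem_unitsOutside_of_mul_mem {T : Set (nonarchAbsVal (K := K))} {a b c : Kˣ}
    (hab : a * b ∈ unitsOutside T) (hsub : (a - b : K) = c) (hc : c ∈ unitsOutside T) :
    a ∈ unitsOutside T := fun p hp ↦
  abv_eq_one_of_abv_mul_eq_one (isNonarchimedean p.val p.2) (b := b) (hab p hp)
    (by rw [hsub, hc p hp])

theorem finite_setOf_ratio_of_forall_isSquare [CharZero K] [Northcott (logHeight₁ (K := K))]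
    (hΓ : Γ.FG) (hsq : ∀ u ∈ Γ, IsSquare u) :
    {w : K | ∃ u ∈ Γ, ∃ v ∈ Γ, IsSquare (u + v : K) ∧ w = u / v}.Finite := by
  let two : Kˣ := Units.mk0 2 two_ne_zero
  obtain ⟨T, hT⟩ := exists_finset_le_unitsOutside (hΓ.sup ⟨{two}, rfl⟩)
  obtain ⟨hΓT, h2T⟩ := sup_le_iff.mp hT
  refine ((finite_setOf_unit_equation T).image fun z ↦ -(4 * (z 1 * z 2 : K))⁻¹).subset ?_
  rintro w ⟨u, hu, v, hv, ⟨y, hy⟩, rfl⟩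
  obtain ⟨β, rfl⟩ := hsq u hu
  have hprod : (y + β) * (y - β) = v := by
    rw [Units.val_mul] at hy
    linear_combination -hy
  obtain ⟨⟨a, ha⟩, ⟨b, hb⟩⟩ := IsUnit.mul_iff.mp (hprod ▸ v.isUnit)
  have hab : a * b = v := Units.ext (by simpa [ha, hb])
  set c : Kˣ := two * β with hc
  have hsub : (a - b : K) = c := by
    simp only [ha, hb, hc, two, Units.val_mul, Units.val_mk0]
    ring
  have hcT : c ∈ unitsOutside (T : Set (nonarchAbsVal (K := K))) :=
    mul_mem (h2T (Subgroup.subset_closure (by simp))) (mem_unitsOutside_of_mul_self_mem (hΓT hu))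
  have haT := mem_unitsOutside_of_mul_mem (hab ▸ hΓT hv) hsub hcT
  have hbT : b ∈ unitsOutside (T : Set (nonarchAbsVal (K := K))) :=
    (mul_mem_cancel_left haT).mp (hab ▸ hΓT hv)
  refine ⟨![1, -(a / c), b / c], ⟨rfl, fun i ↦ ?_, ?_⟩, ?_⟩
  · fin_cases i
    exacts [one_mem _, fun p hp ↦ by simpa using div_mem haT hcT p hp, div_mem hbT hcT]
  · have := c.ne_zero
    simp only [Fin.sum_univ_three, Matrix.cons_val, Units.val_one, Units.val_neg,
      Units.val_div_eq_div_val]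
    field_simp
    linear_combination -hsub
  · simp only [← hab, hc, two, Matrix.cons_val, Units.val_neg, Units.val_div_eq_div_val,
      Units.val_mul, Units.val_mk0]
    field_simp
    norm_num

end AdmissibleAbsValues

universe u

theorem exists_finiteDimensional_le_comap_square {K : Type u} [Field K] {Γ : Subgroup Kˣ}
    (hΓ : Γ.FG) :
    ∃ (L : Type u) (_ : Field L) (_ : Algebra K L), FiniteDimensional K L ∧
      Γ ≤ (Subgroup.square Lˣ).comap (Units.map (algebraMap K L : K →* L)) := by
  obtain ⟨G, rfl⟩ := hΓ
  choose! β hβ using fun g : Kˣ ↦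
    IsAlgClosed.exists_eq_mul_self (algebraMap K (AlgebraicClosure K) g)
  let L := IntermediateField.adjoin K (β '' G)
  have hL : FiniteDimensional K L := IntermediateField.finiteDimensional_adjoin fun _ _ ↦
    Algebra.IsIntegral.isIntegral _
  refine ⟨L, inferInstance, inferInstance, hL, (Subgroup.closure_le _).mpr fun g hg ↦ ?_⟩
  let b : L := ⟨β g, IntermediateField.subset_adjoin K _ ⟨g, hg, rfl⟩⟩
  have hb : algebraMap K L g = b * b := Subtype.ext (hβ g)
  obtain ⟨⟨c, hc⟩, -⟩ := IsUnit.mul_iff.mp (hb ▸ g.isUnit.map (algebraMap K L))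
  exact ⟨c, Units.ext (by simpa [hc] using hb)⟩

variable {K : Type*} [Field K] [NumberField K] {Γ : Subgroup Kˣ}

theorem finite_setOf_ratio_of_isSquare_add (hΓ : Γ.FG) :
    {w : K | ∃ u ∈ Γ, ∃ v ∈ Γ, IsSquare (u + v : K) ∧ w = u / v}.Finite := by
  obtain ⟨L, _, _, _, hL⟩ := exists_finiteDimensional_le_comap_square hΓ
  have : NumberField L := .of_module_finite K L
  have hΓL : (Γ.map (Units.map (algebraMap K L : K →* L))).FG :=
    (Subgroup.fg_iff_submonoid_fg _).mpr (((Subgroup.fg_iff_submonoid_fg _).mp hΓ).map _)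
  have hfin := finite_setOf_ratio_of_forall_isSquare hΓL (Subgroup.map_le_iff_le_comap.mpr hL)
  refine (hfin.preimage (algebraMap K L).injective.injOn).subset ?_
  rintro _ ⟨u, hu, v, hv, hy, rfl⟩
  exact ⟨_, Subgroup.mem_map_of_mem _ hu, _, Subgroup.mem_map_of_mem _ hv,
    by simpa using hy.map (algebraMap K L), by simp⟩

theorem finite_unit_ratios_general (hΓ : Γ.FG) {D E : K} (hD : D ≠ 0) (hE : E ≠ 0) :
    {w : K | ∃ u ∈ Γ, ∃ v ∈ Γ, IsSquare (D * u + E * v) ∧ w = u / v}.Finite := by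
  let D' := Units.mk0 D hD
  let E' := Units.mk0 E hE
  have hΓ' : (Γ ⊔ Subgroup.closure {D', E'}).FG :=
    hΓ.sup ((Subgroup.fg_iff _).mpr ⟨_, rfl, Set.toFinite _⟩)
  have hle : Subgroup.closure {D', E'} ≤ Γ ⊔ Subgroup.closure {D', E'} := le_sup_right
  rw [Subgroup.closure_le, Set.pair_subset_iff] at hle
  refine ((finite_setOf_ratio_of_isSquare_add hΓ').image (· * (E / D))).subset ?_
  rintro _ ⟨u, hu, v, hv, hy, rfl⟩
  refine ⟨_, ⟨D' * u, mul_mem hle.1 (le_sup_left (a := Γ) hu),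
    E' * v, mul_mem hle.2 (le_sup_left (a := Γ) hv), hy, rfl⟩, ?_⟩
  simp only [D', E', Units.val_mul, Units.val_mk0]
  field_simp

end SquareSums

section SUnits

variable {R : Type*} [CommRing R] [IsDedekindDomain R] (K : Type*) [Field K] [Algebra R K]
  [IsFractionRing R K]

theorem exists_map_eq_of_forall_valuation_eq_one {x : Kˣ}
    (hx : ∀ p : HeightOneSpectrum R, p.valuation K (x : K) = 1) :
    ∃ u : Rˣ, Units.map (algebraMap R K : R →* K) u = x := by
  obtain ⟨a, ha⟩ := HeightOneSpectrum.mem_integers_of_valuation_le_one K (x : K) fun p ↦ (hx p).le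
  obtain ⟨b, hb⟩ := HeightOneSpectrum.mem_integers_of_valuation_le_one K (x⁻¹ : K) fun p ↦ by
    rw [map_inv₀, hx, inv_one]
  have hab : a * b = 1 := FaithfulSMul.algebraMap_injective R K <| by
    rw [map_mul, ha, hb, map_one, mul_inv_cancel₀ x.ne_zero]
  exact ⟨.mkOfMulEqOne a b hab, Units.ext ha⟩

theorem fg_unit_of_finite [Monoid.FG Rˣ] {S : Set (HeightOneSpectrum R)} (hS : S.Finite) :
    (S.unit K).FG := by
  have := hS.to_subtype
  let f : Additive Kˣ →ₗ[ℤ] (S → ℤ) := (AddMonoidHom.pi fun p : S ↦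
    (p.1.valuationOfNeZero (K := K)).toAdditiveLeft).toIntLinearMap
  let g : Additive Rˣ →ₗ[ℤ] Additive Kˣ :=
    (MonoidHom.toAdditive (Units.map (algebraMap R K : R →* K))).toIntLinearMap
  let U : Submodule ℤ (Additive Kˣ) := AddSubgroup.toIntSubmodule (S.unit K).toAddSubgroup
  suffices U.FG by
    rwa [Submodule.fg_iff_addSubgroup_fg, AddSubgroup.toIntSubmodule_toAddSubgroup,
      ← Subgroup.fg_iff_add_fg] at this
  have : Module.Finite ℤ (Additive Rˣ) :=
    Module.Finite.iff_addGroup_fg.mpr (AddGroup.fg_iff_addMonoid_fg.mpr inferInstance)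
  refine Submodule.fg_of_fg_map_of_fg_inf_ker f (IsNoetherian.noetherian _) ?_
  refine (Module.Finite.fg_top.map g).of_le ?_
  rintro x ⟨hx, hker⟩
  obtain ⟨u, hu⟩ := exists_map_eq_of_forall_valuation_eq_one K (x := x.toMul) fun p ↦ by
    by_cases hp : p ∈ S
    · have : p.valuationOfNeZero x.toMul = 1 := congrFun (LinearMap.mem_ker.mp hker) ⟨p, hp⟩
      rw [← HeightOneSpectrum.valuationOfNeZero_eq, this, WithZero.coe_one]
    · exact hx p hp
  exact ⟨.ofMul u, trivial, hu⟩

end SUnits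

/-- for fixed `D, E ∈ K^*`, the set of ratios `u/v` of `S`-units `u, v` such that
`y² = D·u + E·v` for some `S`-integer `y` is finite. -/
theorem finite_unit_ratios {K : Type*} [Field K] [NumberField K]
    (S : Finset (HeightOneSpectrum (NumberField.RingOfIntegers K)))
    (D E : K) (hD : D ≠ 0) (hE : E ≠ 0) :
    {w : K | ∃ u v : Kˣ,
        u ∈ (S : Set (HeightOneSpectrum (NumberField.RingOfIntegers K))).unit K ∧
        v ∈ (S : Set (HeightOneSpectrum (NumberField.RingOfIntegers K))).unit K ∧
        (∃ y ∈ (S : Set (HeightOneSpectrum (NumberField.RingOfIntegers K))).integer K,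
          y ^ 2 = D * u + E * v) ∧
        w = (u : K) / (v : K)}.Finite := by
  refine (finite_unit_ratios_general (fg_unit_of_finite K S.finite_toSet) hD hE).subset ?_
  rintro _ ⟨u, v, hu, hv, ⟨y, -, hy⟩, rfl⟩
  exact ⟨u, hu, v, hv, ⟨y, by rw [← hy, pow_two]⟩, rfl⟩
end

section
/- Fix D, E ∈ K^*. The set of principal ideals { y·R_S : y ∈ R_S, and there exist u, v ∈ R_S^* with y² = D·u + E·v } is finite. -/
open IsDedekindDomain

set_option synthInstance.maxHeartbeats 400000

/-- The ring of `S`-integers of a number field `K`. -/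
noncomputable abbrev sIntegers (K : Type*) [Field K] [NumberField K]
    (S : Finset (HeightOneSpectrum (NumberField.RingOfIntegers K))) :=
  ((S : Set (HeightOneSpectrum (NumberField.RingOfIntegers K))).integer K)

/-!
Write `y ^ 2 = D * u + E * v`. The group of `S`-units is finitely generated, so `u = a * s ^ 2`
with `a` in a finite set, and `z = y / s` generates the same ideal and satisfies
`z ^ 2 = D * a + E * v'` with `v'` an `S`-unit. Over `K(c)` with `c ^ 2 = D * a`, and after
enlarging `S`, the factors of `(c + z) * (c - z) = -E * v'` are units, and dividing them by `2 * c`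
gives a solution of the unit equation `x + y = 1`. That equation has finitely many solutions.

To see this, let `x + y = 1` and `z + w = 1` with all four `S`-units. Integrating
`t ^ a * (1 - t) ^ a * (x - t) ^ n` over `[0, x]`, `[x, 1]` and `[0, 1]` gives an explicit linear
relation between `x ^ (a + n + 1)`, `y ^ (a + n + 1)` and `1` whose coefficients are polynomials in
`x` of degrees `a`, `a` and `n`. The `2 × 2` minors of the relations for `(k - 1, k)` and
`(k, k - 1)` are nonzero multiples of `x ^ (2 * k)`, so one of the two is independent of the
relation given by `z / x ^ (2 * k)` and `w / y ^ (2 * k)`, and eliminating between the two gives the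
gap principle `k * h(x : y : 1) ≤ h(z / x ^ (2 * k)) + h(w / y ^ (2 * k)) + O(k)`. Under the
logarithmic embedding, for which the `ℓ¹` norm is twice the height, it reads
`k * ‖p‖ ≤ 2 * ‖q - 2 * k * p‖ + O(k)` for the images `p` and `q` of the two solutions. If these
images were unbounded, compactness of the unit ball would provide such `p` and `q` with nearly the
same direction, `p` large and `q` much larger; for `k` near `‖q‖ / (2 * ‖p‖)` this is a
contradiction. So the heights of the solutions are bounded, and Northcott's theorem applies.
-/

section BetaIntegral

open scoped Nat

theorem integral_pow_mul_one_sub_pow (p q : ℕ) :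
    ∫ t in (0 : ℝ)..1, t ^ p * (1 - t) ^ q = (p ! * q ! : ℝ) / (p + q + 1)! := by
  have hbeta : Complex.betaIntegral (p + 1) (q + 1) =
      ((∫ t in (0 : ℝ)..1, t ^ p * (1 - t) ^ q : ℝ) : ℂ) := by
    rw [Complex.betaIntegral, ← intervalIntegral.integral_ofReal]
    simp [Complex.cpow_natCast]
  have hre (n : ℕ) : 0 < ((n : ℂ) + 1).re := by
    simpa using n.cast_add_one_pos (α := ℝ)
  have hGamma := Complex.Gamma_mul_Gamma_eq_betaIntegral (hre p) (hre q)
  rw [hbeta, show (p : ℂ) + 1 + (q + 1) = ((p + q + 1 : ℕ) : ℂ) + 1 by push_cast; ring] at hGamma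
  simp only [Complex.Gamma_nat_eq_factorial] at hGamma
  rw [eq_div_iff (by positivity), mul_comm]
  exact_mod_cast hGamma.symm

end BetaIntegral

section Pade

open Polynomial
open scoped Nat

/-- The coefficient of `X ^ (a + n + 1)` in the binomial Padé identity: up to the factor
`padeScale a n`, it is `X ^ (-a - n - 1) * ∫ t in 0..X, t ^ a * (1 - t) ^ a * (X - t) ^ n`. -/
noncomputable def padeLeft (a n : ℕ) : ℤ[X] :=
  ∑ i ∈ Finset.range (a + 1),
    C ((-1) ^ i * ((a + i).choose a * (2 * a + n + 1).choose (a - i) : ℤ)) * X ^ i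

/-- The coefficient of `(1 - X) ^ (a + n + 1)` in the binomial Padé identity, given by the same
integral as `padeLeft` but over the interval from `X` to `1`. -/
noncomputable def padeRight (a n : ℕ) : ℤ[X] :=
  (-1) ^ n * (padeLeft a n).comp (1 - X)

/-- The right-hand side of the binomial Padé identity: up to the factor `padeScale a n`, it is
`∫ t in 0..1, t ^ a * (1 - t) ^ a * (X - t) ^ n`. -/
noncomputable def padeTotal (a n : ℕ) : ℤ[X] :=
  ∑ j ∈ Finset.range (n + 1),
    C ((-1) ^ (n + j) * ((a + (n - j)).choose a * (2 * a + n + 1).choose j : ℤ)) * X ^ j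

/-- The factor that makes the integrals representing `padeLeft`, `padeRight` and `padeTotal`
polynomials with integer coefficients. -/
noncomputable def padeScale (a n : ℕ) : ℝ := (2 * a + n + 1)! / (a ! * a ! * n !)

theorem padeScale_mul_integral_zero_self (a n : ℕ) (x : ℝ) :
    padeScale a n * ∫ t in (0 : ℝ)..x, t ^ a * (1 - t) ^ a * (x - t) ^ n =
      x ^ (a + n + 1) * aeval x (padeLeft a n) := by
  have hsubst : ∫ t in (0 : ℝ)..x, t ^ a * (1 - t) ^ a * (x - t) ^ n =
      x * ∫ s in (0 : ℝ)..1, (x * s) ^ a * (1 - x * s) ^ a * (x - x * s) ^ n := by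
    simpa using (intervalIntegral.mul_integral_comp_mul_left (a := 0) (b := 1) (c := x)
      (f := fun t ↦ t ^ a * (1 - t) ^ a * (x - t) ^ n)).symm
  have hexpand (s : ℝ) : (x * s) ^ a * (1 - x * s) ^ a * (x - x * s) ^ n =
      ∑ i ∈ Finset.range (a + 1),
        (x ^ (a + n) * ((-1) ^ i * x ^ i * a.choose i)) * (s ^ (a + i) * (1 - s) ^ n) := by
    rw [show 1 - x * s = -(x * s) + 1 by ring, add_pow, Finset.mul_sum, Finset.sum_mul]
    refine Finset.sum_congr rfl fun i _ ↦ ?_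
    rw [show x - x * s = x * (1 - s) by ring, neg_pow, mul_pow, mul_pow, mul_pow]
    ring
  simp_rw [hsubst, hexpand]
  rw [intervalIntegral.integral_finsetSum
    fun i _ ↦ Continuous.intervalIntegrable (by fun_prop) _ _]
  simp_rw [intervalIntegral.integral_const_mul, integral_pow_mul_one_sub_pow]
  simp only [padeLeft, map_sum, map_mul, map_pow, aeval_X, aeval_C, Finset.mul_sum]
  refine Finset.sum_congr rfl fun i hi ↦ ?_
  obtain ⟨d, rfl⟩ := Nat.exists_eq_add_of_le (Finset.mem_range_succ_iff.mp hi)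
  simp only [padeScale, show 2 * (i + d) + n + 1 = d + (i + d + i + n + 1) by omega,
    Nat.add_sub_cancel_left, eq_intCast, Int.cast_natCast, Nat.cast_add_choose, Int.cast_neg,
    Int.cast_one]
  field_simp
  ring

theorem padeScale_mul_integral_zero_one (a n : ℕ) (x : ℝ) :
    padeScale a n * ∫ t in (0 : ℝ)..1, t ^ a * (1 - t) ^ a * (x - t) ^ n =
      aeval x (padeTotal a n) := by
  have hexpand (t : ℝ) : t ^ a * (1 - t) ^ a * (x - t) ^ n =
      ∑ j ∈ Finset.range (n + 1),
        (x ^ j * ((-1) ^ (n - j) * n.choose j)) * (t ^ (a + (n - j)) * (1 - t) ^ a) := by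
    rw [sub_eq_add_neg x t, add_pow, Finset.mul_sum]
    refine Finset.sum_congr rfl fun j _ ↦ ?_
    rw [neg_pow]
    ring
  simp_rw [hexpand]
  rw [intervalIntegral.integral_finsetSum
    fun i _ ↦ Continuous.intervalIntegrable (by fun_prop) _ _]
  simp_rw [intervalIntegral.integral_const_mul, integral_pow_mul_one_sub_pow]
  simp only [padeTotal, map_sum, map_mul, map_pow, aeval_X, aeval_C, Finset.mul_sum]
  refine Finset.sum_congr rfl fun j hj ↦ ?_
  obtain ⟨d, rfl⟩ := Nat.exists_eq_add_of_le (Finset.mem_range_succ_iff.mp hj)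
  have hsign : (-1 : ℝ) ^ (j + d + j) = (-1) ^ d := by
    rw [show j + d + j = d + 2 * j by ring, pow_add, pow_mul, neg_one_sq, one_pow, mul_one]
  simp only [padeScale, show 2 * a + (j + d) + 1 = j + (a + d + a + 1) by omega,
    Nat.add_sub_cancel_left, eq_intCast, Int.cast_natCast, Nat.cast_add_choose, Int.cast_neg,
    Int.cast_one, hsign]
  field_simp

theorem neg_one_pow_mul_integral_zero_one_sub (a n : ℕ) (x : ℝ) :
    (-1) ^ n * ∫ t in (0 : ℝ)..(1 - x), t ^ a * (1 - t) ^ a * (1 - x - t) ^ n =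
      ∫ t in x..1, t ^ a * (1 - t) ^ a * (x - t) ^ n := by
  have hsubst := intervalIntegral.integral_comp_sub_left
    (f := fun t ↦ t ^ a * (1 - t) ^ a * (1 - x - t) ^ n) (a := x) (b := 1) (d := 1)
  rw [sub_self] at hsubst
  rw [← hsubst, ← intervalIntegral.integral_const_mul]
  refine intervalIntegral.integral_congr fun t _ ↦ ?_
  rw [show x - t = -1 * (1 - x - (1 - t)) by ring, mul_pow (-1 : ℝ)]
  ring

theorem X_pow_mul_padeLeft_add_one_sub_X_pow_mul_padeRight (a n : ℕ) :
    X ^ (a + n + 1) * padeLeft a n + (1 - X) ^ (a + n + 1) * padeRight a n = padeTotal a n := by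
  apply Polynomial.map_injective (Int.castRingHom ℝ) Int.cast_injective
  refine Polynomial.funext fun x ↦ ?_
  have heval (p : ℤ[X]) : eval x (p.map (Int.castRingHom ℝ)) = aeval x p := by
    rw [eval_map, aeval_def]; rfl
  have hintegrable (b c : ℝ) : IntervalIntegrable
      (fun t ↦ t ^ a * (1 - t) ^ a * (x - t) ^ n) MeasureTheory.volume b c :=
    Continuous.intervalIntegrable (by fun_prop) b c
  simp only [heval, padeRight, map_add, map_mul, map_pow, map_neg, map_one, map_sub, aeval_X,
    aeval_comp]
  rw [mul_left_comm _ ((-1 : ℝ) ^ n), ← padeScale_mul_integral_zero_self,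
    ← padeScale_mul_integral_zero_self, ← padeScale_mul_integral_zero_one,
    ← intervalIntegral.integral_add_adjacent_intervals (hintegrable 0 x) (hintegrable x 1),
    ← neg_one_pow_mul_integral_zero_one_sub]
  ring

theorem coeff_padeLeft (a n i : ℕ) : (padeLeft a n).coeff i = if i ≤ a then
    (-1) ^ i * ((a + i).choose a * (2 * a + n + 1).choose (a - i) : ℤ) else 0 := by
  simp only [padeLeft, finsetSum_coeff, coeff_C_mul_X_pow]
  simp

theorem coeff_padeTotal (a n j : ℕ) : (padeTotal a n).coeff j = if j ≤ n then
    (-1) ^ (n + j) * ((a + (n - j)).choose a * (2 * a + n + 1).choose j : ℤ) else 0 := by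
  simp only [padeTotal, finsetSum_coeff, coeff_C_mul_X_pow]
  simp

theorem natDegree_padeLeft (a n : ℕ) : (padeLeft a n).natDegree = a :=
  natDegree_eq_of_le_of_coeff_ne_zero
    (natDegree_le_iff_coeff_eq_zero.mpr fun i hi ↦ by simp [coeff_padeLeft, hi.not_ge])
    (by simp [coeff_padeLeft, Nat.choose_eq_zero_iff])

theorem natDegree_padeRight (a n : ℕ) : (padeRight a n).natDegree = a := by
  have hlin : (1 - X : ℤ[X]).natDegree = 1 := by
    rw [← natDegree_neg, neg_sub]
    exact natDegree_X_sub_C 1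
  have hsign : ((-1) ^ n : ℤ[X]) = C ((-1) ^ n) := by simp
  rw [padeRight, hsign, natDegree_C_mul (by simp), natDegree_comp, hlin, mul_one,
    natDegree_padeLeft]

theorem natDegree_padeTotal (a n : ℕ) : (padeTotal a n).natDegree = n :=
  natDegree_eq_of_le_of_coeff_ne_zero
    (natDegree_le_iff_coeff_eq_zero.mpr fun j hj ↦ by simp [coeff_padeTotal, hj.not_ge])
    (by simp [coeff_padeTotal, Nat.choose_eq_zero_iff]; omega)

theorem abs_neg_one_pow_mul_choose_mul_choose_le {p r t : ℕ} (hpr : p + r ≤ t) (m q s : ℕ) :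
    |((-1) ^ m * (p.choose q * r.choose s) : ℤ)| ≤ 2 ^ t := by
  rw [abs_mul, abs_neg_one_pow, one_mul, ← Nat.cast_mul, Nat.abs_cast]
  exact_mod_cast calc
    p.choose q * r.choose s ≤ 2 ^ p * 2 ^ r :=
      Nat.mul_le_mul (Nat.choose_le_two_pow p q) (Nat.choose_le_two_pow r s)
    _ ≤ 2 ^ t := by rw [← pow_add]; exact Nat.pow_le_pow_right two_pos hpr

theorem abs_coeff_padeLeft_le (a n i : ℕ) :
    |(padeLeft a n).coeff i| ≤ 2 ^ (4 * a + 2 * n + 1) := by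
  rw [coeff_padeLeft]
  split_ifs with h
  · exact abs_neg_one_pow_mul_choose_mul_choose_le (by omega) ..
  · simp

theorem abs_coeff_padeTotal_le (a n j : ℕ) :
    |(padeTotal a n).coeff j| ≤ 2 ^ (4 * a + 2 * n + 1) := by
  rw [coeff_padeTotal]
  split_ifs with h
  · exact abs_neg_one_pow_mul_choose_mul_choose_le (by omega) ..
  · simp

/-- A `2 × 2` minor of the two consecutive Padé approximations with exponent `a + n + 2`, whose
nonvanishing expresses that the approximations are linearly independent. -/
noncomputable def padeMinor (a n : ℕ) : ℤ[X] :=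
  padeRight a (n + 1) * padeTotal (a + 1) n - padeRight (a + 1) n * padeTotal a (n + 1)

theorem X_pow_dvd_padeMinor (a n : ℕ) : X ^ (a + n + 2) ∣ padeMinor a n := by
  have h₁ := X_pow_mul_padeLeft_add_one_sub_X_pow_mul_padeRight a (n + 1)
  have h₂ := X_pow_mul_padeLeft_add_one_sub_X_pow_mul_padeRight (a + 1) n
  rw [show a + (n + 1) + 1 = a + n + 2 by ring] at h₁
  rw [show a + 1 + n + 1 = a + n + 2 by ring] at h₂
  have hcoprime : IsCoprime ((X : ℤ[X]) ^ (a + n + 2)) ((1 - X) ^ (a + n + 2)) :=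
    IsCoprime.pow ⟨1, 1, by ring⟩
  refine hcoprime.dvd_of_dvd_mul_left
    ⟨padeLeft (a + 1) n * padeTotal a (n + 1) - padeLeft a (n + 1) * padeTotal (a + 1) n, ?_⟩
  rw [padeMinor]
  linear_combination padeTotal (a + 1) n * h₁ - padeTotal a (n + 1) * h₂

theorem natDegree_padeMinor (a n : ℕ) : (padeMinor a n).natDegree = a + n + 2 := by
  have hsmall : (padeRight a (n + 1) * padeTotal (a + 1) n).natDegree ≤ a + n := by
    simpa only [natDegree_padeRight, natDegree_padeTotal] using
      natDegree_mul_le (p := padeRight a (n + 1)) (q := padeTotal (a + 1) n)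
  have hlarge : (padeRight (a + 1) n * padeTotal a (n + 1)).natDegree = a + n + 2 := by
    rw [natDegree_mul, natDegree_padeRight, natDegree_padeTotal]
    · ring
    · exact ne_zero_of_natDegree_gt (n := 0) (by simp [natDegree_padeRight])
    · exact ne_zero_of_natDegree_gt (n := 0) (by simp [natDegree_padeTotal])
  rw [padeMinor, natDegree_sub_eq_right_of_natDegree_lt (by omega), hlarge]

theorem exists_padeMinor_eq (a n : ℕ) :
    ∃ c : ℤ, c ≠ 0 ∧ padeMinor a n = X ^ (a + n + 2) * C c := by
  obtain ⟨q, hq⟩ := X_pow_dvd_padeMinor a n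
  have hdeg := natDegree_padeMinor a n
  have hq0 : q ≠ 0 := by
    rintro rfl
    simp [hq] at hdeg
  have hqdeg : q.natDegree = 0 := by
    rw [hq, (monic_X_pow _).natDegree_mul' hq0, natDegree_X_pow] at hdeg
    omega
  obtain ⟨c, rfl⟩ := natDegree_eq_zero.mp hqdeg
  exact ⟨c, by simpa using hq0, hq⟩

end Pade

section CrossProduct

open Matrix

theorem exists_smul_eq_of_crossProduct_eq_zero_s14 {K : Type*} [Field K] {u v : Fin 3 → K}
    (hu : u ≠ 0) (h : u ⨯₃ v = 0) : ∃ c : K, c • u = v := by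
  by_contra! hne
  exact crossProduct_ne_zero_iff_linearIndependent.mpr
    ((LinearIndependent.pair_iff' hu).mpr hne) h

theorem crossProduct_ne_zero_or_crossProduct_ne_zero {K : Type*} [Field K] {u v w : Fin 3 → K}
    (hu : u ≠ 0) (hvw : v ⨯₃ w ≠ 0) : u ⨯₃ v ≠ 0 ∨ u ⨯₃ w ≠ 0 := by
  by_contra! h
  obtain ⟨c, rfl⟩ := exists_smul_eq_of_crossProduct_eq_zero_s14 hu h.1
  obtain ⟨d, rfl⟩ := exists_smul_eq_of_crossProduct_eq_zero_s14 hu h.2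
  simp at hvw

end CrossProduct

section Heights

open Height AdmissibleAbsValues Matrix Polynomial

variable {K : Type*} [Field K] [AdmissibleAbsValues K]

theorem logHeight_intCast_le {ι : Type*} [Finite ι] {f : ι → ℤ} {B : ℝ} (hB : 1 ≤ B)
    (hf : ∀ i, |(f i : ℝ)| ≤ B) :
    logHeight (fun i ↦ (f i : K)) ≤ totalWeight K * Real.log B := by
  rw [logHeight_eq_log_mulHeight, ← Real.log_pow]
  refine Real.log_le_log (mulHeight_pos _) ?_
  rcases eq_or_ne (fun i ↦ (f i : K)) 0 with h0 | h0
  · rw [h0, mulHeight_zero]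
    exact one_le_pow₀ hB
  have : Nonempty ι := (Function.ne_iff.mp h0).nonempty
  have harch : (archAbsVal.map fun v : AbsoluteValue K ℝ ↦ ⨆ i, v (f i : K)).prod ≤
      B ^ totalWeight K := by
    refine (Multiset.prod_map_le_prod_map₀ _ (fun _ ↦ B)
      (fun v _ ↦ Real.iSup_nonneg fun i ↦ apply_nonneg v _) fun v _ ↦ ?_).trans_eq
      (by rw [Multiset.map_const', Multiset.prod_replicate, totalWeight])
    refine ciSup_le fun i ↦ le_trans ?_ (hf i)
    rw [← v.apply_natAbs_eq, ← Int.cast_abs, Int.abs_eq_natAbs, Int.cast_natCast]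
    exact v.apply_nat_le_self _
  have hnonarch : ∏ᶠ v : nonarchAbsVal (K := K), ⨆ i, v.val (f i : K) ≤ 1 := by
    refine (finprod_induction (fun r : ℝ ↦ 0 ≤ r ∧ r ≤ 1) ⟨zero_le_one, le_rfl⟩
      (fun a b ha hb ↦ ⟨mul_nonneg ha.1 hb.1, mul_le_one₀ ha.2 hb.1 hb.2⟩) fun v ↦ ?_).2
    exact ⟨Real.iSup_nonneg fun i ↦ apply_nonneg v.val _,
      ciSup_le fun i ↦ (isNonarchimedean v.val v.2).apply_intCast_le_one⟩
  rw [mulHeight_eq h0]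
  exact (mul_le_of_le_one_right
    (Multiset.prod_map_nonneg fun v _ ↦ Real.iSup_nonneg fun i ↦ apply_nonneg v _)
    hnonarch).trans harch

theorem logHeight_intCast_linearMap_apply_le {ι ι' : Type*} [Fintype ι] [Finite ι']
    {M : ι' × ι → ℤ} {B : ℝ} (hB : 1 ≤ B) (hM : ∀ p, |(M p : ℝ)| ≤ B) (x : ι → K) :
    logHeight (fun j ↦ ∑ i, (M (j, i) : K) * x i) ≤
      totalWeight K * (Real.log (Nat.card ι) + Real.log B) + logHeight x :=
  calc
    _ ≤ totalWeight K * Real.log (Nat.card ι) + logHeight (fun p ↦ (M p : K)) + logHeight x :=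
      logHeight_linearMap_apply_le (fun p ↦ (M p : K)) x
    _ ≤ _ := by
      rw [mul_add]
      gcongr
      exact logHeight_intCast_le hB hM

theorem logHeight_crossProduct_le {u w : Fin 3 → K} (hu : u ≠ 0) (hw : w ≠ 0) :
    logHeight (u ⨯₃ w) ≤ totalWeight K * Real.log 9 + logHeight u + logHeight w := by
  let M : Fin 3 × (Fin 3 × Fin 3) → ℤ := fun p ↦
    if p.2 = (p.1 + 1, p.1 + 2) then 1 else if p.2 = (p.1 + 2, p.1 + 1) then -1 else 0
  have hM (p : Fin 3 × (Fin 3 × Fin 3)) : |(M p : ℝ)| ≤ 1 := by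
    dsimp only [M]
    split_ifs <;> simp
  have hcross : (fun j ↦ ∑ i, (M (j, i) : K) * (u i.1 * w i.2)) = u ⨯₃ w := by
    funext j
    rw [cross_apply]
    fin_cases j <;> simp [M, Fintype.sum_prod_type, Fin.sum_univ_three] <;> ring
  have hbound := logHeight_intCast_linearMap_apply_le le_rfl hM
    (fun a : Fin 3 × Fin 3 ↦ u a.1 * w a.2)
  rw [hcross, logHeight_fun_mul_eq hu hw, ← add_assoc] at hbound
  convert hbound using 4
  norm_num

theorem logHeight_le_of_dotProduct_eq_zero {p u w : Fin 3 → K} (hup : u ⬝ᵥ p = 0)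
    (hwp : w ⬝ᵥ p = 0) (huw : u ⨯₃ w ≠ 0) :
    logHeight p ≤ totalWeight K * Real.log 9 + logHeight u + logHeight w := by
  have hu : u ≠ 0 := by
    rintro rfl
    simp at huw
  have hw : w ≠ 0 := by
    rintro rfl
    simp at huw
  have hparallel : u ⨯₃ w ⨯₃ p = 0 := by
    rw [cross_cross_eq_smul_sub_smul, hup, hwp, zero_smul, zero_smul, sub_zero]
  obtain ⟨c, rfl⟩ := exists_smul_eq_of_crossProduct_eq_zero_s14 huw hparallel
  have hbound := logHeight_crossProduct_le hu hw
  rcases eq_or_ne c 0 with rfl | hc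
  · rw [zero_smul, logHeight_zero]
    exact (logHeight_nonneg _).trans hbound
  · rwa [logHeight_smul_eq_logHeight _ hc]

theorem logHeight_vec_neg_one_le (a b : K) :
    logHeight ![a, b, -1] ≤ logHeight₁ a + logHeight₁ b := by
  have hne (c : K) : ![-c, 1] ≠ 0 := fun h ↦ one_ne_zero (congrFun h 1)
  rw [← logHeight₁_neg a, ← logHeight₁_neg b, logHeight₁_eq_logHeight, logHeight₁_eq_logHeight,
    ← logHeight_fun_mul_eq (hne a) (hne b), ← logHeight_neg]
  refine le_of_eq_of_le ?_ (logHeight_comp_le ![(0, 1), (1, 0), (1, 1)]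
    (fun i : Fin 2 × Fin 2 ↦ ![-a, 1] i.1 * ![-b, 1] i.2))
  congr 1
  funext j
  fin_cases j <;> simp

theorem logHeight₁_apply_le {κ : Type*} [Finite κ] {z : κ → K} {o : κ} (ho : z o = 1) (i : κ) :
    logHeight₁ (z i) ≤ logHeight z := by
  rw [logHeight₁_eq_logHeight]
  refine le_of_eq_of_le (congrArg logHeight ?_) (logHeight_comp_le ![i, o] z)
  funext j
  fin_cases j <;> simp [ho]

theorem logHeight_fun_pow_le {κ : Type*} [Finite κ] {z : κ → K} {o : κ} (ho : z o = 1) (k : ℕ) :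
    logHeight (fun p : κ × Fin (k + 1) ↦ z p.1 ^ (p.2 : ℕ)) ≤ k * logHeight z := by
  have hz : z ≠ 0 := fun h ↦ one_ne_zero (ho.symm.trans (congrFun h o))
  have hprod : logHeight (fun s : Fin k → κ ↦ ∏ a, z (s a)) = k * logHeight z := by
    rw [logHeight_fun_prod_eq (x := fun _ : Fin k ↦ z) fun _ ↦ hz]
    simp
  let choice (p : κ × Fin (k + 1)) (a : Fin k) : κ := if (a : ℕ) < p.2 then p.1 else o
  rw [← hprod]
  refine le_of_eq_of_le ?_ (logHeight_comp_le choice _)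
  congr 1
  funext ⟨s, i⟩
  simp only [choice, Function.comp_apply, apply_ite z, ho, Finset.prod_ite, Finset.prod_const_one,
    mul_one, Finset.prod_const, Fin.card_filter_val_lt, min_eq_right (Nat.lt_succ_iff.mp i.2)]

theorem logHeight_aeval_le {ι κ : Type*} [Finite ι] [Fintype κ] {P : ι → ℤ[X]} {k : ℕ} {B : ℝ}
    (hB : 1 ≤ B) (hdeg : ∀ j, (P j).natDegree ≤ k) (hcoeff : ∀ j i, |((P j).coeff i : ℝ)| ≤ B)
    (σ : ι → κ) {z : κ → K} {o : κ} (ho : z o = 1) :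
    logHeight (fun j ↦ aeval (z (σ j)) (P j)) ≤
      totalWeight K * (Real.log (Fintype.card κ * (k + 1)) + Real.log B) + k * logHeight z := by
  classical
  let M : ι × (κ × Fin (k + 1)) → ℤ := fun p ↦
    if σ p.1 = p.2.1 then (P p.1).coeff p.2.2 else 0
  have hM (p : ι × (κ × Fin (k + 1))) : |(M p : ℝ)| ≤ B := by
    dsimp only [M]
    split_ifs
    · exact hcoeff ..
    · simpa using zero_le_one.trans hB
  have heval : (fun j ↦ ∑ p, (M (j, p) : K) * z p.1 ^ (p.2 : ℕ)) =
      fun j ↦ aeval (z (σ j)) (P j) := by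
    funext j
    rw [aeval_eq_sum_range' (Nat.lt_succ_of_le (hdeg j)), Finset.sum_range]
    simp [M, Fintype.sum_prod_type_right, zsmul_eq_mul, apply_ite, ite_mul]
  have hbound := logHeight_intCast_linearMap_apply_le hB hM
    (fun p : κ × Fin (k + 1) ↦ z p.1 ^ (p.2 : ℕ))
  rw [heval] at hbound
  refine hbound.trans (add_le_add (le_of_eq ?_) (logHeight_fun_pow_le ho k))
  simp

end Heights

section GapPrinciple

open Height AdmissibleAbsValues Matrix Polynomial

section

variable {K : Type*} [Field K]

/-- The coefficient vector at `x` of the binomial Padé identity, viewed as a linear relation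
between `x ^ (a + n + 1)`, `(1 - x) ^ (a + n + 1)` and `1`. -/
noncomputable def padeVec (a n : ℕ) (x : K) : Fin 3 → K :=
  ![aeval x (padeLeft a n), aeval x (padeRight a n), aeval x (-padeTotal a n)]

theorem padeVec_dotProduct (a n : ℕ) (x : K) :
    padeVec a n x ⬝ᵥ ![x, 1 - x, 1] ^ (a + n + 1) = 0 := by
  have h := congrArg (aeval x) (X_pow_mul_padeLeft_add_one_sub_X_pow_mul_padeRight a n)
  simp only [map_add, map_mul, map_pow, map_one, map_sub, aeval_X] at h
  simp only [padeVec, dotProduct, Fin.sum_univ_three, Pi.pow_apply, Matrix.cons_val, one_pow,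
    map_neg]
  linear_combination h

theorem crossProduct_padeVec_ne_zero [CharZero K] (a n : ℕ) {x : K} (hx : x ≠ 0) :
    padeVec a (n + 1) x ⨯₃ padeVec (a + 1) n x ≠ 0 := by
  obtain ⟨c, hc, hminor⟩ := exists_padeMinor_eq a n
  have heval := congrArg (aeval x) hminor
  have hne : aeval x (X ^ (a + n + 2) * C c : ℤ[X]) ≠ 0 := by simp [hx, hc]
  rw [← heval] at hne
  intro hcross
  refine hne ?_
  have h₀ := congrFun hcross 0
  simp only [cross_apply, padeVec, Matrix.cons_val, map_neg, Pi.zero_apply] at h₀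
  simp only [padeMinor, map_sub, map_mul]
  linear_combination -h₀

end

theorem log_three_mul_add_log_two_pow_le {k : ℕ} (hk : 1 ≤ k) :
    Real.log (3 * (k + 1)) + Real.log (2 ^ (7 * k)) ≤ 12 * k := by
  have hk' : (1 : ℝ) ≤ k := by exact_mod_cast hk
  have hlog := Real.log_le_sub_one_of_pos (x := 3 * ((k : ℝ) + 1)) (by positivity)
  have hlog_pow : Real.log (2 ^ (7 * k)) ≤ 7 * k := by
    rw [Real.log_pow]
    push_cast
    exact mul_le_of_le_one_right (by positivity) (Real.log_two_lt_d9.le.trans (by norm_num))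
  linarith

theorem logHeight_padeVec_le {K : Type*} [Field K] [AdmissibleAbsValues K] {a n k : ℕ}
    (ha : a ≤ k) (hn : n ≤ k) (hk : 1 ≤ k) (x : K) :
    logHeight (padeVec a n x) ≤ totalWeight K * (12 * k) + k * logHeight ![x, 1 - x, 1] := by
  let P : Fin 3 → ℤ[X] := ![padeLeft a n, C ((-1) ^ n) * padeLeft a n, -padeTotal a n]
  have hdeg (j : Fin 3) : (P j).natDegree ≤ k := by
    fin_cases j
    · simpa [P, natDegree_padeLeft] using ha
    · simpa only [P, Fin.mk_one, Matrix.cons_val_one, Matrix.cons_val_zero] using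
        (natDegree_C_mul_le _ _).trans ((natDegree_padeLeft a n).trans_le ha)
    · simpa [P, natDegree_padeTotal] using hn
  have hcoeff (j : Fin 3) (i : ℕ) : |((P j).coeff i : ℝ)| ≤ 2 ^ (7 * k) := by
    have hle : (2 : ℤ) ^ (4 * a + 2 * n + 1) ≤ 2 ^ (7 * k) :=
      pow_le_pow_right₀ one_le_two (by omega)
    have hleft := (abs_coeff_padeLeft_le a n i).trans hle
    have htotal := (abs_coeff_padeTotal_le a n i).trans hle
    suffices |(P j).coeff i| ≤ 2 ^ (7 * k) by exact_mod_cast this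
    fin_cases j
    · exact hleft
    · simpa only [P, Fin.mk_one, Matrix.cons_val_one, Matrix.cons_val_zero, coeff_C_mul, abs_mul,
        abs_neg_one_pow, one_mul] using hleft
    · simpa [P] using htotal
  have heval : (fun j ↦ aeval ((![x, 1 - x, 1] : Fin 3 → K) (![0, 1, 0] j)) (P j)) =
      padeVec a n x := by
    funext j
    fin_cases j <;> simp [P, padeVec, padeRight, aeval_comp]
  have hbound := logHeight_aeval_le (one_le_pow₀ one_le_two) hdeg hcoeff ![0, 1, 0]
    (z := ![x, 1 - x, 1]) (o := 2) rfl
  rw [heval] at hbound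
  refine hbound.trans ?_
  gcongr
  simpa using log_three_mul_add_log_two_pow_le hk

variable (K : Type*) [Field K] [CharZero K] [AdmissibleAbsValues K]

theorem exists_mul_logHeight_le_logHeight₁_add_logHeight₁ : ∃ C : ℝ, ∀ x y z w : K,
    x ≠ 0 → y ≠ 0 → x + y = 1 → z + w = 1 → ∀ k : ℕ, 1 ≤ k → k * logHeight ![x, y, 1] ≤
      logHeight₁ (z / x ^ (2 * k)) + logHeight₁ (w / y ^ (2 * k)) + C * k := by
  refine ⟨totalWeight K * (Real.log 9 + 12), fun x y z w hx hy hxy hzw k hk ↦ ?_⟩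
  obtain ⟨l, rfl⟩ := Nat.exists_eq_add_of_le' hk
  obtain rfl : y = 1 - x := by linear_combination hxy
  set u := ![z / x ^ (2 * (l + 1)), w / (1 - x) ^ (2 * (l + 1)), -1] with hu
  have hu_dot : u ⬝ᵥ ![x, 1 - x, 1] ^ (2 * (l + 1)) = 0 := by
    simp only [hu, dotProduct, Fin.sum_univ_three, Pi.pow_apply, Matrix.cons_val, one_pow,
      div_mul_cancel₀ _ (pow_ne_zero _ hx), div_mul_cancel₀ _ (pow_ne_zero _ hy)]
    linear_combination hzw
  have hgap {a n : ℕ} (ha : a ≤ l + 1) (hn : n ≤ l + 1) (han : a + n + 1 = 2 * (l + 1))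
      (hcross : u ⨯₃ padeVec a n x ≠ 0) : (l + 1 : ℕ) * logHeight ![x, 1 - x, 1] ≤
        logHeight u + totalWeight K * (Real.log 9 + 12) * (l + 1 : ℕ) := by
    have hsolution := logHeight_le_of_dotProduct_eq_zero hu_dot
      (by rw [← han]; exact padeVec_dotProduct a n x) hcross
    have hpade := logHeight_padeVec_le ha hn hk x
    have hlog : (totalWeight K : ℝ) * Real.log 9 ≤ totalWeight K * Real.log 9 * (l + 1 : ℕ) :=
      le_mul_of_one_le_right (mul_nonneg (Nat.cast_nonneg _) (Real.log_nonneg (by norm_num)))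
        (by exact_mod_cast hk)
    rw [logHeight_pow, Nat.cast_mul, Nat.cast_ofNat] at hsolution
    linarith
  have hle_height := logHeight_vec_neg_one_le (z / x ^ (2 * (l + 1))) (w / (1 - x) ^ (2 * (l + 1)))
  have hu_ne : u ≠ 0 := fun h ↦ by simpa [hu] using congrFun h 2
  rcases crossProduct_ne_zero_or_crossProduct_ne_zero hu_ne
    (crossProduct_padeVec_ne_zero l l hx) with hcross | hcross
  · linarith [hgap l.le_succ le_rfl (by ring) hcross]
  · linarith [hgap le_rfl l.le_succ (by ring) hcross]

end GapPrinciple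

section BoundedSets

open Bornology Filter Topology

variable {E : Type*} [NormedAddCommGroup E] [NormedSpace ℝ E]

theorem exists_mem_forall_exists_norm_sub_lt_of_not_isBounded [ProperSpace E] {T : Set E}
    (hT : ¬ IsBounded T) {ε : ℝ} (hε : 0 < ε) (r : ℝ) :
    ∃ p ∈ T, r < ‖p‖ ∧ ∀ R : ℝ, ∃ q ∈ T, R < ‖q‖ ∧ ‖‖q‖⁻¹ • q - ‖p‖⁻¹ • p‖ < ε := by
  have hne : (cobounded E ⊓ 𝓟 T).NeBot := by
    rw [← frequently_mem_iff_neBot]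
    exact fun h ↦ hT (isBounded_def.mpr h)
  have hdirection : ∀ᶠ q in cobounded E ⊓ 𝓟 T, ‖q‖⁻¹ • q ∈ Metric.closedBall (0 : E) 1 := by
    refine .of_forall fun q ↦ ?_
    rw [mem_closedBall_zero_iff, norm_smul, norm_inv, norm_norm]
    exact inv_mul_le_one
  obtain ⟨d, -, hd⟩ := (isCompact_closedBall (0 : E) 1).exists_mapClusterPt_of_frequently
    hdirection.frequently
  have hclose (R : ℝ) : ∃ q ∈ T, R < ‖q‖ ∧ dist (‖q‖⁻¹ • q) d < ε / 2 := by
    have hmem : ∀ᶠ q in cobounded E ⊓ 𝓟 T, q ∈ T := mem_inf_of_right (mem_principal_self T)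
    have hlarge : ∀ᶠ q in cobounded E ⊓ 𝓟 T, R < ‖q‖ :=
      (tendsto_norm_cobounded_atTop.eventually_gt_atTop R).filter_mono inf_le_left
    obtain ⟨q, hqd, hqT, hqR⟩ := ((mapClusterPt_iff_frequently.mp hd _
      (Metric.ball_mem_nhds d (half_pos hε))).and_eventually (hmem.and hlarge)).exists
    exact ⟨q, hqT, hqR, hqd⟩
  obtain ⟨p, hpT, hpr, hpd⟩ := hclose r
  refine ⟨p, hpT, hpr, fun R ↦ ?_⟩
  obtain ⟨q, hqT, hqR, hqd⟩ := hclose R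
  refine ⟨q, hqT, hqR, ?_⟩
  rw [← dist_eq_norm, ← add_halves ε]
  exact (dist_triangle_right _ _ d).trans_lt (add_lt_add hqd hpd)

theorem exists_norm_sub_nsmul_le {p q : E} {ε : ℝ} {m : ℕ} (hm : m ≠ 0) (hp : p ≠ 0)
    (hpq : ‖‖q‖⁻¹ • q - ‖p‖⁻¹ • p‖ ≤ ε) :
    ∃ k : ℕ, ‖q - (m * k) • p‖ ≤ ε * ‖q‖ + m * ‖p‖ ∧ ‖q‖ ≤ m * (k + 1) * ‖p‖ := by
  have hp' : 0 < ‖p‖ := norm_pos_iff.mpr hp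
  set k := ⌊‖q‖ / (m * ‖p‖)⌋₊
  have hk_le : k * (m * ‖p‖) ≤ ‖q‖ :=
    (le_div_iff₀ (by positivity)).mp (Nat.floor_le (by positivity))
  have hlt_k : ‖q‖ < (k + 1) * (m * ‖p‖) :=
    (div_lt_iff₀ (by positivity)).mp (Nat.lt_floor_add_one _)
  have hq : ‖q‖ • ‖q‖⁻¹ • q = q := by
    rcases eq_or_ne q 0 with rfl | hq
    · simp
    · exact smul_inv_smul₀ (norm_ne_zero_iff.mpr hq) q
  have hdecomp : q - (m * k) • p =
      ‖q‖ • (‖q‖⁻¹ • q - ‖p‖⁻¹ • p) + (‖q‖ * ‖p‖⁻¹ - m * k) • p := by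
    rw [smul_sub, hq, smul_smul, sub_smul, ← Nat.cast_smul_eq_nsmul ℝ]
    push_cast
    abel
  refine ⟨k, ?_, by linarith⟩
  have hcoeff : 0 ≤ ‖q‖ * ‖p‖⁻¹ - m * k := by
    rw [← div_eq_mul_inv, sub_nonneg, le_div_iff₀ hp']
    linarith
  calc
    _ ≤ ‖q‖ * ‖‖q‖⁻¹ • q - ‖p‖⁻¹ • p‖ + (‖q‖ * ‖p‖⁻¹ - m * k) * ‖p‖ := by
      rw [hdecomp]
      refine (norm_add_le _ _).trans_eq ?_
      rw [norm_smul, norm_norm, norm_smul, Real.norm_of_nonneg hcoeff]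
    _ = ‖q‖ * ‖‖q‖⁻¹ • q - ‖p‖⁻¹ • p‖ + (‖q‖ - m * k * ‖p‖) := by
      field_simp
    _ ≤ ‖q‖ * ε + m * ‖p‖ := by
      gcongr
      linarith
    _ = ε * ‖q‖ + m * ‖p‖ := by ring

theorem isBounded_of_mul_norm_le [ProperSpace E] {T : Set E} {m : ℕ} (hm : m ≠ 0) {A C : ℝ}
    (hA : 0 < A) (hT : ∀ p ∈ T, ∀ q ∈ T, ∀ k : ℕ, 1 ≤ k →
      k * ‖p‖ ≤ A * ‖q - (m * k) • p‖ + C * k) :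
    IsBounded T := by
  by_contra hunbounded
  have hm' : (0 : ℝ) < m := by exact_mod_cast Nat.pos_of_ne_zero hm
  set ε := (2 * A * m)⁻¹ with hε
  obtain ⟨p, hpT, hp, hfar⟩ := exists_mem_forall_exists_norm_sub_lt_of_not_isBounded hunbounded
    (show 0 < ε by positivity) (max (4 * C) 0)
  obtain ⟨hpC, hp0⟩ := max_lt_iff.mp hp
  obtain ⟨q, hqT, hq, hpq⟩ := hfar (m * (3 + 4 * A * m) * ‖p‖)
  obtain ⟨k, hdist, hqk⟩ := exists_norm_sub_nsmul_le hm (norm_pos_iff.mp hp0) hpq.le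
  have hk : 2 + 4 * A * m < k := by
    have := lt_of_mul_lt_mul_right (hq.trans_le hqk) hp0.le
    linarith [lt_of_mul_lt_mul_left this hm'.le]
  have hk1 : 1 ≤ k := by
    have : (0 : ℝ) < k := lt_trans (by positivity) hk
    exact_mod_cast this
  have hupper : k * ‖p‖ ≤ ((k + 1) / 2 + A * m + k / 4) * ‖p‖ := calc
    k * ‖p‖ ≤ A * ‖q - (m * k) • p‖ + C * k := hT p hpT q hqT k hk1
    _ ≤ A * (ε * (m * (k + 1) * ‖p‖) + m * ‖p‖) + ‖p‖ / 4 * k := by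
      gcongr
      · exact hdist.trans (by gcongr)
      · linarith
    _ = ((k + 1) / 2 + A * m + k / 4) * ‖p‖ := by
      rw [hε]
      field_simp
  linarith [le_of_mul_le_mul_right hupper hp0]

end BoundedSets

section UnitEquation

open Height NumberField

variable {K : Type*} [Field K] [NumberField K]

theorem finitePlace_mk_eq_one {v : HeightOneSpectrum (𝓞 K)} {x : K} (h : v.valuation K x = 1) :
    FinitePlace.mk v x = 1 := by
  rw [FinitePlace.mk_apply, FinitePlace.norm_embedding, NumberField.HeightOneSpectrum.adicAbv_def,
    h, map_one, NNReal.coe_one]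

/-- The logarithmic embedding of `Kˣ` with respect to the infinite places and the primes in `S`.
The `ℓ¹` norm is the one for which the embedding of an `S`-unit has norm twice its height. -/
noncomputable def placeLog (S : Set (HeightOneSpectrum (𝓞 K))) (x : Kˣ) :
    PiLp 1 (fun _ : InfinitePlace K ⊕ S ↦ ℝ) :=
  WithLp.toLp 1 (Sum.elim (fun v ↦ v.mult * Real.log (v x))
    fun v ↦ Real.log (FinitePlace.mk v.1 (x : K)))

theorem placeLog_div_pow (S : Set (HeightOneSpectrum (𝓞 K))) (x y : Kˣ) (n : ℕ) :
    placeLog S (x / y ^ n) = placeLog S x - n • placeLog S y := by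
  ext i
  rcases i with v | v
  · simp [placeLog, Real.log_div]
    ring
  · simp [placeLog, Real.log_div]

theorem abs_log_eq_posLog_add_posLog_inv (r : ℝ) :
    |Real.log r| = Real.posLog r + Real.posLog r⁻¹ := by
  rw [Real.posLog_apply, Real.posLog_apply, Real.log_inv, max_comm 0, max_comm 0,
    max_zero_add_max_neg_zero_eq_abs_self]

open Real in
theorem logHeight₁_eq_of_mem_unit {S : Set (HeightOneSpectrum (𝓞 K))} [Fintype S] {x : Kˣ}
    (hx : x ∈ S.unit K) :
    logHeight₁ (x : K) = (∑ v : InfinitePlace K, v.mult * log⁺ (v x)) +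
      ∑ v : S, log⁺ (FinitePlace.mk v.1 (x : K)) := by
  have hsupport : Function.support
      (fun v ↦ log⁺ (FinitePlace.equivHeightOneSpectrum.symm v (x : K))) ⊆ S.toFinset := by
    intro v hv
    by_contra hvS
    have hone : FinitePlace.mk v (x : K) = 1 := finitePlace_mk_eq_one (hx v (by simpa using hvS))
    exact hv ((congrArg log⁺ hone).trans posLog_one)
  rw [NumberField.logHeight₁_eq, ← finsum_comp_equiv FinitePlace.equivHeightOneSpectrum.symm,
    finsum_eq_sum_of_support_subset _ hsupport, ← Finset.sum_set_coe]
  rfl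

theorem norm_placeLog {S : Set (HeightOneSpectrum (𝓞 K))} [Fintype S] {x : Kˣ}
    (hx : x ∈ S.unit K) : ‖placeLog S x‖ = 2 * logHeight₁ (x : K) := by
  have hnorm : ‖placeLog S x‖ = (∑ v : InfinitePlace K, v.mult * |Real.log (v x)|) +
      ∑ v : S, |Real.log (FinitePlace.mk v.1 (x : K))| := by
    simp [PiLp.norm_eq_of_L1, placeLog, abs_mul]
  rw [hnorm, two_mul]
  nth_rewrite 2 [← logHeight₁_inv]
  rw [← Units.val_inv_eq_inv_val, logHeight₁_eq_of_mem_unit hx,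
    logHeight₁_eq_of_mem_unit (inv_mem hx)]
  simp only [abs_log_eq_posLog_add_posLog_inv, Units.val_inv_eq_inv_val, map_inv₀, mul_add,
    Finset.sum_add_distrib]
  ring

/-- **Siegel's theorem** on the unit equation. -/
theorem finite_setOf_unit_add_unit_eq_one {S : Set (HeightOneSpectrum (𝓞 K))} (hS : S.Finite) :
    {p : Kˣ × Kˣ | p.1 ∈ S.unit K ∧ p.2 ∈ S.unit K ∧ (p.1 + p.2 : K) = 1}.Finite := by
  have := hS.fintype
  let Λ (p : Kˣ × Kˣ) := WithLp.toLp 1 (placeLog S p.1, placeLog S p.2)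
  set U := {p : Kˣ × Kˣ | p.1 ∈ S.unit K ∧ p.2 ∈ S.unit K ∧ (p.1 + p.2 : K) = 1}
  have hnorm {p : Kˣ × Kˣ} (h₁ : p.1 ∈ S.unit K) (h₂ : p.2 ∈ S.unit K) :
      ‖Λ p‖ = 2 * (logHeight₁ (p.1 : K) + logHeight₁ (p.2 : K)) := by
    have hΛ : ‖Λ p‖ = ‖placeLog S p.1‖ + ‖placeLog S p.2‖ := WithLp.prod_norm_eq_of_L1 _
    rw [hΛ, norm_placeLog h₁, norm_placeLog h₂, mul_add]
  have hsub (p q : Kˣ × Kˣ) (n : ℕ) : Λ q - n • Λ p = Λ (q / p ^ n) := by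
    apply (WithLp.equiv 1 _).injective
    ext : 1 <;> simp [Λ, placeLog_div_pow]
  obtain ⟨C, hC⟩ := exists_mul_logHeight_le_logHeight₁_add_logHeight₁ K
  have hbdd : Bornology.IsBounded (Λ '' U) := by
    refine isBounded_of_mul_norm_le two_ne_zero two_pos (C := 4 * C) ?_
    rintro _ ⟨p, ⟨hp₁, hp₂, hp⟩, rfl⟩ _ ⟨q, ⟨hq₁, hq₂, hq⟩, rfl⟩ k hk
    have hr₁ : (q / p ^ (2 * k)).1 ∈ S.unit K := div_mem hq₁ (pow_mem hp₁ _)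
    have hr₂ : (q / p ^ (2 * k)).2 ∈ S.unit K := div_mem hq₂ (pow_mem hp₂ _)
    rw [hsub, hnorm hp₁ hp₂, hnorm hr₁ hr₂]
    have hgap := hC p.1 p.2 q.1 q.2 p.1.ne_zero p.2.ne_zero hp hq k hk
    have h₁ := logHeight₁_apply_le (z := ![(p.1 : K), p.2, 1]) (o := 2) rfl 0
    have h₂ := logHeight₁_apply_le (z := ![(p.1 : K), p.2, 1]) (o := 2) rfl 1
    simp only [Matrix.cons_val] at h₁ h₂
    have hk_mul := mul_le_mul_of_nonneg_left (add_le_add h₁ h₂) (Nat.cast_nonneg (α := ℝ) k)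
    simp only [Prod.fst_div, Prod.snd_div, Prod.pow_fst, Prod.pow_snd, Units.val_div_eq_div_val,
      Units.val_pow_eq_pow_val] at hgap ⊢
    linarith
  obtain ⟨B, hB⟩ := isBounded_iff_forall_norm_le.mp hbdd
  refine Set.Finite.of_injOn (f := fun p ↦ (p.1 : K)) (fun p hp ↦ ?_) ?_
    (NumberField.finite_setOfPred_logHeight₁_le K B)
  · have hbound := hB _ (Set.mem_image_of_mem Λ hp)
    rw [hnorm hp.1 hp.2.1] at hbound
    change logHeight₁ (p.1 : K) ≤ B
    linarith [zero_le_logHeight₁ (p.1 : K), zero_le_logHeight₁ (p.2 : K)]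
  · rintro p ⟨-, -, hp⟩ q ⟨-, -, hq⟩ hpq
    refine Prod.ext (Units.ext hpq) (Units.ext ?_)
    dsimp only at hpq
    linear_combination hp - hq - hpq

end UnitEquation

section UnitsModPowers

theorem exists_finite_forall_eq_mul_pow (G : Type*) [CommGroup G] [Group.FG G] {n : ℕ}
    (hn : n ≠ 0) : ∃ R : Set G, R.Finite ∧ ∀ g : G, ∃ a ∈ R, ∃ s : G, g = a * s ^ n := by
  have := Subgroup.finiteIndex_range_powMonoidHom_of_fg G hn
  let H := (powMonoidHom n : G →* G).range
  refine ⟨Set.range fun c : G ⧸ H ↦ c.out, Set.finite_range _, fun g ↦ ⟨_, ⟨g, rfl⟩, ?_⟩⟩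
  obtain ⟨s, hs⟩ : (g : G ⧸ H).out⁻¹ * g ∈ H := QuotientGroup.eq.mp (QuotientGroup.out_eq' _)
  exact ⟨s, eq_mul_of_inv_mul_eq hs.symm⟩

variable {R K : Type*} [CommRing R] [IsDedekindDomain R] [Field K] [Algebra R K]
  [IsFractionRing R K]

theorem exists_units_algebraMap_eq_of_forall_valuation_eq_one {x : Kˣ}
    (hx : ∀ v : HeightOneSpectrum R, v.valuation K (x : K) = 1) :
    ∃ r : Rˣ, algebraMap R K r = x := by
  obtain ⟨a, ha⟩ := HeightOneSpectrum.mem_integers_of_valuation_le_one K (x : K) fun v ↦ (hx v).le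
  obtain ⟨b, hb⟩ := HeightOneSpectrum.mem_integers_of_valuation_le_one K ((x⁻¹ : Kˣ) : K)
    fun v ↦ by rw [Units.val_inv_eq_inv_val, map_inv₀, hx v, inv_one]
  have hab : a * b = 1 := by
    apply IsFractionRing.injective R K
    rw [map_mul, ha, hb, Units.mul_inv, map_one]
  exact ⟨Units.mkOfMulEqOne a b hab, ha⟩

theorem fg_unit [Module.Finite ℤ (Additive Rˣ)] {S : Set (HeightOneSpectrum R)} (hS : S.Finite) :
    Group.FG (S.unit K) := by
  have := hS.to_subtype
  let incl : Rˣ →* S.unit K := (S.unitEquivUnitsInteger K).symm.toMonoidHom.comp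
    (Units.map (algebraMap R (S.integer K)))
  let val : Additive (S.unit K) →ₗ[ℤ] S → ℤ := (AddMonoidHom.pi fun v ↦
    (v.1.valuationOfNeZero.comp (S.unit K).subtype).toAdditiveLeft).toIntLinearMap
  have hker : val.ker ≤ incl.toAdditive.toIntLinearMap.range := by
    intro x hx
    have hone (v : HeightOneSpectrum R) : v.valuation K (x.toMul : Kˣ) = 1 := by
      by_cases hv : v ∈ S
      · rw [← v.valuationOfNeZero_eq]
        exact congrArg ((↑) : Multiplicative ℤ → WithZero (Multiplicative ℤ)) (congrFun hx ⟨v, hv⟩)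
      · exact x.toMul.2 v hv
    obtain ⟨r, hr⟩ := exists_units_algebraMap_eq_of_forall_valuation_eq_one hone
    exact ⟨Additive.ofMul r, congrArg Additive.ofMul (Subtype.ext (Units.ext hr))⟩
  have : Module.Finite ℤ (Additive (S.unit K)) := by
    refine ⟨Submodule.fg_of_fg_map_of_fg_inf_ker val (IsNoetherian.noetherian _) ?_⟩
    rw [top_inf_eq]
    exact isNoetherian_submodule.mp inferInstance _ hker
  exact GroupFG.iff_add_fg.mpr (Module.Finite.iff_addGroup_fg.mp this)

end UnitsModPowers

section Descent

open NumberField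

section Dedekind

variable {R K : Type*} [CommRing R] [IsDedekindDomain R] [Field K] [Algebra R K]
  [IsFractionRing R K] {S : Set (HeightOneSpectrum R)}

theorem mem_unit_of_mul_mem_unit {a b : Kˣ} (ha : (a : K) ∈ S.integer K)
    (hb : (b : K) ∈ S.integer K) (hab : a * b ∈ S.unit K) : a ∈ S.unit K := by
  intro v hv
  have hmul : v.valuation K (a : K) * v.valuation K (b : K) = 1 := by
    rw [← map_mul, ← Units.val_mul]
    exact hab v hv
  exact eq_one_of_one_le_mul_left (ha v hv) (hb v hv) hmul.ge

theorem finite_setOf_valuation_ne_one (x : Kˣ) :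
    {v : HeightOneSpectrum R | v.valuation K (x : K) ≠ 1}.Finite := by
  refine ((HeightOneSpectrum.Support.finite R (x : K)).union
    (HeightOneSpectrum.Support.finite R (x : K)⁻¹)).subset fun v hv ↦ ?_
  rcases lt_or_gt_of_ne hv with hlt | hgt
  · right
    change 1 < v.valuation K (x : K)⁻¹
    rw [map_inv₀]
    exact (one_lt_inv₀ (zero_lt_iff.mpr (by simp))).mpr hlt
  · exact Or.inl hgt

theorem exists_finite_superset_subset_unit (hS : S.Finite) {U : Set Kˣ} (hU : U.Finite) :
    ∃ T ⊇ S, T.Finite ∧ U ⊆ T.unit K :=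
  ⟨S ∪ ⋃ x ∈ U, {v | v.valuation K (x : K) ≠ 1}, Set.subset_union_left,
    hS.union (hU.biUnion fun x _ ↦ finite_setOf_valuation_ne_one x),
    fun _ hx _ hv ↦ not_not.mp fun hne ↦ hv (Or.inr (Set.mem_biUnion hx hne))⟩

end Dedekind

section Extension

variable {A K B L : Type*} [CommRing A] [IsDedekindDomain A] [Field K] [Algebra A K]
  [IsFractionRing A K] [CommRing B] [IsDedekindDomain B] [Field L] [Algebra B L]
  [IsFractionRing B L] [Algebra A B] [Module.IsTorsionFree A B] [Algebra.IsIntegral A B]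
  {S : Set (HeightOneSpectrum A)}

theorem finite_setOf_under_mem (hS : S.Finite) :
    {w : HeightOneSpectrum B | w.under A ∈ S}.Finite := by
  refine hS.preimage' fun v _ ↦ ?_
  refine Set.Finite.of_injOn (f := HeightOneSpectrum.asIdeal) (fun w hw ↦ ?_)
    (fun _ _ _ _ ↦ HeightOneSpectrum.ext) (IsDedekindDomain.primesOver_finite v.asIdeal B)
  rw [← hw]
  exact ⟨w.isPrime, ⟨rfl⟩⟩

variable [Algebra K L] [Algebra A L] [IsScalarTower A K L] [IsScalarTower A B L]

theorem valuation_algebraMap_eq_pow (w : HeightOneSpectrum B) (x : K) :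
    w.valuation L (algebraMap K L x) = (w.under A).valuation K x ^
      (w.under A).asIdeal.ramificationIdx' w.asIdeal :=
  have : w.asIdeal.LiesOver (w.under A).asIdeal := ⟨rfl⟩
  ((w.under A).valuation_liesOver L w x).symm

theorem algebraMap_mem_integer {x : K} (hx : x ∈ S.integer K) :
    algebraMap K L x ∈ {w : HeightOneSpectrum B | w.under A ∈ S}.integer L := fun w hw ↦
  (valuation_algebraMap_eq_pow w x).trans_le (pow_le_one' (hx _ hw) _)

theorem map_algebraMap_mem_unit {x : Kˣ} (hx : x ∈ S.unit K) :
    Units.map (algebraMap K L) x ∈ {w : HeightOneSpectrum B | w.under A ∈ S}.unit L := fun w hw ↦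
  (valuation_algebraMap_eq_pow w (x : K)).trans (by rw [hx _ hw, one_pow])

end Extension

variable {K : Type*} [Field K] [NumberField K] {S : Set (HeightOneSpectrum (𝓞 K))}

theorem finite_setOf_sq_eq_sq_add_unit (hS : S.Finite) (c E : Kˣ) :
    {z : K | z ∈ S.integer K ∧ ∃ u ∈ S.unit K, z ^ 2 = (c : K) ^ 2 + E * u}.Finite := by
  obtain ⟨d, hd⟩ : IsUnit (2 * c : K) := (mul_ne_zero two_ne_zero c.ne_zero).isUnit
  obtain ⟨T, hST, hT, hcdE⟩ := exists_finite_superset_subset_unit hS (Set.toFinite {c, d, -E})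
  have hc : c ∈ T.unit K := hcdE (by simp)
  have hdT : d ∈ T.unit K := hcdE (by simp)
  have hE : -E ∈ T.unit K := hcdE (by simp)
  refine ((finite_setOf_unit_add_unit_eq_one hT).image fun p ↦ (d * p.1 - c : K)).subset ?_
  rintro z ⟨hz, u, hu, hzu⟩
  have hfactor : (c + z) * (c - z) = ((-E * u : Kˣ) : K) := by
    push_cast
    linear_combination -hzu
  have hne : (c + z) * (c - z) ≠ 0 := hfactor ▸ (-E * u).ne_zero
  obtain ⟨a, ha⟩ := (left_ne_zero_of_mul hne).isUnit
  obtain ⟨b, hb⟩ := (right_ne_zero_of_mul hne).isUnit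
  have hzT : z ∈ T.integer K := fun v hv ↦ hz v fun hvS ↦ hv (hST hvS)
  have huT : u ∈ T.unit K := fun v hv ↦ hu v fun hvS ↦ hv (hST hvS)
  have hcT : (c : K) ∈ T.integer K := fun v hv ↦ (hc v hv).le
  have haT : (a : K) ∈ T.integer K := ha ▸ add_mem hcT hzT
  have hbT : (b : K) ∈ T.integer K := hb ▸ sub_mem hcT hzT
  have hab : a * b = -E * u := Units.ext (by rw [Units.val_mul, ha, hb, hfactor])
  have habT : a * b ∈ T.unit K := hab ▸ mul_mem hE huT
  refine ⟨(a / d, b / d), ⟨div_mem (mem_unit_of_mul_mem_unit haT hbT habT) hdT,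
    div_mem (mem_unit_of_mul_mem_unit hbT haT (mul_comm a b ▸ habT)) hdT, ?_⟩, ?_⟩
  · simp only [Units.val_div_eq_div_val]
    rw [← add_div, div_eq_one_iff_eq d.ne_zero, ha, hb, hd]
    ring
  · simp only [Units.val_div_eq_div_val]
    rw [mul_div_cancel₀ _ d.ne_zero, ha, add_sub_cancel_left]

theorem finite_setOf_sq_eq_add_unit (hS : S.Finite) (A E : Kˣ) :
    {z : K | z ∈ S.integer K ∧ ∃ u ∈ S.unit K, z ^ 2 = (A : K) + E * u}.Finite := by
  obtain ⟨c, hc⟩ := IsAlgClosed.exists_pow_nat_eq (algebraMap K (AlgebraicClosure K) A) two_pos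
  let L := IntermediateField.adjoin K {c}
  have : FiniteDimensional K L :=
    IntermediateField.adjoin.finiteDimensional (Algebra.IsIntegral.isIntegral c)
  have : NumberField L := NumberField.of_module_finite K L
  let γ : L := ⟨c, IntermediateField.mem_adjoin_simple_self K c⟩
  have hγ : γ ^ 2 = algebraMap K L A := Subtype.ext hc
  have hγ₀ : γ ≠ 0 := ne_zero_pow two_ne_zero (hγ ▸ (map_ne_zero _).mpr A.ne_zero)
  refine Set.Finite.of_injOn (f := algebraMap K L) ?_ (algebraMap K L).injective.injOn
    (finite_setOf_sq_eq_sq_add_unit (finite_setOf_under_mem hS) (Units.mk0 γ hγ₀)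
      (Units.map (algebraMap K L) E))
  rintro z ⟨hz, u, hu, hzu⟩
  refine ⟨algebraMap_mem_integer hz, _, map_algebraMap_mem_unit hu, ?_⟩
  rw [← map_pow, hzu, Units.val_mk0, hγ, map_add, map_mul]
  rfl

end Descent

/-- for fixed `D, E ∈ K^*`, the set of principal ideals `y·R_S` with `y` an
`S`-integer such that `y² = D·u + E·v` for some `S`-units `u, v` is finite. -/
theorem finite_principal_ideals_of_unit_eq {K : Type*} [Field K] [NumberField K]
    (S : Finset (HeightOneSpectrum (NumberField.RingOfIntegers K)))
    (D E : K) (hD : D ≠ 0) (hE : E ≠ 0) :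
    {I : Ideal (sIntegers K S) | ∃ y : sIntegers K S, I = Ideal.span {y} ∧
        ∃ u v : Kˣ,
          u ∈ (S : Set (HeightOneSpectrum (NumberField.RingOfIntegers K))).unit K ∧
          v ∈ (S : Set (HeightOneSpectrum (NumberField.RingOfIntegers K))).unit K ∧
          (y : K) ^ 2 = D * u + E * v}.Finite := by
  lift D to Kˣ using hD.isUnit
  lift E to Kˣ using hE.isUnit
  have : Group.FG ((S : Set (HeightOneSpectrum (NumberField.RingOfIntegers K))).unit K) :=
    fg_unit S.finite_toSet
  obtain ⟨R, hR, hrep⟩ := exists_finite_forall_eq_mul_pow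
    ((S : Set (HeightOneSpectrum (NumberField.RingOfIntegers K))).unit K) two_ne_zero
  refine (hR.biUnion fun a _ ↦ ((finite_setOf_sq_eq_add_unit S.finite_toSet (D * a) E).preimage
    Subtype.val_injective.injOn).image fun z : sIntegers K S ↦ Ideal.span {z}).subset ?_
  rintro _ ⟨y, rfl, u, v, hu, hv, hy⟩
  obtain ⟨a, ha, s, hs⟩ := hrep ⟨u, hu⟩
  have hus : u = a * (s : Kˣ) ^ 2 := congrArg Subtype.val hs
  let t := Set.unitEquivUnitsInteger _ K s⁻¹
  refine Set.mem_biUnion ha ⟨y * t, ⟨(y * t : sIntegers K S).2, v * (s⁻¹ : Kˣ) ^ 2,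
    mul_mem hv (pow_mem (inv_mem s.2) 2), ?_⟩, Ideal.span_singleton_mul_right_unit t.isUnit y⟩
  have hyt : ((y * t : sIntegers K S) : K) = y * (s⁻¹ : Kˣ) := rfl
  rw [hyt, mul_pow, hy, hus]
  push_cast
  field_simp
end

section
/- Fix D, E ∈ K. The set of principal ideals { y·R_S : (u,v,y) ∈ R_S^* × R_S^* × R_S with y² = D²u² + D u E v + E²v² } is finite. -/
open IsDedekindDomain

set_option synthInstance.maxHeartbeats 400000

/-!
Write `s = D u / (E v)` and `z = y / (E v)`, so that `z² = s² + t s + 1`, where `t = 1` in the case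
of interest. As `(s + 1)² - z² = (2 - t) s` and `(2 z)² - (2 s + t)² = (2 - t) (2 + t)`, the
elements `2 (s + 1 - z) / (2 - t)` and `(2 z - 2 s - t) / (2 - t)` are units of an enlarged ring of
`S`-integers. Their sum is `1`, and the second one determines `z`. It remains to show that the unit
equation `p₁ + p₂ = 1` has finitely many solutions.

The integrals of `s ^ a * (1 - s) ^ b * (x - s) ^ c` between `0`, `1` and `x` give Padé
approximations to the monomials in `x` and `1 - x` with integral coefficients. For two solutions `p`
and `q`, compare `q` with the approximation at `p` by a `2 × 2` determinant, which is non-zero for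
one of two consecutive values of `a`. The product formula then shows that the logarithmic vector of
`q` is not too close to `2 N + 1` times that of `p`. An unbounded set of vectors cannot satisfy this
for all `N`, since the directions lie in a compact sphere. So the heights of the solutions are
bounded, and Northcott's theorem applies.
-/

namespace UnitEquation

section FormalIntegral

open Polynomial
open scoped Nat

variable {K : Type*} [Field K]

/-- The antiderivative of a polynomial with constant term zero; correct in characteristic zero. -/
noncomputable def antiderivative : K[X] →ₗ[K] K[X] :=
  lsum fun n => ((n : K) + 1)⁻¹ • monomial (n + 1)

/-- The formal definite integral `∫ₛᵗ f` of a polynomial over a field. -/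
noncomputable def formalIntegral (s t : K) : K[X] →ₗ[K] K :=
  (leval t - leval s) ∘ₗ antiderivative

lemma formalIntegral_apply (s t : K) (f : K[X]) :
    formalIntegral s t f = (antiderivative f).eval t - (antiderivative f).eval s := rfl

lemma formalIntegral_add_adjacent (r s t : K) (f : K[X]) :
    formalIntegral r s f + formalIntegral s t f = formalIntegral r t f := by
  simp only [formalIntegral_apply]
  ring

lemma formalIntegral_symm (s t : K) (f : K[X]) :
    formalIntegral t s f = -formalIntegral s t f := by
  simp only [formalIntegral_apply]
  ring

variable [CharZero K]

lemma derivative_antiderivative (f : K[X]) : derivative (antiderivative f) = f := by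
  induction f using Polynomial.induction_on' with
  | add p q hp hq => simp only [map_add, hp, hq]
  | monomial n a =>
    have hn : (n : K) + 1 ≠ 0 := n.cast_add_one_ne_zero
    have hmonomial : antiderivative (monomial n a) = monomial (n + 1) (((n : K) + 1)⁻¹ * a) := by
      simp [antiderivative, smul_monomial]
    rw [hmonomial, derivative_monomial, Nat.cast_succ, mul_right_comm, inv_mul_cancel₀ hn, one_mul,
      Nat.add_sub_cancel]

lemma formalIntegral_derivative (s t : K) (f : K[X]) :
    formalIntegral s t (derivative f) = f.eval t - f.eval s := by
  have hconst : derivative (antiderivative (derivative f) - f) = 0 := by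
    rw [map_sub, derivative_antiderivative, sub_self]
  have heval (r : K) := congrArg (eval r) (eq_C_of_derivative_eq_zero hconst)
  simp only [eval_sub, eval_C] at heval
  rw [formalIntegral_apply]
  linear_combination heval t - heval s

lemma formalIntegral_derivative_mul_comp (s t : K) (f l : K[X]) :
    formalIntegral s t (derivative l * f.comp l) = formalIntegral (l.eval s) (l.eval t) f := by
  have h := formalIntegral_derivative s t ((antiderivative f).comp l)
  rwa [derivative_comp, derivative_antiderivative, eval_comp, eval_comp] at h

lemma factorial_mul_formalIntegral_X_pow_mul_one_sub_X_pow (m n : ℕ) :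
    ((m + n + 1)! : K) * formalIntegral 0 1 (X ^ m * (1 - X) ^ n) = m ! * n ! := by
  induction n generalizing m with
  | zero =>
    have hderiv : derivative (X ^ (m + 1) : K[X]) = ((m : K) + 1) • X ^ m := by
      simp [smul_eq_C_mul]
    have hint := formalIntegral_derivative (0 : K) 1 (X ^ (m + 1))
    simp only [hderiv, map_smul, smul_eq_mul, eval_pow, eval_X, one_pow, zero_pow m.succ_ne_zero,
      sub_zero] at hint
    simp only [pow_zero, mul_one, add_zero, Nat.factorial_succ, Nat.factorial_zero, Nat.cast_mul,
      Nat.cast_succ]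
    linear_combination (m ! : K) * hint
  | succ n ih =>
    have hm : (m : K) + 1 ≠ 0 := m.cast_add_one_ne_zero
    have hderiv : derivative (X ^ (m + 1) * (1 - X) ^ (n + 1) : K[X]) =
        ((m : K) + 1) • (X ^ m * (1 - X) ^ (n + 1)) -
          ((n : K) + 1) • (X ^ (m + 1) * (1 - X) ^ n) := by
      simp only [derivative_mul, derivative_pow_succ, derivative_sub, derivative_X, derivative_one,
        smul_eq_C_mul, C_add, C_1, map_natCast]
      ring
    have hparts := formalIntegral_derivative (0 : K) 1 (X ^ (m + 1) * (1 - X) ^ (n + 1))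
    simp only [hderiv, map_sub, map_smul, smul_eq_mul, eval_mul, eval_pow, eval_sub, eval_X,
      eval_one, sub_self, zero_pow (Nat.succ_ne_zero _), zero_mul, mul_zero] at hparts
    have hsucc := ih (m + 1)
    rw [show m + 1 + n + 1 = m + (n + 1) + 1 by ring, Nat.factorial_succ m] at hsucc
    rw [Nat.factorial_succ n]
    apply mul_left_cancel₀ hm
    push_cast at hsucc ⊢
    linear_combination ((m + (n + 1) + 1)! : K) * hparts + ((n : K) + 1) * hsucc

end FormalIntegral

section Pade

open Polynomial
open scoped Nat

/-- The polynomial in `x` with integer coefficients which is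
`(a + b + c + 1)! / (a! b! c!) * ∫₀¹ s ^ a * (1 - s) ^ c * (1 - x * s) ^ b ds`. -/
def padeSum {A : Type*} [CommRing A] (a b c : ℕ) (x : A) : A :=
  ∑ k ∈ Finset.range (b + 1),
    (((a + b + c + 1).choose (b - k) * (a + k).choose k : ℕ) : A) * (-x) ^ k

lemma padeSum_mem {A : Type*} [CommRing A] (R : Subring A) (a b c : ℕ) {x : A} (hx : x ∈ R) :
    padeSum a b c x ∈ R :=
  sum_mem fun _ _ => mul_mem (natCast_mem R _) (pow_mem (neg_mem hx) _)

lemma factorial_mul_choose_eq {a b c k : ℕ} (hk : k ≤ b) :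
    (a + b + c + 1)! * b.choose k * ((a + k)! * c !) =
      a ! * b ! * c ! * ((a + b + c + 1).choose (b - k) * (a + k).choose k) *
        (a + k + c + 1)! := by
  have hb := Nat.choose_mul_factorial_mul_factorial hk
  have hak := Nat.choose_mul_factorial_mul_factorial (Nat.le_add_left k a)
  have habc := Nat.choose_mul_factorial_mul_factorial (n := a + b + c + 1) (k := b - k) (by lia)
  rw [Nat.add_sub_cancel] at hak
  rw [show a + b + c + 1 - (b - k) = a + k + c + 1 by lia] at habc
  rw [← hb, ← hak, ← habc]
  ring

variable {K : Type*} [Field K]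

/-- The integrand `s ^ a * (1 - s) ^ b * (x - s) ^ c`, whose integrals between the points `0`, `1`
and `x` are the Padé forms. -/
noncomputable def padeIntegrand (a b c : ℕ) (x : K) : K[X] :=
  X ^ a * (1 - X) ^ b * (C x - X) ^ c

lemma padeIntegrand_add (a b c k : ℕ) (x : K) :
    padeIntegrand (a + k) b c x = padeIntegrand a b c x * X ^ k := by
  simp only [padeIntegrand]
  ring

lemma derivative_padeIntegrand_succ (a b c : ℕ) (x : K) :
    derivative (padeIntegrand (a + 1) (b + 1) (c + 1) x) =
      ((a + b + c + 3 : ℕ) : K) • padeIntegrand (a + 2) b c x -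
        ((a + 1) * (1 + x) + (b + 1) * x + (c + 1)) • padeIntegrand (a + 1) b c x +
        ((a + 1) * x) • padeIntegrand a b c x := by
  simp only [padeIntegrand, derivative_mul, derivative_pow_succ,
    derivative_sub, derivative_X, derivative_one, derivative_C, smul_eq_C_mul, C_add, C_mul, C_1,
    map_natCast]
  push_cast
  ring

variable [CharZero K]

lemma factorial_mul_formalIntegral_eq_padeSum (a b c : ℕ) (x : K) :
    ((a + b + c + 1)! : K) * formalIntegral 0 1 (X ^ a * (1 - X) ^ c * (1 - C x * X) ^ b) =
      (a ! * b ! * c ! : ℕ) * padeSum a b c x := by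
  have hexpand : (X ^ a * (1 - X) ^ c * (1 - C x * X) ^ b : K[X]) =
      ∑ k ∈ Finset.range (b + 1), ((b.choose k : K) * (-x) ^ k) • (X ^ (a + k) * (1 - X) ^ c) := by
    rw [show (1 - C x * X : K[X]) = C (-x) * X + 1 by rw [C_neg]; ring, add_pow, Finset.mul_sum]
    refine Finset.sum_congr rfl fun k _ => ?_
    simp only [smul_eq_C_mul, map_mul, map_natCast, map_pow, one_pow, mul_one]
    ring
  rw [hexpand, map_sum, padeSum, Finset.mul_sum, Finset.mul_sum]
  refine Finset.sum_congr rfl fun k hk => ?_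
  have hbeta := factorial_mul_formalIntegral_X_pow_mul_one_sub_X_pow (K := K) (a + k) c
  have hchoose := congrArg (Nat.cast (R := K))
    (factorial_mul_choose_eq (a := a) (c := c) (Finset.mem_range_succ_iff.mp hk))
  have hne : ((a + k + c + 1)! : K) ≠ 0 := Nat.cast_ne_zero.mpr (Nat.factorial_ne_zero _)
  apply mul_left_cancel₀ hne
  rw [map_smul, smul_eq_mul]
  push_cast at hchoose ⊢
  linear_combination ((a + b + c + 1)! : K) * b.choose k * (-x) ^ k * hbeta + (-x) ^ k * hchoose

lemma factorial_mul_formalIntegral_zero_one_padeIntegrand (a b c : ℕ) {x : K} (hx : x ≠ 0) :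
    ((a + b + c + 1)! : K) * formalIntegral 0 1 (padeIntegrand a b c x) =
      (a ! * b ! * c ! : ℕ) * (x ^ c * padeSum a c b x⁻¹) := by
  have hscale : padeIntegrand a b c x =
      x ^ c • (X ^ a * (1 - X) ^ b * (1 - C x⁻¹ * X) ^ c) := by
    have hC : (C x * C x⁻¹ : K[X]) = 1 := by rw [← C_mul, mul_inv_cancel₀ hx, C_1]
    rw [padeIntegrand, show (C x - X : K[X]) = C x * (1 - C x⁻¹ * X) by linear_combination X * hC,
      mul_pow, smul_eq_C_mul, C_pow]
    ring
  have hint := factorial_mul_formalIntegral_eq_padeSum a c b x⁻¹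
  rw [add_right_comm a c b] at hint
  rw [hscale, map_smul, smul_eq_mul]
  push_cast at hint ⊢
  linear_combination x ^ c * hint

lemma factorial_mul_formalIntegral_zero_self_padeIntegrand (a b c : ℕ) (x : K) :
    ((a + b + c + 1)! : K) * formalIntegral 0 x (padeIntegrand a b c x) =
      (a ! * b ! * c ! : ℕ) * (x ^ (a + c + 1) * padeSum a b c x) := by
  have hsubst := formalIntegral_derivative_mul_comp 0 1 (padeIntegrand a b c x) (C x * X)
  have hscale : derivative (C x * X) * (padeIntegrand a b c x).comp (C x * X) =
      x ^ (a + c + 1) • (X ^ a * (1 - X) ^ c * (1 - C x * X) ^ b) := by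
    simp only [padeIntegrand, derivative_C_mul, derivative_X, mul_comp, pow_comp, sub_comp, X_comp,
      one_comp, C_comp, smul_eq_C_mul, C_pow]
    rw [show (C x - C x * X : K[X]) = C x * (1 - X) by ring, mul_pow, mul_pow]
    ring
  simp only [hscale, map_smul, smul_eq_mul, eval_mul, eval_C, eval_X, mul_zero, mul_one] at hsubst
  rw [← hsubst]
  linear_combination x ^ (a + c + 1) * factorial_mul_formalIntegral_eq_padeSum a b c x

lemma formalIntegral_self_one_padeIntegrand (a b c : ℕ) (x : K) :
    formalIntegral x 1 (padeIntegrand a b c x) =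
      (-1) ^ c * formalIntegral 0 (1 - x) (padeIntegrand b a c (1 - x)) := by
  have hsubst := formalIntegral_derivative_mul_comp 0 (1 - x) (padeIntegrand a b c x) (1 - X)
  have hreflect : derivative (1 - X) * (padeIntegrand a b c x).comp (1 - X) =
      (-(-1) ^ c : K) • padeIntegrand b a c (1 - x) := by
    simp only [padeIntegrand, derivative_sub, derivative_one, derivative_X, mul_comp, pow_comp,
      sub_comp, X_comp, one_comp, C_comp, smul_eq_C_mul, C_neg, C_pow, C_1, C_sub]
    rw [show (C x - (1 - X) : K[X]) = -1 * (1 - C x - X) by ring, mul_pow]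
    ring
  rw [hreflect, map_smul, smul_eq_mul, eval_sub, eval_sub, eval_one, eval_one, eval_X, eval_X,
    sub_zero, sub_sub_cancel, formalIntegral_symm x 1] at hsubst
  linear_combination hsubst

lemma padeSum_three_term (a b c : ℕ) {x : K} (hx : x ≠ 0) :
    x ^ (a + c + 1) * padeSum a b c x +
        (1 - x) ^ (b + c + 1) * ((-1) ^ c * padeSum b a c (1 - x)) =
      x ^ c * padeSum a c b x⁻¹ := by
  have hne : ((a ! * b ! * c ! : ℕ) : K) ≠ 0 := by
    exact_mod_cast by positivity
  apply mul_left_cancel₀ hne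
  have hreflect := factorial_mul_formalIntegral_zero_self_padeIntegrand b a c (1 - x)
  rw [add_comm b a, mul_comm b !] at hreflect
  rw [← factorial_mul_formalIntegral_zero_one_padeIntegrand a b c hx,
    ← formalIntegral_add_adjacent 0 x 1, formalIntegral_self_one_padeIntegrand]
  linear_combination -factorial_mul_formalIntegral_zero_self_padeIntegrand a b c x
    - (-1) ^ c * hreflect

lemma map_padeIntegrand_mul_eq_zero {a b c : ℕ} {x : K} {L : K[X] →ₗ[K] K}
    (hL : ∀ f : K[X], f.eval 0 = 0 → f.eval 1 = 0 → f.eval x = 0 → L (derivative f) = 0)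
    (h₀ : L (padeIntegrand a b c x) = 0) (h₁ : L (padeIntegrand (a + 1) b c x) = 0) (g : K[X]) :
    L (padeIntegrand a b c x * g) = 0 := by
  have hpow (k : ℕ) : L (padeIntegrand (a + k) b c x) = 0 := by
    induction k using Nat.twoStepInduction with
    | zero => exact h₀
    | one => exact h₁
    | more k ih₀ ih₁ =>
      have hne : ((a + k + b + c + 3 : ℕ) : K) ≠ 0 := Nat.cast_ne_zero.mpr (by lia)
      have hrec := hL (padeIntegrand (a + k + 1) (b + 1) (c + 1) x) (by simp [padeIntegrand])
        (by simp [padeIntegrand]) (by simp [padeIntegrand])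
      rw [derivative_padeIntegrand_succ, map_add, map_sub, map_smul, map_smul, map_smul, ih₀,
        add_assoc a k 1, ih₁, smul_zero, smul_zero, sub_zero, add_zero] at hrec
      exact (smul_eq_zero.mp hrec).resolve_left hne
  induction g using Polynomial.induction_on' with
  | add p q hp hq => rw [mul_add, map_add, hp, hq, add_zero]
  | monomial n r =>
    rw [← C_mul_X_pow_eq_monomial, mul_left_comm, ← smul_eq_C_mul, map_smul, ← padeIntegrand_add,
      hpow, smul_zero]

-- With `U = X * (x - X) / (x - 1)` and `M` large, take the antiderivative `1 - (1 - U ^ M) ^ M`.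
lemma exists_formalIntegral_padeIntegrand_mul (a b c : ℕ) {x : K} (hx : x ≠ 1) :
    ∃ g : K[X], formalIntegral 0 x (padeIntegrand a b c x * g) = 0 ∧
      formalIntegral 0 1 (padeIntegrand a b c x * g) = 1 := by
  set m := a + b + c
  set U : K[X] := C (x - 1)⁻¹ * (X * (C x - X)) with hU
  have hU₀ : U.eval 0 = 0 := by simp [hU]
  have hUx : U.eval x = 0 := by simp [hU]
  have hU₁ : U.eval 1 = 1 := by simp [hU, inv_mul_cancel₀ (sub_ne_zero.mpr hx)]
  have hdvdU : X ^ a * (C x - X) ^ c ∣ U ^ m := by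
    rw [hU, mul_pow, mul_pow]
    exact dvd_mul_of_dvd_right
      (mul_dvd_mul (pow_dvd_pow _ (by lia)) (pow_dvd_pow _ (by lia))) _
  have hdvd_one_sub : (1 - X) ^ b ∣ (1 - U ^ (m + 1)) ^ m := by
    have hroot : X - C 1 ∣ 1 - U ^ (m + 1) := dvd_iff_isRoot.mpr (by simp [hU₁])
    rw [C_1, ← neg_sub, neg_dvd] at hroot
    exact (pow_dvd_pow_of_dvd hroot b).trans (pow_dvd_pow _ (by lia))
  have hdvd : padeIntegrand a b c x ∣ derivative (1 - (1 - U ^ (m + 1)) ^ (m + 1)) := by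
    obtain ⟨g, hg⟩ := mul_dvd_mul hdvdU hdvd_one_sub
    refine ⟨((m + 1 : ℕ) : K[X]) ^ 2 * derivative U * g, ?_⟩
    clear_value U m
    simp only [derivative_sub, derivative_one, derivative_pow_succ, padeIntegrand, C_add, C_1,
      map_natCast]
    push_cast
    linear_combination ((m : K[X]) + 1) ^ 2 * derivative U * hg
  obtain ⟨g, hg⟩ := hdvd
  refine ⟨g, ?_, ?_⟩ <;> rw [← hg, formalIntegral_derivative] <;> simp [hU₀, hUx, hU₁]

lemma formalIntegral_padeIntegrand_ne_or_ne (a b c : ℕ) {x y : K} (hx : x ≠ 1) (hy : y ≠ 0) :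
    formalIntegral 0 x (padeIntegrand a b c x) ≠ y * formalIntegral 0 1 (padeIntegrand a b c x) ∨
      formalIntegral 0 x (padeIntegrand (a + 1) b c x) ≠
        y * formalIntegral 0 1 (padeIntegrand (a + 1) b c x) := by
  by_contra! h
  obtain ⟨g, hgx, hg₁⟩ := exists_formalIntegral_padeIntegrand_mul a b c hx
  have hg := map_padeIntegrand_mul_eq_zero (a := a) (b := b) (c := c) (x := x)
    (L := formalIntegral 0 x - y • formalIntegral 0 1)
    (fun f hf₀ hf₁ hfx => by simp [formalIntegral_derivative, hf₀, hf₁, hfx])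
    (by simp [h.1]) (by simp [h.2]) g
  simp [hgx, hg₁, hy] at hg

end Pade

section GapPrinciple

open Filter NormedSpace

variable {V : Type*} [NormedAddCommGroup V] [NormedSpace ℝ V]

lemma norm_sub_smul_le {x y : V} {r : ℝ} (hr : r * ‖x‖ ≤ ‖y‖) :
    ‖y - r • x‖ ≤ ‖y‖ * ‖normalize y - normalize x‖ + (‖y‖ - r * ‖x‖) := by
  have hdecomp : y - r • x =
      ‖y‖ • (normalize y - normalize x) + (‖y‖ - r * ‖x‖) • normalize x := by
    rw [smul_sub, sub_smul, mul_smul, norm_smul_normalize, norm_smul_normalize]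
    abel
  have hunit : ‖normalize x‖ ≤ 1 := by
    rcases eq_or_ne x 0 with rfl | hx
    · simp
    · exact (norm_normalize hx).le
  rw [hdecomp]
  refine (norm_add_le _ _).trans (add_le_add ?_ ?_)
  · rw [norm_smul, norm_norm]
  · rw [norm_smul, Real.norm_of_nonneg (sub_nonneg.mpr hr)]
    exact mul_le_of_le_one_right (sub_nonneg.mpr hr) hunit

lemma exists_norm_gap_of_not_isBounded [ProperSpace V] {s : Set V} (hs : ¬Bornology.IsBounded s)
    {δ : ℝ} (hδ : 0 < δ) (r : ℝ) :
    ∃ x ∈ s, ∃ y ∈ s, r < ‖x‖ ∧ r * ‖x‖ < ‖y‖ ∧ ‖normalize y - normalize x‖ < δ := by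
  have : (Bornology.cobounded V ⊓ 𝓟 s).NeBot := frequently_mem_iff_neBot.mp hs
  have hlarge (B : ℝ) : ∀ᶠ x in Bornology.cobounded V ⊓ 𝓟 s, x ∈ s ∧ B < ‖x‖ :=
    (eventually_inf_principal.mpr (Eventually.of_forall fun _ h => h)).and
      (tendsto_norm_cobounded_atTop.eventually_gt_atTop B |>.filter_mono inf_le_left)
  have hsphere : ∀ᶠ x in Bornology.cobounded V ⊓ 𝓟 s,
      NormedSpace.normalize x ∈ Metric.sphere (0 : V) 1 :=
    (hlarge 0).mono fun x hx =>
      mem_sphere_zero_iff_norm.mpr (norm_normalize (norm_pos_iff.mp hx.2))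
  obtain ⟨e, -, he⟩ := (isCompact_sphere (0 : V) 1).exists_mapClusterPt_of_frequently
    hsphere.frequently
  have hnear := he.frequently (Metric.ball_mem_nhds e (half_pos hδ))
  obtain ⟨x, hxe, hxs, hx⟩ := (hnear.and_eventually (hlarge r)).exists
  obtain ⟨y, hye, hys, hy⟩ := (hnear.and_eventually (hlarge (r * ‖x‖))).exists
  refine ⟨x, hxs, y, hys, hx, hy, ?_⟩
  rw [← dist_eq_norm]
  linarith [dist_triangle_right (normalize y) (normalize x) e, Metric.mem_ball.mp hxe,
    Metric.mem_ball.mp hye]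

lemma exists_nat_odd_mul_le_lt {x y : ℝ} (hx : 0 < x) (hxy : x ≤ y) :
    ∃ N : ℕ, (2 * N + 1) * x ≤ y ∧ y < (2 * N + 3) * x := by
  have hquot : 1 ≤ y / x := (one_le_div hx).mpr hxy
  refine ⟨⌊(y / x - 1) / 2⌋₊, (le_div_iff₀ hx).mp ?_, (div_lt_iff₀ hx).mp ?_⟩
  · linarith [Nat.floor_le (a := (y / x - 1) / 2) (by linarith)]
  · linarith [Nat.lt_floor_add_one ((y / x - 1) / 2)]

/-- An unbounded set would contain long vectors `x` and `y` of almost the same direction with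
`‖y‖ / ‖x‖` as large as we please, and `y` would be too close to an odd multiple of `x`. -/
lemma isBounded_of_gap [ProperSpace V] {s : Set V} {C : ℝ}
    (hs : ∀ x ∈ s, ∀ y ∈ s, ∀ N : ℕ,
      N * ‖x‖ ≤ C * (N + 1 + ‖y - (2 * N + 1 : ℝ) • x‖ + ‖x‖)) :
    Bornology.IsBounded s := by
  by_contra hunbounded
  obtain ⟨z, hz⟩ : s.Nonempty := by
    by_contra! h
    exact hunbounded (h ▸ Bornology.isBounded_empty)
  have hC : 0 ≤ C := by
    have h := hs z hz z hz 0
    rw [Nat.cast_zero, zero_mul] at h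
    exact nonneg_of_mul_nonneg_left h (by positivity)
  obtain ⟨x, hxs, y, hys, hx, hxy, hdir⟩ := exists_norm_gap_of_not_isBounded hunbounded
    (δ := 1 / (8 * (C + 1))) (by positivity) (12 * C + 8)
  have hx₀ : 0 < ‖x‖ := by linarith
  obtain ⟨N, hle, hlt⟩ := exists_nat_odd_mul_le_lt hx₀ (y := ‖y‖) (by nlinarith)
  have hN : 12 * C + 5 < 2 * N := by
    have h := lt_of_mul_lt_mul_right (hxy.trans hlt) hx₀.le
    linarith
  have hCδ : C * ‖normalize y - normalize x‖ ≤ 1 / 8 := by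
    rw [lt_div_iff₀ (by positivity)] at hdir
    nlinarith [norm_nonneg (normalize y - normalize x)]
  have hclose : C * ‖y - (2 * N + 1 : ℝ) • x‖ ≤ (2 * N + 3) * ‖x‖ * (1 / 8) + C * (2 * ‖x‖) :=
    calc C * ‖y - (2 * N + 1 : ℝ) • x‖
        ≤ C * (‖y‖ * ‖normalize y - normalize x‖ + (‖y‖ - (2 * N + 1) * ‖x‖)) := by
          gcongr
          exact norm_sub_smul_le hle
      _ = ‖y‖ * (C * ‖normalize y - normalize x‖) + C * (‖y‖ - (2 * N + 1) * ‖x‖) := by ring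
      _ ≤ (2 * N + 3) * ‖x‖ * (1 / 8) + C * (2 * ‖x‖) := by
          gcongr
          linarith
  have hgap := hs x hxs y hys N
  have hxN : (N + 1) * (12 * C) ≤ (N + 1) * ‖x‖ := by
    gcongr
    linarith
  nlinarith [mul_lt_mul_of_pos_right hN hx₀]

end GapPrinciple

section PadeDeterminant

variable {K : Type*} [Field K]

lemma abv_padeSum_le (v : AbsoluteValue K ℝ) (a b c : ℕ) (x : K) :
    v (padeSum a b c x) ≤ 2 ^ (3 * (a + b + c) + 1) * max 1 (v x) ^ b := by
  have hterm (k : ℕ) (hk : k ∈ Finset.range (b + 1)) :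
      v ((((a + b + c + 1).choose (b - k) * (a + k).choose k : ℕ) : K) * (-x) ^ k) ≤
        2 ^ (a + b + c + 1) * 2 ^ (a + b) * max 1 (v x) ^ b := by
    have hkb := Finset.mem_range_succ_iff.mp hk
    have hchoose : (a + b + c + 1).choose (b - k) * (a + k).choose k ≤
        2 ^ (a + b + c + 1) * 2 ^ (a + b) :=
      Nat.mul_le_mul (Nat.choose_le_two_pow _ _)
        ((Nat.choose_le_two_pow _ _).trans (Nat.pow_le_pow_right two_pos (by lia)))
    rw [map_mul, map_pow, v.map_neg]
    refine mul_le_mul ((v.apply_nat_le_self _).trans (by exact_mod_cast hchoose)) ?_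
      (by positivity) (by positivity)
    exact (pow_le_pow_left₀ (v.nonneg x) (le_max_right _ _) k).trans
      (pow_le_pow_right₀ (le_max_left _ _) hkb)
  have hb : ((b + 1 : ℕ) : ℝ) ≤ 2 ^ b := by exact_mod_cast Nat.lt_two_pow_self
  calc v (padeSum a b c x)
      ≤ ∑ k ∈ Finset.range (b + 1), 2 ^ (a + b + c + 1) * 2 ^ (a + b) * max 1 (v x) ^ b :=
        (v.sum_le _ _).trans (Finset.sum_le_sum hterm)
    _ = (b + 1 : ℕ) * (2 ^ (a + b + c + 1) * 2 ^ (a + b)) * max 1 (v x) ^ b := by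
        rw [Finset.sum_const, Finset.card_range, nsmul_eq_mul, ← mul_assoc]
    _ ≤ 2 ^ b * (2 ^ (a + b + c + 1) * 2 ^ (a + b)) * max 1 (v x) ^ b := by gcongr
    _ = 2 ^ (a + a + b + b + b + c + 1) * max 1 (v x) ^ b := by ring
    _ ≤ 2 ^ (3 * (a + b + c) + 1) * max 1 (v x) ^ b := by
        gcongr
        · exact one_le_two
        · lia

lemma abv_pow_mul_padeSum_inv_le (v : AbsoluteValue K ℝ) (a b c : ℕ) {x : K} (hx : x ≠ 0) :
    v (x ^ b * padeSum a b c x⁻¹) ≤ 2 ^ (3 * (a + b + c) + 1) * max 1 (v x) ^ b := by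
  have hvx := v.pos hx
  calc v (x ^ b * padeSum a b c x⁻¹)
      ≤ v x ^ b * (2 ^ (3 * (a + b + c) + 1) * max 1 (v x⁻¹) ^ b) := by
        rw [map_mul, map_pow]
        gcongr
        exact abv_padeSum_le v a b c x⁻¹
    _ = 2 ^ (3 * (a + b + c) + 1) * (v x * max 1 (v x)⁻¹) ^ b := by rw [map_inv₀]; ring
    _ = 2 ^ (3 * (a + b + c) + 1) * max 1 (v x) ^ b := by
        rw [mul_max_of_nonneg _ _ hvx.le, mul_one, mul_inv_cancel₀ hvx.ne', max_comm]

/-- The factor at `v` of the height of the projective point `(1 : p.1 : p.2)`. -/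
def localHeight (v : AbsoluteValue K ℝ) (p : Kˣ × Kˣ) : ℝ :=
  max 1 (max (v p.1) (v p.2))

lemma one_le_localHeight (v : AbsoluteValue K ℝ) (p : Kˣ × Kˣ) : 1 ≤ localHeight v p :=
  le_max_left _ _

lemma abv_fst_le_localHeight (v : AbsoluteValue K ℝ) (p : Kˣ × Kˣ) : v p.1 ≤ localHeight v p :=
  (le_max_left _ _).trans (le_max_right _ _)

lemma abv_snd_le_localHeight (v : AbsoluteValue K ℝ) (p : Kˣ × Kˣ) : v p.2 ≤ localHeight v p :=
  (le_max_right _ _).trans (le_max_right _ _)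

-- Cramer's rule: the determinant times `u.1` is `w₂ - z.2 * w₃`, and times `u.2` it is
-- `z.1 * w₃ - w₁`.
lemma abv_det_mul_localHeight_le (v : AbsoluteValue K ℝ) {z u : Kˣ × Kˣ} {w₁ w₂ w₃ : K} {W : ℝ}
    (hz : (z.1 * u.1 + z.2 * u.2 : K) = 1) (hw : u.1 * w₁ + u.2 * w₂ = w₃)
    (h₁ : v w₁ ≤ W) (h₂ : v w₂ ≤ W) (h₃ : v w₃ ≤ W) :
    v (z.1 * w₂ - z.2 * w₁) * localHeight v u ≤ 2 * (localHeight v z * W) := by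
  have hone : v 1 ≤ localHeight v z := v.map_one.trans_le (one_le_localHeight v z)
  have hfst := abv_fst_le_localHeight v z
  have hsnd := abv_snd_le_localHeight v z
  have hsub {p q r s : K} (hp : v p ≤ localHeight v z) (hq : v q ≤ W)
      (hr : v r ≤ localHeight v z) (hs : v s ≤ W) :
      v (p * q - r * s) ≤ 2 * (localHeight v z * W) := by
    have hpq := mul_le_mul hp hq (v.nonneg _) ((v.nonneg p).trans hp)
    have hrs := mul_le_mul hr hs (v.nonneg _) ((v.nonneg r).trans hr)
    rw [← map_mul] at hpq hrs
    linarith [v.sub_le_add (p * q) (r * s)]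
  rw [localHeight, mul_max_of_nonneg _ _ (v.nonneg _), mul_max_of_nonneg _ _ (v.nonneg _), mul_one,
    ← map_mul, ← map_mul,
    show (z.1 * w₂ - z.2 * w₁) * u.1 = 1 * w₂ - z.2 * w₃ by
      linear_combination w₂ * hz - z.2 * hw,
    show (z.1 * w₂ - z.2 * w₁) * u.2 = z.1 * w₃ - 1 * w₁ by
      linear_combination z.1 * hw - w₁ * hz]
  exact max_le (hsub hfst h₂ hsnd h₁) (max_le (hsub hone h₂ hsnd h₃) (hsub hfst h₃ hone h₁))

/-- The monomials multiplying the Padé polynomials in `padeSum_three_term`. -/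
def padePower (a b c : ℕ) (p : Kˣ × Kˣ) : Kˣ × Kˣ :=
  (p.1 ^ (a + c + 1), p.2 ^ (b + c + 1))

lemma localHeight_pow_le_localHeight_padePower (v : AbsoluteValue K ℝ) {a b c m : ℕ}
    (ha : m ≤ a + c + 1) (hb : m ≤ b + c + 1) (p : Kˣ × Kˣ) :
    localHeight v p ^ m ≤ localHeight v (padePower a b c p) := by
  have hT := one_le_localHeight v p
  obtain h | h | h : localHeight v p = 1 ∨ localHeight v p = v p.1 ∨ localHeight v p = v p.2 :=
    (max_choice _ _).imp_right fun h => (max_choice _ _).imp h.trans h.trans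
  · rw [h, one_pow]
    exact one_le_localHeight v _
  · calc localHeight v p ^ m ≤ localHeight v p ^ (a + c + 1) := pow_le_pow_right₀ hT ha
      _ = v (padePower a b c p).1 := by rw [h, padePower, Units.val_pow_eq_pow_val, map_pow]
      _ ≤ localHeight v (padePower a b c p) := abv_fst_le_localHeight v _
  · calc localHeight v p ^ m ≤ localHeight v p ^ (b + c + 1) := pow_le_pow_right₀ hT hb
      _ = v (padePower a b c p).2 := by rw [h, padePower, Units.val_pow_eq_pow_val, map_pow]
      _ ≤ localHeight v (padePower a b c p) := abv_snd_le_localHeight v _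

/-- The determinant comparing a solution `q` of the unit equation with the approximate solution
given by the Padé polynomials at `p`, after dividing `q` by the monomials of the latter. -/
def padeDet (a b c : ℕ) (p q : Kˣ × Kˣ) : K :=
  (q / padePower a b c p).1 * ((-1) ^ c * padeSum b a c (p.2 : K)) -
    (q / padePower a b c p).2 * padeSum a b c (p.1 : K)

lemma mem_units_iff {R : Subring K} {u : Kˣ} :
    u ∈ R.toSubmonoid.units ↔ (u : K) ∈ R ∧ ((u⁻¹ : Kˣ) : K) ∈ R :=
  Submonoid.mem_units_iff _ _

lemma padeDet_mem {R : Subring K} (a b c : ℕ) {p q : Kˣ × Kˣ} (hp₁ : p.1 ∈ R.toSubmonoid.units)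
    (hp₂ : p.2 ∈ R.toSubmonoid.units) (hq₁ : q.1 ∈ R.toSubmonoid.units)
    (hq₂ : q.2 ∈ R.toSubmonoid.units) : padeDet a b c p q ∈ R :=
  sub_mem
    (mul_mem (mem_units_iff.mp (div_mem hq₁ (pow_mem hp₁ _))).1
      (mul_mem (pow_mem (neg_mem R.one_mem) _)
        (padeSum_mem R _ _ _ (mem_units_iff.mp hp₂).1)))
    (mul_mem (mem_units_iff.mp (div_mem hq₂ (pow_mem hp₂ _))).1
      (padeSum_mem R _ _ _ (mem_units_iff.mp hp₁).1))

lemma div_padePower_mul_padePower (a b c : ℕ) (p : Kˣ × Kˣ) {q : Kˣ × Kˣ}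
    (hq : (q.1 + q.2 : K) = 1) :
    ((q / padePower a b c p).1 * (padePower a b c p).1 +
      (q / padePower a b c p).2 * (padePower a b c p).2 : K) = 1 := by
  rw [← hq, ← Units.val_mul, ← Units.val_mul, ← Prod.fst_mul, ← Prod.snd_mul, div_mul_cancel]

variable [CharZero K]

lemma padePower_three_term (a b c : ℕ) {p : Kˣ × Kˣ} (hp : (p.1 + p.2 : K) = 1) :
    ((padePower a b c p).1 * padeSum a b c (p.1 : K) +
      (padePower a b c p).2 * ((-1) ^ c * padeSum b a c (p.2 : K)) : K) =
      p.1 ^ c * padeSum a c b (p.1 : K)⁻¹ := by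
  rw [← padeSum_three_term a b c p.1.ne_zero, ← eq_sub_of_add_eq' hp]
  simp only [padePower, Units.val_pow_eq_pow_val]

lemma abv_padeDet_mul_localHeight_pow_le (v : AbsoluteValue K ℝ) {a b c m n : ℕ} {p q : Kˣ × Kˣ}
    (hp : (p.1 + p.2 : K) = 1) (hq : (q.1 + q.2 : K) = 1) (hma : m ≤ a + c + 1)
    (hmb : m ≤ b + c + 1) (ha : a ≤ n) (hb : b ≤ n) (hc : c ≤ n) :
    v (padeDet a b c p q) * localHeight v p ^ m ≤
      2 * (localHeight v (q / padePower a b c p) *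
        (2 ^ (3 * (a + b + c) + 1) * localHeight v p ^ n)) := by
  have hT := one_le_localHeight v p
  have hbound {t : ℝ} {k : ℕ} (ht : t ≤ localHeight v p) (hk : k ≤ n) :
      2 ^ (3 * (a + b + c) + 1) * max 1 t ^ k ≤
        2 ^ (3 * (a + b + c) + 1) * localHeight v p ^ n := by
    gcongr
    exact (pow_le_pow_left₀ (by positivity) (max_le hT ht) k).trans (pow_le_pow_right₀ hT hk)
  have hfst := (abv_padeSum_le v a b c p.1).trans (hbound (abv_fst_le_localHeight v p) hb)
  have hsnd : v ((-1) ^ c * padeSum b a c (p.2 : K)) ≤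
      2 ^ (3 * (a + b + c) + 1) * localHeight v p ^ n := by
    rw [map_mul, map_pow, v.map_neg, map_one, one_pow, one_mul]
    refine (abv_padeSum_le v b a c p.2).trans ?_
    rw [add_comm b a]
    exact hbound (abv_snd_le_localHeight v p) ha
  have hthird : v (p.1 ^ c * padeSum a c b (p.1 : K)⁻¹) ≤
      2 ^ (3 * (a + b + c) + 1) * localHeight v p ^ n := by
    refine (abv_pow_mul_padeSum_inv_le v a c b p.1.ne_zero).trans ?_
    rw [add_right_comm a c b]
    exact hbound (abv_fst_le_localHeight v p) hc
  calc v (padeDet a b c p q) * localHeight v p ^ m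
      ≤ v (padeDet a b c p q) * localHeight v (padePower a b c p) := by
        gcongr
        exact localHeight_pow_le_localHeight_padePower v hma hmb p
    _ ≤ _ := abv_det_mul_localHeight_le v (div_padePower_mul_padePower a b c p hq)
        (padePower_three_term a b c hp) hfst hsnd hthird

lemma formalIntegral_eq_of_padeDet_eq_zero {a b c : ℕ} {p q : Kˣ × Kˣ}
    (hp : (p.1 + p.2 : K) = 1) (hq : (q.1 + q.2 : K) = 1) (h : padeDet a b c p q = 0) :
    formalIntegral 0 (p.1 : K) (padeIntegrand a b c (p.1 : K)) =
      q.1 * formalIntegral 0 1 (padeIntegrand a b c (p.1 : K)) := by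
  have hcramer : padeSum a b c (p.1 : K) =
      (q / padePower a b c p).1 * (p.1 ^ c * padeSum a c b (p.1 : K)⁻¹) := by
    rw [padeDet] at h
    linear_combination (q / padePower a b c p).1 * padePower_three_term a b c hp
      - padeSum a b c (p.1 : K) * div_padePower_mul_padePower a b c p hq - (padePower a b c p).2 * h
  have hproportional : p.1 ^ (a + c + 1) * padeSum a b c (p.1 : K) =
      q.1 * (p.1 ^ c * padeSum a c b (p.1 : K)⁻¹) := by
    rw [hcramer, ← mul_assoc, ← Units.val_pow_eq_pow_val, ← Units.val_mul]
    exact congrArg (fun t : Kˣ => t * (p.1 ^ c * padeSum a c b (p.1 : K)⁻¹))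
      (mul_div_cancel (p.1 ^ (a + c + 1)) q.1)
  apply mul_left_cancel₀ (Nat.cast_ne_zero (R := K).mpr (a + b + c + 1).factorial_ne_zero)
  rw [mul_left_comm, factorial_mul_formalIntegral_zero_self_padeIntegrand,
    factorial_mul_formalIntegral_zero_one_padeIntegrand a b c p.1.ne_zero, hproportional,
    mul_left_comm]

lemma padeDet_ne_zero_or (a b c : ℕ) {p q : Kˣ × Kˣ} (hp : (p.1 + p.2 : K) = 1)
    (hq : (q.1 + q.2 : K) = 1) : padeDet a b c p q ≠ 0 ∨ padeDet (a + 1) b c p q ≠ 0 := by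
  have hp₁ : (p.1 : K) ≠ 1 := fun h => p.2.ne_zero (by rw [h] at hp; exact add_eq_left.mp hp)
  exact (formalIntegral_padeIntegrand_ne_or_ne a b c hp₁ q.1.ne_zero).imp
    (mt (formalIntegral_eq_of_padeDet_eq_zero hp hq))
    (mt (formalIntegral_eq_of_padeDet_eq_zero hp hq))

end PadeDeterminant

section UnitEquation

variable {K ι : Type*} [Field K]

/-- The solutions of the unit equation `x + y = 1` in units of a subring of a field. -/
def unitSolutions (R : Subring K) : Set (Kˣ × Kˣ) :=
  {p | p.1 ∈ R.toSubmonoid.units ∧ p.2 ∈ R.toSubmonoid.units ∧ (p.1 + p.2 : K) = 1}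

/-- The logarithms of the absolute values of both coordinates. -/
noncomputable def logEmbedding (v : ι → AbsoluteValue K ℝ) (p : Kˣ × Kˣ) : ι → ℝ × ℝ :=
  fun i => (Real.log (v i p.1), Real.log (v i p.2))

lemma log_localHeight_le (v : AbsoluteValue K ℝ) {p : Kˣ × Kˣ} {B : ℝ} (hB : 0 ≤ B)
    (h₁ : Real.log (v p.1) ≤ B) (h₂ : Real.log (v p.2) ≤ B) :
    Real.log (localHeight v p) ≤ B := by
  rw [Real.log_le_iff_le_exp (one_pos.trans_le (one_le_localHeight v p))]
  exact max_le (Real.one_le_exp hB) (max_le ((Real.log_le_iff_le_exp (v.pos p.1.ne_zero)).mp h₁)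
    ((Real.log_le_iff_le_exp (v.pos p.2.ne_zero)).mp h₂))

variable [Fintype ι]

lemma norm_log_abv_le_norm_logEmbedding (v : ι → AbsoluteValue K ℝ) (p : Kˣ × Kˣ) (i : ι) :
    ‖Real.log (v i p.1)‖ ≤ ‖logEmbedding v p‖ ∧ ‖Real.log (v i p.2)‖ ≤ ‖logEmbedding v p‖ :=
  norm_prod_le_iff.mp (norm_le_pi_norm (logEmbedding v p) i)

lemma log_localHeight_div_padePower_le (v : ι → AbsoluteValue K ℝ) {a N : ℕ} (ha : N ≤ a)
    (ha' : a ≤ N + 1) (p q : Kˣ × Kˣ) (i : ι) :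
    Real.log (localHeight (v i) (q / padePower a N N p)) ≤
      ‖logEmbedding v q - (2 * N + 1 : ℝ) • logEmbedding v p‖ + ‖logEmbedding v p‖ := by
  obtain ⟨hfst, hsnd⟩ := norm_prod_le_iff.mp
    (norm_le_pi_norm (logEmbedding v q - (2 * N + 1 : ℝ) • logEmbedding v p) i)
  have hextra : -((a - N : ℝ) * Real.log (v i p.1)) ≤ ‖logEmbedding v p‖ := by
    have hle : (N : ℝ) ≤ a := by exact_mod_cast ha
    have hle' : (a : ℝ) ≤ N + 1 := by exact_mod_cast ha'
    refine (neg_le_abs _).trans ?_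
    rw [abs_mul, abs_of_nonneg (sub_nonneg.mpr hle)]
    exact (mul_le_of_le_one_left (abs_nonneg _) (by linarith)).trans
      (norm_log_abv_le_norm_logEmbedding v p i).1
  have hlog (x y : Kˣ) (n : ℕ) :
      Real.log (v i (y / x ^ n : Kˣ)) = Real.log (v i y) - n * Real.log (v i x) := by
    rw [Units.val_div_eq_div_val, Units.val_pow_eq_pow_val, map_div₀, map_pow,
      Real.log_div ((v i).ne_zero y.ne_zero) (pow_ne_zero n ((v i).ne_zero x.ne_zero)),
      Real.log_pow]
  refine log_localHeight_le (v i) (by positivity) ?_ ?_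
  · refine (hlog p.1 q.1 (a + N + 1)).trans_le ?_
    have hle := (Real.le_norm_self _).trans hfst
    simp only [logEmbedding, Pi.sub_apply, Pi.smul_apply, Prod.fst_sub, Prod.smul_fst,
      smul_eq_mul] at hle
    push_cast
    linarith
  · refine (hlog p.2 q.2 (N + N + 1)).trans_le ?_
    have hle := (Real.le_norm_self _).trans hsnd
    simp only [logEmbedding, Pi.sub_apply, Pi.smul_apply, Prod.snd_sub, Prod.smul_snd,
      smul_eq_mul] at hle
    push_cast
    linarith [norm_nonneg (logEmbedding v p)]

lemma log_abv_padeDet_add_le [CharZero K] (v : ι → AbsoluteValue K ℝ) {a N : ℕ} (ha : N ≤ a)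
    (ha' : a ≤ N + 1) {p q : Kˣ × Kˣ} (hp : (p.1 + p.2 : K) = 1) (hq : (q.1 + q.2 : K) = 1)
    (hne : padeDet a N N p q ≠ 0) (i : ι) :
    Real.log (v i (padeDet a N N p q)) + N * Real.log (localHeight (v i) p) ≤
      9 * (N + 1) + ‖logEmbedding v q - (2 * N + 1 : ℝ) • logEmbedding v p‖ +
        ‖logEmbedding v p‖ := by
  have hT := one_pos.trans_le (one_le_localHeight (v i) p)
  have hZ := one_pos.trans_le (one_le_localHeight (v i) (q / padePower a N N p))
  have hdet := (v i).pos hne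
  have hmul : v i (padeDet a N N p q) * localHeight (v i) p ^ N ≤
      2 ^ (9 * (N + 1)) * localHeight (v i) (q / padePower a N N p) := by
    refine le_of_mul_le_mul_right ?_ (pow_pos hT (N + 1))
    calc v i (padeDet a N N p q) * localHeight (v i) p ^ N * localHeight (v i) p ^ (N + 1)
        = v i (padeDet a N N p q) * localHeight (v i) p ^ (2 * N + 1) := by ring
      _ ≤ 2 * (localHeight (v i) (q / padePower a N N p) *
            (2 ^ (3 * (a + N + N) + 1) * localHeight (v i) p ^ (N + 1))) :=
          abv_padeDet_mul_localHeight_pow_le (v i) hp hq (by lia) (by lia) ha' (by lia) (by lia)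
      _ = 2 ^ (3 * (a + N + N) + 2) * localHeight (v i) (q / padePower a N N p) *
            localHeight (v i) p ^ (N + 1) := by ring
      _ ≤ 2 ^ (9 * (N + 1)) * localHeight (v i) (q / padePower a N N p) *
            localHeight (v i) p ^ (N + 1) := by
          gcongr
          · exact one_le_two
          · lia
  have hlog := Real.log_le_log (by positivity) hmul
  rw [Real.log_mul hdet.ne' (by positivity), Real.log_pow, Real.log_mul (by positivity) hZ.ne',
    Real.log_pow] at hlog
  have htwo : ((9 * (N + 1) : ℕ) : ℝ) * Real.log 2 ≤ 9 * (N + 1) := by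
    push_cast
    exact mul_le_of_le_one_right (by positivity) (by linarith [Real.log_two_lt_d9])
  linarith [log_localHeight_div_padePower_le v ha ha' p q i]

variable {v : ι → AbsoluteValue K ℝ} {R : Subring K}

lemma sum_log_nonneg (hR : ∀ a ∈ R, a ≠ 0 → 1 ≤ ∏ i, v i a) {a : K} (ha : a ∈ R) (ha₀ : a ≠ 0) :
    0 ≤ ∑ i, Real.log (v i a) := by
  rw [← Real.log_prod fun i _ => (v i).ne_zero ha₀]
  exact Real.log_nonneg (hR a ha ha₀)

lemma sum_log_eq_zero (hR : ∀ a ∈ R, a ≠ 0 → 1 ≤ ∏ i, v i a) {x : Kˣ}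
    (hx : x ∈ R.toSubmonoid.units) : ∑ i, Real.log (v i x) = 0 := by
  obtain ⟨hmem, hinv⟩ := mem_units_iff.mp hx
  have hle := sum_log_nonneg hR hinv x⁻¹.ne_zero
  simp only [Units.val_inv_eq_inv_val, map_inv₀, Real.log_inv, Finset.sum_neg_distrib] at hle
  exact le_antisymm (neg_nonneg.mp hle) (sum_log_nonneg hR hmem x.ne_zero)

lemma abs_le_sum_of_sum_eq_zero {f g : ι → ℝ} (hf : ∑ i, f i = 0) (hg : 0 ≤ g) (hfg : f ≤ g)
    (i : ι) : |f i| ≤ ∑ j, g j := by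
  classical
  refine abs_le'.mpr
    ⟨(hfg i).trans (Finset.single_le_sum (fun j _ => hg j) (Finset.mem_univ i)), ?_⟩
  calc -f i = ∑ j ∈ Finset.univ.erase i, f j := by
        linarith [Finset.add_sum_erase Finset.univ f (Finset.mem_univ i)]
    _ ≤ ∑ j ∈ Finset.univ.erase i, g j := Finset.sum_le_sum fun j _ => hfg j
    _ ≤ ∑ j, g j :=
        Finset.sum_le_sum_of_subset_of_nonneg (Finset.erase_subset _ _) fun j _ _ => hg j

lemma norm_logEmbedding_le (hR : ∀ a ∈ R, a ≠ 0 → 1 ≤ ∏ i, v i a) {p : Kˣ × Kˣ}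
    (hp₁ : p.1 ∈ R.toSubmonoid.units) (hp₂ : p.2 ∈ R.toSubmonoid.units) :
    ‖logEmbedding v p‖ ≤ ∑ i, Real.log (localHeight (v i) p) := by
  have hnonneg (i : ι) : 0 ≤ Real.log (localHeight (v i) p) :=
    Real.log_nonneg (one_le_localHeight (v i) p)
  refine (pi_norm_le_iff_of_nonneg (Finset.sum_nonneg fun i _ => hnonneg i)).mpr fun i =>
    norm_prod_le_iff.mpr ⟨?_, ?_⟩
  · exact abs_le_sum_of_sum_eq_zero (sum_log_eq_zero hR hp₁) hnonneg
      (fun j => Real.log_le_log ((v j).pos p.1.ne_zero) (abv_fst_le_localHeight (v j) p)) i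
  · exact abs_le_sum_of_sum_eq_zero (sum_log_eq_zero hR hp₂) hnonneg
      (fun j => Real.log_le_log ((v j).pos p.2.ne_zero) (abv_snd_le_localHeight (v j) p)) i

lemma gap_logEmbedding [CharZero K] (hR : ∀ a ∈ R, a ≠ 0 → 1 ≤ ∏ i, v i a) {p q : Kˣ × Kˣ}
    (hp : p ∈ unitSolutions R) (hq : q ∈ unitSolutions R) (N : ℕ) :
    N * ‖logEmbedding v p‖ ≤ 9 * Fintype.card ι *
      (N + 1 + ‖logEmbedding v q - (2 * N + 1 : ℝ) • logEmbedding v p‖ + ‖logEmbedding v p‖) := by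
  obtain ⟨hp₁, hp₂, hp⟩ := hp
  obtain ⟨hq₁, hq₂, hq⟩ := hq
  obtain ⟨a, ha, ha', hne⟩ : ∃ a, N ≤ a ∧ a ≤ N + 1 ∧ padeDet a N N p q ≠ 0 :=
    (padeDet_ne_zero_or N N N hp hq).elim (fun h => ⟨N, le_rfl, N.le_succ, h⟩)
      fun h => ⟨N + 1, N.le_succ, le_rfl, h⟩
  have hproduct := sum_log_nonneg hR (padeDet_mem a N N hp₁ hp₂ hq₁ hq₂) hne
  have hlocal := Finset.sum_le_sum fun i (_ : i ∈ Finset.univ) =>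
    log_abv_padeDet_add_le v ha ha' hp hq hne i
  rw [Finset.sum_add_distrib, ← Finset.mul_sum, Finset.sum_const, nsmul_eq_mul,
    Finset.card_univ] at hlocal
  have hnorm := mul_le_mul_of_nonneg_left (norm_logEmbedding_le hR hp₁ hp₂)
    (Nat.cast_nonneg (α := ℝ) N)
  calc N * ‖logEmbedding v p‖
      ≤ Fintype.card ι * (9 * (N + 1) +
          ‖logEmbedding v q - (2 * N + 1 : ℝ) • logEmbedding v p‖ + ‖logEmbedding v p‖) := by
        linarith
    _ ≤ Fintype.card ι * (9 * (N + 1 +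
          ‖logEmbedding v q - (2 * N + 1 : ℝ) • logEmbedding v p‖ + ‖logEmbedding v p‖)) := by
        gcongr
        linarith [norm_nonneg (logEmbedding v q - (2 * N + 1 : ℝ) • logEmbedding v p),
          norm_nonneg (logEmbedding v p)]
    _ = _ := by ring

theorem finite_unitSolutions [CharZero K] (hR : ∀ a ∈ R, a ≠ 0 → 1 ≤ ∏ i, v i a)
    (hfin : ∀ B : ℝ, {a ∈ R | ∀ i, v i a ≤ B}.Finite) : (unitSolutions R).Finite := by
  obtain ⟨B, hB⟩ : ∃ B, ∀ x ∈ logEmbedding v '' unitSolutions R, ‖x‖ ≤ B :=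
    (isBounded_of_gap (by
      rintro - ⟨p, hp, rfl⟩ - ⟨q, hq, rfl⟩ N
      exact gap_logEmbedding hR hp hq N)).exists_norm_le
  have hle {x : Kˣ} {i : ι} (hx : ‖Real.log (v i x)‖ ≤ B) : v i x ≤ Real.exp B :=
    (Real.log_le_iff_le_exp ((v i).pos x.ne_zero)).mp ((Real.le_norm_self _).trans hx)
  have hF := (hfin (Real.exp B)).preimage Units.val_injective.injOn
  refine (hF.prod hF).subset fun p hp => ?_
  have hnorm (i : ι) := norm_log_abv_le_norm_logEmbedding v p i
  have hpB := hB _ (Set.mem_image_of_mem _ hp)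
  exact ⟨⟨(mem_units_iff.mp hp.1).1, fun i => hle ((hnorm i).1.trans hpB)⟩,
    ⟨(mem_units_iff.mp hp.2.1).1, fun i => hle ((hnorm i).2.trans hpB)⟩⟩

end UnitEquation

section NumberField

open NumberField

lemma finprod_le_prod {α : Type*} {f : α → ℝ} (hf : f.HasFiniteMulSupport) (hf₀ : ∀ a, 0 ≤ f a)
    {T : Finset α} (hT : ∀ a ∉ T, f a ≤ 1) : ∏ᶠ a, f a ≤ ∏ a ∈ T, f a := by
  rw [← finprod_mem_coe_finset, finprod_mem_def]
  refine finprod_le_finprod hf hf₀ (T.finite_toSet.subset Set.mulSupport_mulIndicator_subset)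
    fun a => ?_
  by_cases ha : a ∈ T
  · exact (Set.mulIndicator_of_mem (Finset.mem_coe.mpr ha) f).ge
  · exact (hT a ha).trans (Set.mulIndicator_of_notMem (mt Finset.mem_coe.mp ha) f).ge

variable {K : Type*} [Field K] [NumberField K]

/-- The archimedean absolute values of `K`, repeated according to their multiplicity so that the
product formula has no exponents, and the finite places in `T`. -/
def placesAbv (T : Finset (FinitePlace K)) :
    (Σ w : InfinitePlace K, Fin w.mult) ⊕ T → AbsoluteValue K ℝ :=
  Sum.elim (fun p => p.1.1) (fun w => w.1.1)

lemma prod_placesAbv (T : Finset (FinitePlace K)) (f : AbsoluteValue K ℝ → ℝ) :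
    ∏ i, f (placesAbv T i) = (∏ w : InfinitePlace K, f w.1 ^ w.mult) * ∏ w ∈ T, f w.1 := by
  simp only [placesAbv, Fintype.prod_sum_type, Fintype.prod_sigma, Sum.elim_inl, Sum.elim_inr,
    Finset.prod_const, Finset.card_univ, Fintype.card_fin]
  rw [Finset.prod_coe_sort T fun w => f w.1]

lemma one_le_prod_placesAbv {T : Finset (FinitePlace K)} {a : K} (ha₀ : a ≠ 0)
    (ha : ∀ w ∉ T, w a ≤ 1) : 1 ≤ ∏ i, placesAbv T i a := by
  rw [prod_placesAbv T fun w => w a, ← prod_abs_eq_one ha₀]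
  exact mul_le_mul_of_nonneg_left
    (finprod_le_prod (FinitePlace.hasFiniteMulSupport ha₀) (fun w => apply_nonneg w a) ha)
    (Finset.prod_nonneg fun w _ => pow_nonneg (apply_nonneg w a) _)

lemma finite_placesAbv_le (T : Finset (FinitePlace K)) (B : ℝ) :
    {a : K | (∀ w ∉ T, w a ≤ 1) ∧ ∀ i, placesAbv T i a ≤ B}.Finite := by
  refine (finite_setOfPred_mulHeight₁_le K
    (max B 1 ^ Fintype.card ((Σ w : InfinitePlace K, Fin w.mult) ⊕ T))).subset ?_
  rintro a ⟨ha, haB⟩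
  have hsupport : (Function.mulSupport fun w : FinitePlace K => max (w a) 1) ⊆ T := fun w hw => by
    contrapose! hw
    exact Function.notMem_mulSupport.mpr (max_eq_right (ha w hw))
  calc Height.mulHeight₁ a
      = (∏ w : InfinitePlace K, max (w a) 1 ^ w.mult) * ∏ w ∈ T, max (w a) 1 := by
        rw [mulHeight₁_eq, finprod_eq_prod_of_mulSupport_subset _ hsupport]
    _ = ∏ i, max (placesAbv T i a) 1 := (prod_placesAbv T fun w => max (w a) 1).symm
    _ ≤ ∏ _ : (Σ w : InfinitePlace K, Fin w.mult) ⊕ T, max B 1 :=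
        Finset.prod_le_prod (fun i _ => by positivity) fun i _ => max_le_max (haB i) le_rfl
    _ = _ := Finset.prod_const _

lemma apply_le_one_of_mem_sIntegers {S : Finset (HeightOneSpectrum (𝓞 K))} {a : K}
    (ha : a ∈ sIntegers K S) {w : FinitePlace K} (hw : w.maximalIdeal ∉ S) : w a ≤ 1 := by
  rw [← FinitePlace.norm_embedding_eq, FinitePlace.norm_embedding']
  exact_mod_cast (WithZeroMulInt.toNNReal_le_one_iff
    (NumberField.HeightOneSpectrum.one_lt_absNorm_nnreal _)).mpr (ha w.maximalIdeal hw)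

theorem finite_unitSolutions_sIntegers (S : Finset (HeightOneSpectrum (𝓞 K))) :
    (unitSolutions (sIntegers K S).toSubring).Finite := by
  classical
  have hle {a : K} (ha : a ∈ sIntegers K S) (w : FinitePlace K)
      (hw : w ∉ S.image FinitePlace.mk) : w a ≤ 1 :=
    apply_le_one_of_mem_sIntegers ha fun h =>
      hw (Finset.mem_image.mpr ⟨_, h, FinitePlace.mk_maximalIdeal w⟩)
  exact finite_unitSolutions (v := placesAbv (S.image FinitePlace.mk))
    (fun a ha ha₀ => one_le_prod_placesAbv ha₀ (hle ha))
    fun B => (finite_placesAbv_le _ B).subset fun a ha => ⟨hle ha.1, ha.2⟩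

end NumberField

section QuadraticForm

variable {K : Type*} [Field K]

lemma exists_mem_unitSolutions_of_sq_eq [NeZero (2 : K)] {R : Subring K} {t z : K} {s : Kˣ}
    (ht : t ^ 2 ≠ 4) (htR : t ∈ R) (h₂ : (2 : K)⁻¹ ∈ R) (hsub : (2 - t)⁻¹ ∈ R)
    (hadd : (2 + t)⁻¹ ∈ R) (hz : z ∈ R) (hs : s ∈ R.toSubmonoid.units)
    (h : z ^ 2 = s ^ 2 + t * s + 1) :
    ∃ p ∈ unitSolutions R, z = ((2 - t) * p.2 + (2 + t) * (p.2⁻¹ : Kˣ)) / 4 := by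
  obtain ⟨hsR, hsR'⟩ := mem_units_iff.mp hs
  have two_ne : (2 : K) ≠ 0 := two_ne_zero
  have four_ne : (4 : K) ≠ 0 := by
    rw [show (4 : K) = 2 * 2 by norm_num]
    exact mul_ne_zero two_ne two_ne
  have sub_ne : 2 - t ≠ 0 := fun h => ht (by linear_combination (-2 - t) * h)
  have add_ne : 2 + t ≠ 0 := fun h => ht (by linear_combination (t - 2) * h)
  have two_mem : (2 : K) ∈ R := ofNat_mem R 2
  have hx : 2 * (s + 1 - z) * (2 - t)⁻¹ * ((s + 1 + z) * (2⁻¹ * (s⁻¹ : Kˣ))) = 1 := by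
    rw [Units.val_inv_eq_inv_val]
    field_simp
    linear_combination -h
  have hy : (2 * z - 2 * s - t) * (2 - t)⁻¹ * ((2 * z + 2 * s + t) * (2 + t)⁻¹) = 1 := by
    field_simp
    linear_combination 4 * h
  refine ⟨(.mkOfMulEqOne _ _ hx, .mkOfMulEqOne _ _ hy), ⟨?_, ?_, ?_⟩, ?_⟩
  · exact mem_units_iff.mpr
      ⟨mul_mem (mul_mem two_mem (sub_mem (add_mem hsR R.one_mem) hz)) hsub,
        mul_mem (add_mem (add_mem hsR R.one_mem) hz) (mul_mem h₂ hsR')⟩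
  · exact mem_units_iff.mpr
      ⟨mul_mem (sub_mem (sub_mem (mul_mem two_mem hz) (mul_mem two_mem hsR)) htR) hsub,
        mul_mem (add_mem (add_mem (mul_mem two_mem hz) (mul_mem two_mem hsR)) htR) hadd⟩
  · rw [Units.val_mkOfMulEqOne, Units.val_mkOfMulEqOne]
    field_simp
    ring
  · rw [Units.inv_eq_of_mul_eq_one_right (u := .mkOfMulEqOne _ _ hy) hy, Units.val_mkOfMulEqOne]
    field_simp
    ring

lemma mul_inv_mem_of_sq_eq_sq {A y : K} {c : Kˣ}
    (h : y ^ 2 = A ^ 2 * c ^ 2) : y * (c⁻¹ : Kˣ) ∈ ({A, -A} : Set K) := by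
  rw [Units.val_inv_eq_inv_val, ← div_eq_mul_inv]
  refine sq_eq_sq_iff_eq_or_eq_neg.mp ?_
  rw [div_pow, h, mul_div_cancel_right₀ _ (pow_ne_zero 2 c.ne_zero)]

variable [NumberField K]

lemma exists_superset_forall_mem_sIntegers
    (S : Finset (HeightOneSpectrum (NumberField.RingOfIntegers K))) (F : Finset K) :
    ∃ S', S ⊆ S' ∧ ∀ a ∈ F, a ∈ sIntegers K S' := by
  classical
  refine ⟨S ∪ F.biUnion fun a =>
    (HeightOneSpectrum.Support.finite (NumberField.RingOfIntegers K) a).toFinset,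
    Finset.subset_union_left, fun a ha w hw => ?_⟩
  by_contra! hlt
  refine hw (Finset.mem_coe.mpr (Finset.mem_union_right _ (Finset.mem_biUnion.mpr ⟨a, ha, ?_⟩)))
  exact (Set.Finite.mem_toFinset _).mpr hlt

lemma mem_units_sIntegers {S S' : Finset (HeightOneSpectrum (NumberField.RingOfIntegers K))}
    (hS : S ⊆ S') {u : Kˣ}
    (hu : u ∈ (S : Set (HeightOneSpectrum (NumberField.RingOfIntegers K))).unit K) :
    u ∈ (sIntegers K S').toSubring.toSubmonoid.units :=
  mem_units_iff.mpr ⟨fun w hw => (hu w fun h => hw (hS h)).le,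
    fun w hw => (inv_mem hu w fun h => hw (hS h)).le⟩

lemma finite_setOf_mul_inv_of_sq_eq
    (S : Finset (HeightOneSpectrum (NumberField.RingOfIntegers K))) {D E t : K} (hD : D ≠ 0)
    (hE : E ≠ 0) (ht : t ^ 2 ≠ 4) :
    {x : K | ∃ y ∈ sIntegers K S, ∃ u v : Kˣ,
      u ∈ (S : Set (HeightOneSpectrum (NumberField.RingOfIntegers K))).unit K ∧
      v ∈ (S : Set (HeightOneSpectrum (NumberField.RingOfIntegers K))).unit K ∧
      y ^ 2 = D ^ 2 * u ^ 2 + t * D * u * E * v + E ^ 2 * v ^ 2 ∧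
      x = y * (v⁻¹ : Kˣ)}.Finite := by
  classical
  lift D to Kˣ using hD.isUnit
  lift E to Kˣ using hE.isUnit
  obtain ⟨S', hSS', hS'⟩ := exists_superset_forall_mem_sIntegers S
    {(D : K), ((D⁻¹ : Kˣ) : K), (E : K), ((E⁻¹ : Kˣ) : K), t, 2⁻¹, (2 - t)⁻¹, (2 + t)⁻¹}
  simp only [Finset.mem_insert, Finset.mem_singleton, forall_eq_or_imp, forall_eq] at hS'
  obtain ⟨hD, hD', hE, hE', htR, h₂, hsub, hadd⟩ := hS'
  refine ((finite_unitSolutions_sIntegers S').image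
    fun p => E * (((2 - t) * p.2 + (2 + t) * (p.2⁻¹ : Kˣ)) / 4)).subset ?_
  rintro _ ⟨y, hy, u, v, hu, hv, h, rfl⟩
  have hDE : D / E ∈ (sIntegers K S').toSubring.toSubmonoid.units :=
    div_mem (mem_units_iff.mpr ⟨hD, hD'⟩)
      (mem_units_iff.mpr ⟨hE, hE'⟩)
  have hv' := mem_units_sIntegers hSS' hv
  have hz : y * ((E⁻¹ : Kˣ) * (v⁻¹ : Kˣ)) ∈ sIntegers K S' :=
    mul_mem (fun w hw => hy w fun h => hw (hSS' h))
      (mul_mem hE' (mem_units_iff.mp hv').2)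
  obtain ⟨p, hp, hzp⟩ := exists_mem_unitSolutions_of_sq_eq (R := (sIntegers K S').toSubring)
    (s := D / E * (u / v)) ht htR h₂ hsub hadd hz
    (mul_mem hDE (div_mem (mem_units_sIntegers hSS' hu) hv')) (by
      simp only [Units.val_mul, Units.val_div_eq_div_val, Units.val_inv_eq_inv_val]
      field_simp
      linear_combination h)
  refine ⟨p, hp, ?_⟩
  simp only [← hzp, mul_left_comm y, Units.mul_inv_cancel_left]

lemma span_singleton_eq_of_eq_mul_unit
    {S : Finset (HeightOneSpectrum (NumberField.RingOfIntegers K))} {y z : sIntegers K S} {c : Kˣ}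
    (hc : c ∈ (S : Set (HeightOneSpectrum (NumberField.RingOfIntegers K))).unit K)
    (h : (z : K) = y * c) : Ideal.span {z} = Ideal.span {y} := by
  have hz : z = y * ((Set.unitEquivUnitsInteger _ K ⟨c, hc⟩ : (sIntegers K S)ˣ) : sIntegers K S) :=
    Subtype.ext h
  rw [hz, Ideal.span_singleton_mul_right_unit (Units.isUnit _)]

lemma finite_span_singleton {S : Finset (HeightOneSpectrum (NumberField.RingOfIntegers K))}
    {F : Set K} (hF : F.Finite) :
    {I : Ideal (sIntegers K S) | ∃ y : sIntegers K S, I = Ideal.span {y} ∧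
      ∃ c ∈ (S : Set (HeightOneSpectrum (NumberField.RingOfIntegers K))).unit K,
        (y : K) * c ∈ F}.Finite := by
  refine ((hF.preimage Subtype.val_injective.injOn).image
    fun z : sIntegers K S => Ideal.span {z}).subset ?_
  rintro I ⟨y, rfl, c, hc, hcF⟩
  exact ⟨⟨y * c, mul_mem y.2 fun w hw => (hc w hw).le⟩, hcF,
    span_singleton_eq_of_eq_mul_unit hc rfl⟩

end QuadraticForm

end UnitEquation

open UnitEquation in
theorem finite_principal_ideals_of_quadratic_unit_eq_general {K : Type*} [Field K] [NumberField K]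
    (S : Finset (HeightOneSpectrum (NumberField.RingOfIntegers K)))
    (D E : K) {t : K} (ht : t ^ 2 ≠ 4) :
    {I : Ideal (sIntegers K S) | ∃ y : sIntegers K S, I = Ideal.span {y} ∧
        ∃ u v : Kˣ,
          u ∈ (S : Set (HeightOneSpectrum (NumberField.RingOfIntegers K))).unit K ∧
          v ∈ (S : Set (HeightOneSpectrum (NumberField.RingOfIntegers K))).unit K ∧
          (y : K) ^ 2 = D ^ 2 * u ^ 2 + t * D * u * E * v + E ^ 2 * v ^ 2}.Finite := by
  rcases eq_or_ne D 0 with rfl | hD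
  · refine (finite_span_singleton (Set.toFinite {E, -E})).subset ?_
    rintro I ⟨y, rfl, u, v, -, hv, h⟩
    exact ⟨y, rfl, v⁻¹, inv_mem hv, mul_inv_mem_of_sq_eq_sq (by linear_combination h)⟩
  rcases eq_or_ne E 0 with rfl | hE
  · refine (finite_span_singleton (Set.toFinite {D, -D})).subset ?_
    rintro I ⟨y, rfl, u, v, hu, -, h⟩
    exact ⟨y, rfl, u⁻¹, inv_mem hu, mul_inv_mem_of_sq_eq_sq (by linear_combination h)⟩
  · refine (finite_span_singleton (finite_setOf_mul_inv_of_sq_eq S hD hE ht)).subset ?_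
    rintro I ⟨y, rfl, u, v, hu, hv, h⟩
    exact ⟨y, rfl, v⁻¹, inv_mem hv, y, y.2, u, v, hu, hv, h, rfl⟩

/-- for fixed `D, E ∈ K`, the set of principal ideals `y·R_S` with `y` an
`S`-integer such that `y² = D²u² + DuEv + E²v²` for some `S`-units `u, v` is finite. -/
theorem finite_principal_ideals_of_quadratic_unit_eq {K : Type*} [Field K] [NumberField K]
    (S : Finset (HeightOneSpectrum (NumberField.RingOfIntegers K)))
    (D E : K) :
    {I : Ideal (sIntegers K S) | ∃ y : sIntegers K S, I = Ideal.span {y} ∧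
        ∃ u v : Kˣ,
          u ∈ (S : Set (HeightOneSpectrum (NumberField.RingOfIntegers K))).unit K ∧
          v ∈ (S : Set (HeightOneSpectrum (NumberField.RingOfIntegers K))).unit K ∧
          (y : K) ^ 2 = D ^ 2 * u ^ 2 + D * u * E * v + E ^ 2 * v ^ 2}.Finite := by
  simpa only [one_mul] using
    finite_principal_ideals_of_quadratic_unit_eq_general S D E (t := 1) (by norm_num)
end
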